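/- Let R be a d-dimensional Noetherian local domain containing a field and let x_1,…,x_d be a system of parameters of R. Then 𝔥^d_x(M) = rank(M) for every finitely generated R-module M, where rank(M) is the dimension of Frac(R) ⊗_R M over the fraction field Frac(R). In particular, 𝔥^d_x is additive: for every short exact sequence 0 → L → M → N → 0 of finitely generated R-modules, 𝔥^d_x(M) = 𝔥^d_x(L) + 𝔥^d_x(N). -/

import Mathlib

open scoped BigOperators ENNReal

universe u v

/-- A filtration of `M` of length `h` whose factors are cyclic modules killed by `J`. -/
def HasQLFiltration (S : Type u) [CommRing S] (J : Ideal S)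
    (M : Type v) [AddCommGroup M] [Module S M] (h : ℕ) : Prop :=
  ∃ c : Fin (h + 1) → Submodule S M,
    Monotone c ∧ c 0 = ⊥ ∧ c (Fin.last h) = ⊤ ∧
    ∀ i : Fin h,
      (∃ m : M, c i.succ = c i.castSucc ⊔ Submodule.span S {m}) ∧
      ∀ a ∈ J, ∀ x ∈ c i.succ, a • x ∈ c i.castSucc

/-- The `J`-quasilength of `M`. -/
noncomputable def quasilength (S : Type u) [CommRing S] (J : Ideal S)
    (M : Type v) [AddCommGroup M] [Module S M] : ℕ∞ :=
  sInf {n : ℕ∞ | ∃ h : ℕ, n = (h : ℕ∞) ∧ HasQLFiltration S J M h}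

/-- The ideal `(x₁^{t₁}, …, x_d^{t_d})`. -/
def powerIdeal {R : Type u} [CommRing R] {d : ℕ} (x : Fin d → R) (t : Fin d → ℕ) : Ideal R :=
  Ideal.span (Set.range fun i => x i ^ t i)

/-- The content `𝔥^d_x(M)` of `M` with respect to `x₁, …, x_d`. -/
noncomputable def content {R : Type u} [CommRing R] {d : ℕ} (x : Fin d → R)
    (M : Type v) [AddCommGroup M] [Module R M] : ℝ≥0∞ :=
  ⨆ s : ℕ, ⨅ t : {t : Fin d → ℕ // ∀ i, s ≤ t i ∧ 0 < t i},
    (quasilength R (Ideal.span (Set.range x))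
        (M ⧸ (powerIdeal x (t : Fin d → ℕ) • (⊤ : Submodule R M))) : ℝ≥0∞) /
      ∏ i, ((t : Fin d → ℕ) i : ℝ≥0∞)


/-- chains of submodules with cyclic steps killed by `J` -/
inductive QC {S : Type*} [CommRing S] {M : Type*} [AddCommGroup M] [Module S M] (J : Ideal S) (N : Submodule S M) :
    Submodule S M → ℕ → Prop
  | refl : QC J N N 0
  | step (P : Submodule S M) (h : ℕ) (m : M) : QC J N P h → (∀ a ∈ J, a • m ∈ P) →
      QC J N (P ⊔ Submodule.span S {m}) (h + 1)

namespace QC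

variable {S : Type*} [CommRing S] {M : Type*} [AddCommGroup M] [Module S M]
  {M' : Type*} [AddCommGroup M'] [Module S M'] {J : Ideal S} {N P T : Submodule S M} {h : ℕ}

theorem le (H : QC J N P h) : N ≤ P := by
  induction H with
  | refl => exact le_rfl
  | step P h m _ _ ih => exact ih.trans le_sup_left

theorem trans {Q : Submodule S M} {k : ℕ} (H : QC J N P h) (H' : QC J P Q k) : QC J N Q (h + k) := by
  induction H' with
  | refl => exact H
  | step Q k m _ hm ih => exact QC.step _ _ m ih hm

theorem sup (H : QC J N P h) (T : Submodule S M) : QC J (N ⊔ T) (P ⊔ T) h := by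
  induction H with
  | refl => exact QC.refl
  | step P h m _ hm ih =>
    rw [sup_right_comm]
    exact QC.step _ _ m ih fun a ha => Submodule.mem_sup_left (hm a ha)

/-- enlarging the bottom to something -/
theorem top_of_le (H : QC J N ⊤ h) (hT : N ≤ T) : QC J T ⊤ h := by
  have := H.sup T
  rwa [sup_eq_right.mpr hT, top_sup_eq] at this

theorem map (H : QC J N P h) (f : M →ₗ[S] M') : QC J (N.map f) (P.map f) h := by
  induction H with
  | refl => exact QC.refl
  | step P h m _ hm ih =>
    rw [Submodule.map_sup, Submodule.map_span, Set.image_singleton]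
    refine QC.step _ _ _ ih fun a ha => ?_
    rw [← map_smul]
    exact Submodule.mem_map_of_mem (hm a ha)

theorem comap {N P : Submodule S M'} (H : QC J N P h) (f : M →ₗ[S] M') (hf : Function.Surjective f) :
    QC J (N.comap f) (P.comap f) h := by
  induction H with
  | refl => exact QC.refl
  | step P h m _ hm ih =>
    obtain ⟨m, rfl⟩ := hf m
    have : (P ⊔ Submodule.span S {f m}).comap f = P.comap f ⊔ Submodule.span S {m} := by
      apply le_antisymm
      · intro z hz
        rw [Submodule.mem_comap, Submodule.mem_sup] at hz
        obtain ⟨y, hy, w, hw, hyw⟩ := hz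
        rw [Submodule.mem_span_singleton] at hw
        obtain ⟨a, rfl⟩ := hw
        rw [Submodule.mem_sup]
        refine ⟨z - a • m, ?_, a • m, Submodule.smul_mem _ _ (Submodule.mem_span_singleton_self m), by abel⟩
        rw [Submodule.mem_comap, map_sub, map_smul, ← hyw, add_sub_cancel_right]
        exact hy
      · rw [sup_le_iff, Submodule.span_singleton_le_iff_mem]
        exact ⟨Submodule.comap_mono le_sup_left,
          Submodule.mem_sup_right (Submodule.mem_span_singleton_self _)⟩
    rw [this]
    refine QC.step _ _ _ ih fun a ha => ?_
    rw [Submodule.mem_comap, map_smul]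
    exact hm a ha

theorem mono_ideal {J' : Ideal S} (H : QC J N P h) (hJ : J' ≤ J) : QC J' N P h := by
  induction H with
  | refl => exact QC.refl
  | step P h m _ hm ih => exact QC.step _ _ _ ih fun a ha => hm a (hJ ha)

theorem succ (H : QC J N P h) : QC J N P (h + 1) := by
  have := QC.step P h 0 H (by simp)
  simpa using this

theorem of_le {k : ℕ} (H : QC J N P h) (hk : h ≤ k) : QC J N P k := by
  induction k, hk using Nat.le_induction with
  | base => exact H
  | succ k _ ih => exact ih.succ

/-- refinement of a step -/
theorem refine_step {I : Ideal S} {K : Ideal S} {l : ℕ} (H : QC I J K l) (m : M) (hm : ∀ a ∈ J, a • m ∈ P) :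
    QC I P (P ⊔ Submodule.map (LinearMap.toSpanSingleton S M m) K) l := by
  have h1 := (H.map (LinearMap.toSpanSingleton S M m)).sup P
  have : Submodule.map (LinearMap.toSpanSingleton S M m) J ⊔ P = P := by
    rw [sup_eq_right]
    rintro _ ⟨a, ha, rfl⟩
    exact hm a ha
  rw [this, sup_comm] at h1
  exact h1

theorem refine {I : Ideal S} {l : ℕ} (H : QC J N P h) (hI : QC I J ⊤ l) : QC I N P (h * l) := by
  induction H with
  | refl => rw [zero_mul]; exact QC.refl
  | step P h m _ hm ih =>
    have := ih.trans (hI.refine_step m hm)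
    rw [add_mul, one_mul]
    convert this using 2
    rw [Submodule.map_top, ← LinearMap.span_singleton_eq_range]

theorem exists_of_fg (hN : N ≤ P) (hJ : ∀ a ∈ J, ∀ x ∈ P, a • x ∈ N) (hP : P.FG) : ∃ h, QC J N P h := by
  obtain ⟨s, rfl⟩ := hP
  suffices ∀ s' : Finset M, (s' ⊆ s) → ∃ h, QC J N (N ⊔ Submodule.span S (s' : Set M)) h by
    obtain ⟨h, H⟩ := this s subset_rfl
    rw [sup_eq_right.mpr hN] at H
    exact ⟨h, H⟩
  classical
  intro s'
  induction s' using Finset.induction_on with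
  | empty => exact fun _ => ⟨0, by simpa using QC.refl⟩
  | insert a s' _ ih =>
    intro hs
    rw [Finset.insert_subset_iff] at hs
    obtain ⟨h, H⟩ := ih hs.2
    refine ⟨h + 1, ?_⟩
    rw [Finset.coe_insert, Submodule.span_insert, sup_comm (Submodule.span S {a}), ← sup_assoc]
    exact QC.step _ _ _ H fun b hb => Submodule.mem_sup_left (hJ b hb a (Submodule.subset_span hs.1))

/-- finite chains for powers -/
theorem exists_pow [IsNoetherianRing S] (J : Ideal S) (n : ℕ) : ∃ h, QC J (J ^ n) (⊤ : Ideal S) h := by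
  induction n with
  | zero => exact ⟨0, by rw [pow_zero, Ideal.one_eq_top]; exact QC.refl⟩
  | succ n ih =>
    obtain ⟨h, H⟩ := ih
    obtain ⟨k, H'⟩ := exists_of_fg (J := J) (N := J ^ (n+1)) (P := J ^ n) (Ideal.pow_le_pow_right n.le_succ)
      (fun a ha x hx => by rw [pow_succ', smul_eq_mul]; exact Ideal.mul_mem_mul ha hx)
      (IsNoetherian.noetherian _)
    exact ⟨k + h, H'.trans H⟩

theorem toFil (H : QC J N P h) : ∃ c : ℕ → Submodule S M, Monotone c ∧ c 0 = N ∧ (∀ i, h ≤ i → c i = P) ∧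
    ∀ i, i < h → (∃ m : M, c (i+1) = c i ⊔ Submodule.span S {m}) ∧
      ∀ a ∈ J, ∀ x ∈ c (i+1), a • x ∈ c i := by
  induction H with
  | refl => exact ⟨fun _ => N, monotone_const, rfl, fun _ _ => rfl, fun i hi => absurd hi (by omega)⟩
  | step P h m H hm ih =>
    obtain ⟨c, hc, hc0, hcP, hs⟩ := ih
    refine ⟨fun i => if i ≤ h then c i else P ⊔ Submodule.span S {m}, ?_, by simpa using hc0,
      fun i hi => if_neg (by omega), fun i hi => ?_⟩
    · intro i j hij
      dsimp only
      split_ifs with h1 h2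
      · exact hc hij
      · exact (hc h1).trans ((hcP h le_rfl).le.trans le_sup_left)
      · omega
      · exact le_rfl
    · dsimp only
      rw [if_pos (by omega : i ≤ h)]
      rcases Nat.lt_succ_iff_lt_or_eq.mp hi with h1 | rfl
      · rw [if_pos (by omega : i + 1 ≤ h)]
        exact hs i h1
      · rw [if_neg (by omega), hcP _ le_rfl]
        refine ⟨⟨m, rfl⟩, fun a ha x hx => ?_⟩
        obtain ⟨y, hy, z, hz, rfl⟩ := Submodule.mem_sup.mp hx
        obtain ⟨b, rfl⟩ := Submodule.mem_span_singleton.mp hz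
        rw [smul_add, smul_comm]
        exact add_mem (P.smul_mem a hy) (P.smul_mem b (hm a ha))

end QC

theorem hasQLFiltration_iff {S : Type u} [CommRing S] {J : Ideal S}
    {M : Type v} [AddCommGroup M] [Module S M] {h : ℕ} :
    HasQLFiltration S J M h ↔ QC J (⊥ : Submodule S M) ⊤ h := by
  constructor
  · rintro ⟨c, hc, h0, hl, hs⟩
    have : ∀ i (hi : i < h + 1), QC J (⊥ : Submodule S M) (c ⟨i, hi⟩) i := by
      intro i
      induction i with
      | zero =>
        intro hi
        have : c ⟨0, hi⟩ = ⊥ := h0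
        rw [this]; exact QC.refl
      | succ i ih =>
        intro hi
        obtain ⟨⟨m, hm⟩, hk⟩ := hs ⟨i, by omega⟩
        have e : c ⟨i + 1, hi⟩ = c ⟨i, by omega⟩ ⊔ Submodule.span S {m} := hm
        rw [e]
        refine QC.step _ _ _ (ih _) fun a ha => hk a ha m ?_
        rw [hm]
        exact Submodule.mem_sup_right (Submodule.mem_span_singleton_self m)
    have := this h (by omega)
    rwa [show (⟨h, by omega⟩ : Fin (h+1)) = Fin.last h from rfl, hl] at this
  · intro H
    obtain ⟨c, hc, h0, hl, hs⟩ := H.toFil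
    exact ⟨fun i => c i, fun i j hij => hc hij, h0, hl _ le_rfl, fun i => hs i i.2⟩

theorem hasQLFiltration_quot_iff {S : Type u} [CommRing S] {J : Ideal S}
    {M : Type v} [AddCommGroup M] [Module S M] {N : Submodule S M} {h : ℕ} :
    HasQLFiltration S J (M ⧸ N) h ↔ QC J N ⊤ h := by
  rw [hasQLFiltration_iff]
  constructor
  · intro H
    simpa using H.comap N.mkQ N.mkQ_surjective
  · intro H
    have := H.map N.mkQ
    rwa [Submodule.map_top, Submodule.range_mkQ, N.mkQ_map_self] at this

namespace QC
section
variable {A S : Type*} [CommRing A] [CommRing S] [Algebra A S] {M : Type*} [AddCommGroup M] [Module S M]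
  [Module A M] [IsScalarTower A S M]

theorem length_le_of_cyc {I : Ideal S} {P : Submodule S M} {m : M} (hm : ∀ a ∈ I, a • m ∈ P) :
    Module.length A (M ⧸ P) ≤ Module.length A (M ⧸ (P ⊔ Submodule.span S {m})) + Module.length A (S ⧸ I) := by
  let g : (M ⧸ P) →ₗ[A] (M ⧸ (P ⊔ Submodule.span S {m})) :=
    (Submodule.factor (le_sup_left : P ≤ P ⊔ Submodule.span S {m})).restrictScalars A
  let f : (S ⧸ I) →ₗ[A] (M ⧸ P) :=
    (Submodule.mapQ I P (LinearMap.toSpanSingleton S M m) (fun a ha => hm a ha)).restrictScalars A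
  have hg : Function.Surjective g := by
    intro z
    obtain ⟨z, rfl⟩ := Submodule.mkQ_surjective _ z
    exact ⟨P.mkQ z, rfl⟩
  have hle : LinearMap.ker g ≤ LinearMap.range f := by
    intro z hz
    obtain ⟨z, rfl⟩ := P.mkQ_surjective z
    have hz' : z ∈ P ⊔ Submodule.span S {m} := by
      have : Submodule.Quotient.mk (p := P ⊔ Submodule.span S {m}) z = 0 := hz
      rwa [Submodule.Quotient.mk_eq_zero] at this
    obtain ⟨y, hy, w, hw, rfl⟩ := Submodule.mem_sup.mp hz'
    obtain ⟨b, rfl⟩ := Submodule.mem_span_singleton.mp hw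
    refine ⟨Ideal.Quotient.mk I b, ?_⟩
    change P.mkQ (b • m) = _
    rw [map_add, show P.mkQ y = 0 by simpa using hy, zero_add]
  rw [Module.length_eq_add_of_exact (LinearMap.ker g).subtype g (Submodule.injective_subtype _) hg
    (LinearMap.exact_subtype_ker_map g), add_comm]
  gcongr
  calc Module.length A (LinearMap.ker g) ≤ Module.length A (LinearMap.range f) :=
        Module.length_le_of_injective (Submodule.inclusion hle) (Submodule.inclusion_injective hle)
    _ ≤ Module.length A (S ⧸ I) := Module.length_le_of_surjective f.rangeRestrict f.surjective_rangeRestrict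

theorem length_quot_le {I : Ideal S} {N P : Submodule S M} {h : ℕ} (H : QC I N P h) :
    Module.length A (M ⧸ N) ≤ Module.length A (M ⧸ P) + h * Module.length A (S ⧸ I) := by
  induction H with
  | refl => simp
  | step P h m _ hm ih =>
    refine ih.trans ((add_le_add_left (length_le_of_cyc (A := A) hm) _).trans ?_)
    rw [add_assoc]
    gcongr
    push_cast
    rw [add_mul, one_mul, add_comm]

theorem length_top_le {I : Ideal S} {N : Submodule S M} {h : ℕ} (H : QC I N ⊤ h) :
    Module.length A (M ⧸ N) ≤ h * Module.length A (S ⧸ I) := by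
  refine (H.length_quot_le (A := A)).trans ?_
  have : Subsingleton (M ⧸ (⊤ : Submodule S M)) := Submodule.Quotient.subsingleton_iff.mpr rfl
  rw [Module.length_eq_zero, zero_add]

end
/-- base change for free modules -/
def bc {A S : Type*} [CommRing A] [CommRing S] (φ : A →+* S) {r : ℕ} (N : Submodule A (Fin r → A)) :
    Submodule S (Fin r → S) := Submodule.span S ((fun (v : Fin r → A) (i : Fin r) => φ (v i)) '' (N : Set (Fin r → A)))

theorem bc_sup_span {A S : Type*} [CommRing A] [CommRing S] (φ : A →+* S) {r : ℕ} (N : Submodule A (Fin r → A))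
    (m : Fin r → A) : bc φ (N ⊔ Submodule.span A {m}) = bc φ N ⊔ Submodule.span S {fun i => φ (m i)} := by
  unfold bc
  apply le_antisymm
  · rw [Submodule.span_le]
    rintro _ ⟨v, hv, rfl⟩
    obtain ⟨y, hy, z, hz, rfl⟩ := Submodule.mem_sup.mp hv
    obtain ⟨b, rfl⟩ := Submodule.mem_span_singleton.mp hz
    have : (fun i => φ ((y + b • m) i)) = (fun i => φ (y i)) + φ b • (fun i => φ (m i)) := by
      ext i; simp
    simp only [this]
    exact Submodule.add_mem_sup (Submodule.subset_span ⟨y, hy, rfl⟩)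
      (Submodule.smul_mem _ _ (Submodule.mem_span_singleton_self _))
  · rw [sup_le_iff, Submodule.span_singleton_le_iff_mem]
    exact ⟨Submodule.span_mono (Set.image_mono (le_sup_left (a := N))),
      Submodule.subset_span ⟨m, Submodule.mem_sup_right (Submodule.mem_span_singleton_self m), rfl⟩⟩

theorem bc_top {A S : Type*} [CommRing A] [CommRing S] (φ : A →+* S) {r : ℕ} :
    bc φ (⊤ : Submodule A (Fin r → A)) = ⊤ := by
  rw [eq_top_iff, ← (Pi.basisFun S (Fin r)).span_eq, Submodule.span_le]
  rintro _ ⟨i, rfl⟩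
  refine Submodule.subset_span ⟨Pi.single i 1, trivial, ?_⟩
  ext j
  simp [Pi.single_apply, apply_ite φ]

theorem bc_smul_top {A S : Type*} [CommRing A] [CommRing S] (φ : A →+* S) {r : ℕ} (I : Ideal A) :
    bc φ (I • (⊤ : Submodule A (Fin r → A))) = I.map φ • ⊤ := by
  apply le_antisymm
  · rw [bc, Submodule.span_le]
    rintro _ ⟨v, hv, rfl⟩
    induction hv using Submodule.smul_induction_on' with
    | smul a ha n hn =>
      have : (fun i => φ ((a • n) i)) = φ a • (fun i => φ (n i)) := by ext i; simp
      simp only [this]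
      exact Submodule.smul_mem_smul (Ideal.mem_map_of_mem φ ha) trivial
    | add x hx y hy h1 h2 =>
      have : (fun i => φ ((x + y) i)) = (fun i => φ (x i)) + (fun i => φ (y i)) := by ext i; simp
      simp only [this]
      exact add_mem h1 h2
  · rw [Submodule.smul_le]
    intro a ha n hn
    rw [← bc_top φ] at hn
    induction ha using Submodule.span_induction with
    | zero => rw [zero_smul]; exact zero_mem _
    | add x y _ _ hx hy => rw [add_smul]; exact add_mem hx hy
    | smul b x _ hx => rw [smul_assoc]; exact Submodule.smul_mem _ _ hx
    | mem x hx =>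
      obtain ⟨a, ha, rfl⟩ := hx
      induction hn using Submodule.span_induction with
      | zero => rw [smul_zero]; exact zero_mem _
      | add x y _ _ hx hy => rw [smul_add]; exact add_mem hx hy
      | smul b x _ hx => rw [smul_comm]; exact Submodule.smul_mem _ _ hx
      | mem x hx =>
        obtain ⟨v, -, rfl⟩ := hx
        refine Submodule.subset_span ⟨a • v, Submodule.smul_mem_smul ha trivial, ?_⟩
        ext i; simp

theorem baseChange {A S : Type*} [CommRing A] [CommRing S] (φ : A →+* S) {r : ℕ} {J : Ideal A}
    {N P : Submodule A (Fin r → A)} {h : ℕ} (H : QC J N P h) : QC (J.map φ) (bc φ N) (bc φ P) h := by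
  induction H with
  | refl => exact QC.refl
  | step P h m _ hm ih =>
    rw [bc_sup_span]
    refine QC.step _ _ _ ih fun a ha => ?_
    induction ha using Submodule.span_induction with
    | zero => rw [zero_smul]; exact zero_mem _
    | add x y _ _ hx hy => rw [add_smul]; exact add_mem hx hy
    | smul b x _ hx => rw [smul_assoc]; exact Submodule.smul_mem _ _ hx
    | mem x hx =>
      obtain ⟨a, ha, rfl⟩ := hx
      refine Submodule.subset_span ⟨a • m, hm a ha, ?_⟩
      ext i; simp

end QC

namespace QC
variable {S : Type*} [CommRing S] {M : Type*} [AddCommGroup M] [Module S M] {J : Ideal S}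

theorem mul_single {T : Submodule S M} {y : S} {h : ℕ}
    (H : QC J (T ⊔ Submodule.map (LinearMap.lsmul S M y) ⊤) ⊤ h) (k : ℕ) :
    QC J (T ⊔ Submodule.map (LinearMap.lsmul S M (y ^ k)) ⊤) ⊤ (k * h) := by
  induction k with
  | zero =>
    have : T ⊔ Submodule.map (LinearMap.lsmul S M (y ^ 0)) ⊤ = ⊤ := by
      rw [eq_top_iff]
      exact fun z _ => Submodule.mem_sup_right ⟨z, trivial, by simp⟩
    rw [this, zero_mul]
    exact QC.refl
  | succ k ih =>
    have h1 := (H.map (LinearMap.lsmul S M (y ^ k))).sup T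
    have e : Submodule.map (LinearMap.lsmul S M (y ^ k)) (T ⊔ Submodule.map (LinearMap.lsmul S M y) ⊤) ⊔ T =
        T ⊔ Submodule.map (LinearMap.lsmul S M (y ^ (k+1))) ⊤ := by
      have e1 : Submodule.map (LinearMap.lsmul S M (y ^ k)) T ≤ T := by
        rintro _ ⟨z, hz, rfl⟩
        exact T.smul_mem _ hz
      have e2 : LinearMap.lsmul S M (y ^ k) ∘ₗ LinearMap.lsmul S M y = LinearMap.lsmul S M (y ^ (k+1)) := by
        ext z
        rw [pow_succ]
        exact (mul_smul _ _ _).symm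
      rw [Submodule.map_sup, ← Submodule.map_comp, e2, sup_right_comm, sup_eq_right.mpr e1]
    rw [e, sup_comm _ T] at h1
    have := h1.trans ih
    rwa [show (k + 1) * h = h + k * h by ring]

variable {d : ℕ} (x : Fin d → S)

theorem powerIdeal_update (t : Fin d → ℕ) (i : Fin d) (n : ℕ) :
    powerIdeal x (Function.update t i n) =
      Ideal.span ((fun j => x j ^ t j) '' {i}ᶜ) ⊔ Ideal.span {x i ^ n} := by
  rw [powerIdeal, ← Ideal.span_union]
  congr 1
  ext z
  simp only [Set.mem_range, Set.mem_union, Set.mem_image, Set.mem_compl_iff, Set.mem_singleton_iff]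
  constructor
  · rintro ⟨j, rfl⟩
    by_cases hj : j = i
    · subst hj; right; simp
    · left; exact ⟨j, hj, by simp [hj]⟩
  · rintro (⟨j, hj, rfl⟩ | rfl)
    · exact ⟨j, by simp [hj]⟩
    · exact ⟨i, by simp⟩

theorem span_singleton_smul_top' (y : S) :
    (Ideal.span {y} • ⊤ : Submodule S M) = Submodule.map (LinearMap.lsmul S M y) ⊤ := by
  ext z
  rw [Submodule.ideal_span_singleton_smul, Submodule.mem_smul_pointwise_iff_exists]
  simp

theorem mul_update {t : Fin d → ℕ} {h : ℕ} (H : QC J (powerIdeal x t • (⊤ : Submodule S M)) ⊤ h)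
    (i : Fin d) (k : ℕ) :
    QC J (powerIdeal x (Function.update t i (k * t i)) • (⊤ : Submodule S M)) ⊤ (k * h) := by
  rw [powerIdeal_update, Submodule.sup_smul, span_singleton_smul_top', mul_comm, pow_mul]
  apply mul_single
  rw [← Function.update_eq_self i t, powerIdeal_update, Submodule.sup_smul, span_singleton_smul_top'] at H
  exact H

theorem mul_all {t : Fin d → ℕ} {h : ℕ} (H : QC J (powerIdeal x t • (⊤ : Submodule S M)) ⊤ h)
    (k : Fin d → ℕ) :
    QC J (powerIdeal x (fun i => k i * t i) • (⊤ : Submodule S M)) ⊤ ((∏ i, k i) * h) := by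
  classical
  suffices ∀ s : Finset (Fin d),
      QC J (powerIdeal x (fun i => if i ∈ s then k i * t i else t i) • (⊤ : Submodule S M)) ⊤
        ((∏ i ∈ s, k i) * h) by
    simpa using this Finset.univ
  intro s
  induction s using Finset.induction_on with
  | empty => simpa using H
  | insert a s ha ih =>
    have := mul_update x ih a (k a)
    rw [Finset.prod_insert ha, mul_assoc]
    convert this using 3
    funext i
    by_cases hi : i = a
    · subst hi; simp [ha]
    · simp [hi]

theorem powerIdeal_anti {t t' : Fin d → ℕ} (h : t ≤ t') : powerIdeal x t' ≤ powerIdeal x t := by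
  rw [powerIdeal, Ideal.span_le]
  rintro _ ⟨i, rfl⟩
  exact Ideal.mem_of_dvd _ (pow_dvd_pow _ (h i)) (Ideal.subset_span ⟨i, rfl⟩)

theorem mono_t {t t' : Fin d → ℕ} {h : ℕ} (H : QC J (powerIdeal x t' • (⊤ : Submodule S M)) ⊤ h)
    (htt : t ≤ t') : QC J (powerIdeal x t • (⊤ : Submodule S M)) ⊤ h :=
  H.top_of_le (Submodule.smul_mono_left (powerIdeal_anti x htt))

/-- constant exponents -/
theorem to_const {t : Fin d → ℕ} {h : ℕ} (H : QC J (powerIdeal x t • (⊤ : Submodule S M)) ⊤ h)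
    (ht : ∀ i, 0 < t i) (n : ℕ) :
    QC J (powerIdeal x (fun _ => n) • (⊤ : Submodule S M)) ⊤ ((∏ i, (n / t i + 1)) * h) := by
  refine mono_t x (mul_all x H (fun i => n / t i + 1)) fun i => ?_
  have := Nat.lt_div_mul_add (a := n) (ht i)
  show n ≤ (n / t i + 1) * t i
  nlinarith

theorem map_powerIdeal {R' : Type*} [CommRing R'] (φ : S →+* R') (t : Fin d → ℕ) :
    (powerIdeal x t).map φ = powerIdeal (fun i => φ (x i)) t := by
  rw [powerIdeal, powerIdeal, Ideal.map_span, ← Set.range_comp]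
  congr 2
  ext i
  simp

theorem powerIdeal_one : powerIdeal x (fun _ => 1) = Ideal.span (Set.range x) := by
  simp [powerIdeal]

/-- the standard chain for the whole module when generated by one more ... -/
theorem free_chain (r : ℕ) (n : ℕ) :
    QC (Ideal.span (Set.range x)) (powerIdeal x (fun _ => n) • (⊤ : Submodule S (Fin r → S))) ⊤ (n ^ d * r) := by
  have h0 : ∀ s : ℕ, ∃ P, QC (Ideal.span (Set.range x))
    (powerIdeal x (fun _ => 1) • (⊤ : Submodule S (Fin r → S))) P s ∧ ∀ i : Fin r, i.1 < s → Pi.single i 1 ∈ P := by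
    intro s
    induction s with
    | zero => exact ⟨_, QC.refl, by simp⟩
    | succ s ih =>
      obtain ⟨P, hP, hi⟩ := ih
      by_cases hs : s < r
      · refine ⟨_, QC.step _ _ (Pi.single ⟨s, hs⟩ 1) hP fun a ha => hP.le ?_, ?_⟩
        · rw [powerIdeal_one]
          exact Submodule.smul_mem_smul ha trivial
        · intro i hi'
          rcases Nat.lt_succ_iff_lt_or_eq.mp hi' with h1 | rfl
          · exact Submodule.mem_sup_left (hi i h1)
          · exact Submodule.mem_sup_right (Submodule.mem_span_singleton_self _)
      · exact ⟨P, hP.succ, fun i _ => hi i (by omega)⟩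
  obtain ⟨P, hP, hi⟩ := h0 r
  have : P = ⊤ := by
    rw [eq_top_iff, ← (Pi.basisFun S (Fin r)).span_eq, Submodule.span_le]
    rintro _ ⟨i, rfl⟩
    rw [Pi.basisFun_apply]
    exact hi i i.2
  rw [this] at hP
  simpa using mul_all x hP (fun _ => n)

end QC

theorem span_pow_le_powerIdeal {S : Type*} [CommRing S] {d : ℕ} (x : Fin d → S) (n : ℕ) :
    (Ideal.span (Set.range x)) ^ (d * n + 1) ≤ powerIdeal x (fun _ => n) := by
  classical
  suffices ∀ s : Finset (Fin d), Ideal.span (x '' s) ^ (s.card * n + 1) ≤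
      Ideal.span ((fun i => x i ^ n) '' s) by
    simpa [powerIdeal] using this Finset.univ
  intro s
  induction s using Finset.induction_on with
  | empty => simp
  | insert a s ha ih =>
    rw [Finset.card_insert_of_notMem ha, Finset.coe_insert, Set.image_insert_eq, Set.image_insert_eq,
      Ideal.span_insert, Ideal.span_insert, show (s.card + 1) * n + 1 = n + (s.card * n + 1) by ring]
    refine Ideal.sup_pow_add_le_pow_sup_pow.trans (sup_le_sup ?_ ih)
    rw [Ideal.span_singleton_pow]

/-- existence of parameters -/
theorem exists_params {B : Type*} [CommRing B] [IsLocalRing B] [IsNoetherianRing B] {e : ℕ}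
    (he : ringKrullDim B ≤ e) :
    ∃ (y : Fin e → B) (N : ℕ), (∀ i, y i ∈ IsLocalRing.maximalIdeal B) ∧
      IsLocalRing.maximalIdeal B ^ N ≤ Ideal.span (Set.range y) := by
  obtain ⟨s, hs, hc⟩ := (IsLocalRing.maximalIdeal B).exists_finset_card_eq_height_of_isNoetherianRing
  rw [← IsLocalRing.maximalIdeal_height_eq_ringKrullDim, ← hc] at he
  have hc' : s.card ≤ e := by exact_mod_cast he
  have hsm : ∀ z ∈ s, z ∈ IsLocalRing.maximalIdeal B := fun z hz => hs.1.2 (Ideal.subset_span hz)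
  have hrad : IsLocalRing.maximalIdeal B ≤ (Ideal.span (s : Set B)).radical := by
    rw [Ideal.radical_eq_sInf]
    refine le_sInf ?_
    rintro J ⟨hJ, hJp⟩
    have : J ≤ IsLocalRing.maximalIdeal B := IsLocalRing.le_maximalIdeal hJp.ne_top
    exact hs.2 ⟨hJp, hJ⟩ this
  obtain ⟨N, hN⟩ := Ideal.exists_pow_le_of_le_radical_of_fg hrad (IsNoetherian.noetherian _)
  let l := s.toList
  have hl : l.length = s.card := Finset.length_toList s
  refine ⟨fun i => l.getD i 0, N, fun i => ?_, hN.trans (Ideal.span_mono ?_)⟩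
  · show l.getD i 0 ∈ _
    rcases lt_or_ge i.1 l.length with h | h
    · rw [List.getD_eq_getElem _ _ h]
      exact hsm _ (Finset.mem_toList.mp (List.getElem_mem h))
    · rw [List.getD_eq_default _ _ h]; exact zero_mem _
  · intro z hz
    obtain ⟨i, hi, rfl⟩ := List.getElem_of_mem (Finset.mem_toList.mpr hz)
    refine ⟨⟨i, ?_⟩, ?_⟩
    · have : i < s.card := hl ▸ hi
      omega
    · exact List.getD_eq_getElem _ _ hi

theorem torsion_lemma {A : Type*} [CommRing A] [IsDomain A] [IsNoetherianRing A] [IsLocalRing A]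
    {d : ℕ} (hd : ringKrullDim A ≤ d) (x : Fin d → A)
    (hxm : Ideal.span (Set.range x) ≤ IsLocalRing.maximalIdeal A)
    (hx : IsLocalRing.maximalIdeal A ≤ (Ideal.span (Set.range x)).radical) {c : A} (hc : c ≠ 0) :
    ∃ C : ℕ, ∀ n : ℕ, 0 < n → ∃ l : ℕ, l * n ≤ C * n ^ d ∧
      QC (Ideal.span (Set.range x)) (Ideal.span {c} ⊔ powerIdeal x (fun _ => n)) ⊤ l := by
  by_cases hcu : IsUnit c
  · refine ⟨0, fun n _ => ⟨0, by simp, ?_⟩⟩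
    rw [Ideal.span_singleton_eq_top.mpr hcu, top_sup_eq]
    exact QC.refl
  have hcm : c ∈ IsLocalRing.maximalIdeal A := hcu
  have hne : Ideal.span {c} ≠ ⊤ := fun h => hcu (Ideal.span_singleton_eq_top.mp h)
  have : Nontrivial (A ⧸ Ideal.span {c}) := Ideal.Quotient.nontrivial_iff.mpr hne
  have hloc : IsLocalRing (A ⧸ Ideal.span {c}) :=
    IsLocalRing.of_surjective' (Ideal.Quotient.mk _) Ideal.Quotient.mk_surjective
  have h1 := (ringKrullDim_quotient_succ_le_of_nonZeroDivisor (mem_nonZeroDivisors_of_ne_zero hc)).trans hd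
  have h0 : (0 : WithBot ℕ∞) ≤ ringKrullDim (A ⧸ Ideal.span {c}) := ringKrullDim_nonneg_of_nontrivial
  obtain ⟨e, rfl⟩ : ∃ e, d = e + 1 := by
    cases d with
    | zero =>
      exfalso
      have := (add_le_add_left h0 1).trans h1
      norm_num at this
    | succ e => exact ⟨e, rfl⟩
  have he : ringKrullDim (A ⧸ Ideal.span {c}) ≤ e := by
    push_cast at h1
    exact ENat.WithBot.add_le_add_one_right_iff.mp h1
  obtain ⟨y', N, hym, hN⟩ := exists_params he
  choose y hy using fun i => Ideal.Quotient.mk_surjective (y' i)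
  have hmm : (IsLocalRing.maximalIdeal (A ⧸ Ideal.span {c})).comap (Ideal.Quotient.mk (Ideal.span {c})) =
      IsLocalRing.maximalIdeal A := by
    have := (Ideal.comap_isMaximal_of_surjective (Ideal.Quotient.mk (Ideal.span {c}))
      Ideal.Quotient.mk_surjective (K := IsLocalRing.maximalIdeal (A ⧸ Ideal.span {c})))
    exact IsLocalRing.eq_maximalIdeal this
  have hym' : ∀ i, y i ∈ IsLocalRing.maximalIdeal A := fun i => by
    rw [← hmm, Ideal.mem_comap, hy]
    exact hym i
  have hN' : IsLocalRing.maximalIdeal A ^ N ≤ Ideal.span (Set.range y) ⊔ Ideal.span {c} := by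
    have e1 : (IsLocalRing.maximalIdeal A).map (Ideal.Quotient.mk (Ideal.span {c})) ≤
        IsLocalRing.maximalIdeal (A ⧸ Ideal.span {c}) := by
      rw [Ideal.map_le_iff_le_comap, hmm]
    have e2 := (Ideal.pow_right_mono e1 N).trans hN
    have e3 : Ideal.span (Set.range y') = (Ideal.span (Set.range y)).map (Ideal.Quotient.mk (Ideal.span {c})) := by
      rw [Ideal.map_span, ← Set.range_comp]
      congr 2
      ext i; exact (hy i).symm
    rw [e3, ← Ideal.map_pow, Ideal.map_le_iff_le_comap,
      Ideal.comap_map_of_surjective _ Ideal.Quotient.mk_surjective] at e2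
    refine e2.trans (sup_le_sup le_rfl ?_)
    intro z hz
    exact Ideal.Quotient.eq_zero_iff_mem.mp hz
  -- the refinement cost
  obtain ⟨l0, hl0⟩ := QC.exists_pow (IsLocalRing.maximalIdeal A) N
  have hl0' : QC (Ideal.span (Set.range x)) (Ideal.span (Set.range y) ⊔ Ideal.span {c}) ⊤ l0 :=
    (hl0.top_of_le hN').mono_ideal hxm
  obtain ⟨N', hN''⟩ := Ideal.exists_pow_le_of_le_radical_of_fg hx (IsNoetherian.noetherian _)
  -- one step chain
  have hb : QC (Ideal.span (Set.range y) ⊔ Ideal.span {c})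
      (powerIdeal y (fun _ => 1) • (⊤ : Submodule A (A ⧸ Ideal.span {c}))) ⊤ 1 := by
    have := QC.step (J := Ideal.span (Set.range y) ⊔ Ideal.span {c}) _ _
      (1 : A ⧸ Ideal.span {c}) (QC.refl (N := (powerIdeal y (fun _ => 1) • (⊤ : Submodule A (A ⧸ Ideal.span {c})))))
      (by
        intro a ha
        obtain ⟨u, hu, v, hv, rfl⟩ := Submodule.mem_sup.mp ha
        rw [add_smul]
        refine add_mem ?_ ?_
        · rw [QC.powerIdeal_one]
          exact Submodule.smul_mem_smul hu trivial
        · have : v • (1 : A ⧸ Ideal.span {c}) = 0 := by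
            rw [Algebra.smul_def, _root_.mul_one]
            exact Ideal.Quotient.eq_zero_iff_mem.mpr hv
          rw [this]; exact zero_mem _)
    convert this using 1
    rw [eq_comm, eq_top_iff]
    intro z _
    obtain ⟨z, rfl⟩ := Ideal.Quotient.mk_surjective z
    refine Submodule.mem_sup_right (Submodule.mem_span_singleton.mpr ⟨z, ?_⟩)
    rw [Algebra.smul_def, _root_.mul_one]; rfl
  refine ⟨(N' * (e + 2)) ^ e * l0, fun n hn => ⟨(N' * (e + 2) * n) ^ e * l0, le_of_eq (by rw [mul_pow _ n]; ring), ?_⟩⟩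
  have hk := ((QC.mul_all y hb (fun _ => N' * (e + 2) * n)).refine hl0').comap
    (Ideal.span {c}).mkQ (Submodule.mkQ_surjective _)
  simp only [Finset.prod_const, Finset.card_univ, Fintype.card_fin, _root_.mul_one, Submodule.comap_top] at hk
  refine hk.top_of_le ?_
  intro z hz
  have hle : powerIdeal y (fun _ => N' * (e + 2) * n) ≤ powerIdeal x (fun _ => n) := by
    rw [powerIdeal, Ideal.span_le]
    rintro _ ⟨i, rfl⟩
    have e1 := Ideal.pow_mem_pow (hym' i) (N' * (e + 2) * n)
    rw [mul_assoc, pow_mul (IsLocalRing.maximalIdeal A)] at e1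
    have e2 := Ideal.pow_right_mono hN'' ((e+2) * n) e1
    rw [← mul_assoc] at e2
    refine span_pow_le_powerIdeal x n (Ideal.pow_le_pow_right ?_ e2)
    nlinarith
  have hz' : Submodule.mkQ (Ideal.span {c}) z ∈ powerIdeal x (fun _ => n) • (⊤ : Submodule A (A ⧸ Ideal.span {c})) :=
    Submodule.smul_mono_left hle hz
  rw [← Submodule.range_mkQ (Ideal.span {c}), ← Submodule.map_top, ← Submodule.map_smul''] at hz'
  obtain ⟨w, hw, hwz⟩ := hz'
  have hw' : w ∈ powerIdeal x (fun _ => n) := by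
    rw [smul_eq_mul, Ideal.mul_top] at hw
    exact hw
  have : z - w ∈ Ideal.span {c} := by
    rw [← Submodule.ker_mkQ (Ideal.span {c}), LinearMap.mem_ker, map_sub, hwz, sub_self]
  rw [← sub_add_cancel z w]
  exact Submodule.add_mem_sup this hw'

theorem QC.gen_chain {S : Type*} [CommRing S] {M : Type*} [AddCommGroup M] [Module S M] {J : Ideal S}
    {P : Submodule S M} {s : ℕ} (v : Fin s → M) (hv : Submodule.span S (Set.range v) = ⊤)
    (hJ : ∀ a ∈ J, ∀ m : M, a • m ∈ P) : QC J P ⊤ s := by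
  have h0 : ∀ k : ℕ, ∃ Q, QC J P Q k ∧ ∀ i : Fin s, i.1 < k → v i ∈ Q := by
    intro k
    induction k with
    | zero => exact ⟨_, QC.refl, by simp⟩
    | succ k ih =>
      obtain ⟨Q, hQ, hi⟩ := ih
      by_cases hs : k < s
      · refine ⟨_, QC.step _ _ (v ⟨k, hs⟩) hQ fun a ha => hQ.le (hJ a ha _), ?_⟩
        intro i hi'
        rcases Nat.lt_succ_iff_lt_or_eq.mp hi' with h1 | rfl
        · exact Submodule.mem_sup_left (hi i h1)
        · exact Submodule.mem_sup_right (Submodule.mem_span_singleton_self _)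
      · exact ⟨Q, hQ.succ, fun i _ => hi i (by omega)⟩
  obtain ⟨Q, hQ, hi⟩ := h0 s
  have : Q = ⊤ := by
    rw [eq_top_iff, ← hv, Submodule.span_le]
    rintro _ ⟨i, rfl⟩
    exact hi i i.2
  rwa [this] at hQ

theorem exists_annihilator {R : Type*} [CommRing R] [IsDomain R] {M : Type*} [AddCommGroup M] [Module R M]
    [Module.Finite R M] (h : Module.finrank R M = 0) : ∃ c : R, c ≠ 0 ∧ ∀ m : M, c • m = 0 := by
  classical
  rw [Module.finrank_eq_zero_iff] at h
  obtain ⟨s, hs⟩ := (Module.Finite.fg_top : (⊤ : Submodule R M).FG)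
  choose a ha ham using h
  refine ⟨∏ m ∈ s, a m, Finset.prod_ne_zero_iff.mpr fun m _ => ha m, fun m => ?_⟩
  have hm : m ∈ Submodule.span R (s : Set M) := hs ▸ trivial
  induction hm using Submodule.span_induction with
  | zero => rw [smul_zero]
  | add x y _ _ hx hy => rw [smul_add, hx, hy, add_zero]
  | smul b x _ hx => rw [smul_comm, hx, smul_zero]
  | mem x hx => rw [← Finset.prod_erase_mul s a hx, mul_smul, ham, smul_zero]

theorem exists_maps {R : Type*} [CommRing R] [IsDomain R] {M : Type*} [AddCommGroup M] [Module R M]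
    [Module.Finite R M] {r : ℕ} (hr : Module.finrank R M = r) :
    ∃ (c : R) (f : (Fin r → R) →ₗ[R] M) (g : M →ₗ[R] (Fin r → R)), c ≠ 0 ∧
      (∀ m, c • m ∈ LinearMap.range f) ∧ (∀ v, c • v ∈ LinearMap.range g) := by
  obtain ⟨b, hb⟩ := exists_linearIndependent_of_le_finrank (hr.ge)
  let f : (Fin r → R) →ₗ[R] M := Fintype.linearCombination R b
  have hf : Function.Injective f := hb.fintypeLinearCombination_injective
  have hfr : Module.finrank R (LinearMap.range f) = r := by
    rw [← (LinearEquiv.ofInjective f hf).finrank_eq]; simp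
  have hq : Module.finrank R (M ⧸ LinearMap.range f) = 0 := by
    have := Submodule.finrank_quotient_add_finrank (LinearMap.range f)
    omega
  obtain ⟨c, hc, hcm⟩ := exists_annihilator hq
  have hcf : ∀ m, c • m ∈ LinearMap.range f := fun m => by
    have := hcm (Submodule.Quotient.mk m)
    rwa [← Submodule.Quotient.mk_smul, Submodule.Quotient.mk_eq_zero] at this
  let g : M →ₗ[R] (Fin r → R) := (LinearEquiv.ofInjective f hf).symm.toLinearMap ∘ₗ
    (LinearMap.codRestrict (LinearMap.range f) (LinearMap.lsmul R M c) hcf)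
  refine ⟨c, f, g, hc, hcf, fun v => ⟨f v, ?_⟩⟩
  show (LinearEquiv.ofInjective f hf).symm _ = _
  rw [LinearEquiv.symm_apply_eq]
  ext1
  exact (map_smul f c v).symm

section
variable {R : Type*} [CommRing R] {d : ℕ} (x : Fin d → R)

theorem coker_chain {M M' : Type*} [AddCommGroup M] [Module R M] [AddCommGroup M'] [Module R M']
    {r : ℕ} (v : Fin r → M) (hv : Submodule.span R (Set.range v) = ⊤) (g : M' →ₗ[R] M) {c : R}
    (hg : ∀ m, c • m ∈ LinearMap.range g) {n l h : ℕ}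
    (H : QC (Ideal.span (Set.range x)) (powerIdeal x (fun _ => n) • (⊤ : Submodule R M')) ⊤ h)
    (hl : QC (Ideal.span (Set.range x)) (Ideal.span {c} ⊔ powerIdeal x (fun _ => n)) ⊤ l) :
    QC (Ideal.span (Set.range x)) (powerIdeal x (fun _ => n) • (⊤ : Submodule R M)) ⊤ (h + r * l) := by
  have h1 := (H.map g).sup (powerIdeal x (fun _ => n) • (⊤ : Submodule R M))
  rw [Submodule.map_smul'', Submodule.map_top,
    sup_eq_right.mpr (smul_mono_right _ (le_top : LinearMap.range g ≤ ⊤))] at h1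
  refine h1.trans ((QC.gen_chain v hv ?_).refine hl)
  intro a ha m
  obtain ⟨u, hu, w, hw, rfl⟩ := Submodule.mem_sup.mp ha
  obtain ⟨b, rfl⟩ := Ideal.mem_span_singleton'.mp hu
  rw [add_smul, mul_smul]
  exact Submodule.add_mem_sup (Submodule.smul_mem _ _ (hg m)) (Submodule.smul_mem_smul hw trivial)

end

open Filter Topology in
/-- limiting argument -/
theorem limit_arith {d : ℕ} {t : Fin d → ℕ} (ht : ∀ i, 0 < t i) {r h C : ℕ}
    (H : ∃ᶠ n : ℕ in atTop, ∃ l : ℕ, l * n ≤ C * n ^ d ∧ r * n ^ d ≤ (∏ i, (n / t i + 1)) * h + r * l) :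
    r * ∏ i, t i ≤ h := by
  have key : ∀ n : ℕ, (0 < n ∧ ∃ l : ℕ, l * n ≤ C * n ^ d ∧ r * n ^ d ≤ (∏ i, (n / t i + 1)) * h + r * l) →
      (r : ℝ) ≤ (∏ i, (1 / (t i : ℝ) + 1 / n)) * h + r * C / n := by
    rintro n ⟨hn, l, hl, hh⟩
    have hn' : (0 : ℝ) < n := by exact_mod_cast hn
    have e1 : ((∏ i, (n / t i + 1) : ℕ) : ℝ) ≤ (∏ i, (1 / (t i : ℝ) + 1 / n)) * (n : ℝ) ^ d := by
      have : (n : ℝ) ^ d = ∏ i : Fin d, (n : ℝ) := by simp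
      rw [this, ← Finset.prod_mul_distrib]
      push_cast
      refine Finset.prod_le_prod (fun i _ => by positivity) fun i _ => ?_
      have := Nat.cast_div_le (α := ℝ) (m := n) (n := t i)
      have e : (1 / (t i : ℝ) + 1 / n) * n = n / t i + 1 := by field_simp
      rw [e]; linarith
    have e2 : (l : ℝ) ≤ C * (n : ℝ) ^ d / n := by
      rw [le_div_iff₀ hn']; exact_mod_cast hl
    have e3 : (r : ℝ) * (n : ℝ) ^ d ≤ ((∏ i, (n / t i + 1) : ℕ) : ℝ) * h + r * l := by exact_mod_cast hh
    have e4 : (r : ℝ) * (n : ℝ) ^ d ≤ ((∏ i, (1 / (t i : ℝ) + 1 / n)) * h + r * C / n) * (n : ℝ) ^ d := by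
      calc _ ≤ _ := e3
        _ ≤ (∏ i, (1 / (t i : ℝ) + 1 / n)) * (n : ℝ) ^ d * h + r * (C * (n : ℝ) ^ d / n) := by gcongr
        _ = _ := by ring
    exact le_of_mul_le_mul_right e4 (by positivity)
  have lim : Tendsto (fun n : ℕ => (∏ i, (1 / (t i : ℝ) + 1 / n)) * h + r * C / (n : ℝ)) atTop
      (𝓝 ((∏ i, (1 / (t i : ℝ) + 0)) * h + 0)) := by
    refine Tendsto.add (Tendsto.mul_const _ (tendsto_finsetProd _ fun i _ =>
      Tendsto.const_add _ tendsto_one_div_atTop_nhds_zero_nat)) (tendsto_const_div_atTop_nhds_zero_nat _)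
  have fin := ge_of_tendsto_of_frequently lim
    ((H.and_eventually (eventually_gt_atTop 0)).mono fun n hn => key n ⟨hn.2, hn.1⟩)
  simp only [add_zero, Finset.prod_div_distrib, Finset.prod_const_one] at fin
  have hp : (0 : ℝ) < ∏ i, (t i : ℝ) := Finset.prod_pos fun i _ => by exact_mod_cast ht i
  rw [div_mul_eq_mul_div, one_mul, le_div_iff₀ hp] at fin
  exact_mod_cast fin

theorem content_eq_of_key {R : Type u} [CommRing R] [IsDomain R] [IsNoetherianRing R] [IsLocalRing R]
    {d : ℕ} (hd : ringKrullDim R = d)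
    (x : Fin d → R) (hx : ∀ i, x i ∈ IsLocalRing.maximalIdeal R)
    (hxparam : (Ideal.span (Set.range x)).radical = IsLocalRing.maximalIdeal R)
    (key : ∀ (r : ℕ) (t : Fin d → ℕ) (h : ℕ), (∀ i, 0 < t i) →
      QC (Ideal.span (Set.range x)) (powerIdeal x t • (⊤ : Submodule R (Fin r → R))) ⊤ h → r * ∏ i, t i ≤ h)
    (M : Type v) [AddCommGroup M] [Module R M] [Module.Finite R M] :
    content x M = Module.finrank R M := by
  obtain ⟨r, hr⟩ : ∃ r, Module.finrank R M = r := ⟨_, rfl⟩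
  obtain ⟨c, f, g, hc, hf, hg⟩ := exists_maps (R := R) (M := M) hr
  rw [hr]
  have hxm : Ideal.span (Set.range x) ≤ IsLocalRing.maximalIdeal R := by
    rw [Ideal.span_le]; rintro _ ⟨i, rfl⟩; exact hx i
  obtain ⟨C, hC⟩ := torsion_lemma hd.le x hxm hxparam.ge hc
  obtain ⟨s, v, hv⟩ := Module.Finite.exists_fin (R := R) (M := M)
  have lower : ∀ (t : Fin d → ℕ) (h : ℕ), (∀ i, 0 < t i) →
      QC (Ideal.span (Set.range x)) (powerIdeal x t • (⊤ : Submodule R M)) ⊤ h → r * ∏ i, t i ≤ h := by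
    intro t h ht H
    refine limit_arith (C := C) ht (Filter.Eventually.frequently
      (Filter.eventually_atTop.mpr ⟨1, fun n hn => ?_⟩))
    obtain ⟨l, hl, hq⟩ := hC n hn
    refine ⟨l, hl, ?_⟩
    have := coker_chain x _ (Pi.basisFun R (Fin r)).span_eq g hg (H.to_const x ht n) hq
    simpa using key r (fun _ => n) _ (fun _ => hn) this
  apply le_antisymm
  · refine iSup_le fun k => ?_
    have up : ∀ n : ℕ, 0 < n → k ≤ n → (⨅ t : {t : Fin d → ℕ // ∀ i, k ≤ t i ∧ 0 < t i},
        (quasilength R (Ideal.span (Set.range x))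
        (M ⧸ (powerIdeal x (t : Fin d → ℕ) • (⊤ : Submodule R M))) : ℝ≥0∞) /
          ∏ i, ((t : Fin d → ℕ) i : ℝ≥0∞)) ≤ r + (s * C : ℕ) / (n : ℝ≥0∞) := by
      intro n hn hkn
      refine iInf_le_of_le ⟨fun _ => n, fun _ => ⟨hkn, hn⟩⟩ ?_
      obtain ⟨l, hl, hq⟩ := hC n hn
      have H := coker_chain x v hv f hf (QC.free_chain x r n) hq
      have h1 : quasilength R (Ideal.span (Set.range x)) (M ⧸ (powerIdeal x (fun _ => n) • (⊤ : Submodule R M)))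
          ≤ ((n ^ d * r + s * l : ℕ) : ℕ∞) := sInf_le ⟨_, rfl, hasQLFiltration_quot_iff.mpr H⟩
      have h2 : ((quasilength R (Ideal.span (Set.range x))
          (M ⧸ (powerIdeal x (fun _ => n) • (⊤ : Submodule R M))) : ℕ∞) : ℝ≥0∞) ≤ ((n ^ d * r + s * l : ℕ) : ℝ≥0∞) := by
        have := ENat.toENNReal_le.mpr h1
        simpa using this
      have hn0 : (n : ℝ≥0∞) ≠ 0 := by exact_mod_cast hn.ne'
      have hnt : (n : ℝ≥0∞) ≠ ⊤ := ENNReal.natCast_ne_top n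
      simp only [Finset.prod_const, Finset.card_univ, Fintype.card_fin]
      rw [ENNReal.div_le_iff (pow_ne_zero _ hn0) (ENNReal.pow_ne_top hnt)]
      refine h2.trans ?_
      rw [add_mul]
      push_cast
      rw [mul_comm (r : ℝ≥0∞)]
      refine add_le_add le_rfl ?_
      rw [mul_comm (_ / _) ((n : ℝ≥0∞) ^ d), ← mul_div_assoc,
        ENNReal.le_div_iff_mul_le (Or.inl hn0) (Or.inl hnt)]
      have : s * l * n ≤ s * C * n ^ d := by
        calc s * l * n = s * (l * n) := by ring
          _ ≤ s * (C * n ^ d) := by gcongr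
          _ = _ := by ring
      have h4 : ((s * l * n : ℕ) : ℝ≥0∞) ≤ ((s * C * n ^ d : ℕ) : ℝ≥0∞) := by exact_mod_cast this
      push_cast at h4
      rw [mul_comm ((n : ℝ≥0∞) ^ d)]
      exact h4
    have lim : Filter.Tendsto (fun n : ℕ => (r : ℝ≥0∞) + (s * C : ℕ) / (n : ℝ≥0∞)) Filter.atTop (nhds (r + 0)) :=
      Filter.Tendsto.const_add _ (by
        have := ENNReal.Tendsto.const_mul (a := ((s * C : ℕ) : ℝ≥0∞)) ENNReal.tendsto_inv_nat_nhds_zero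
          (Or.inr (ENNReal.natCast_ne_top _))
        simpa only [mul_zero, div_eq_mul_inv] using this)
    rw [add_zero] at lim
    exact ge_of_tendsto lim (Filter.eventually_atTop.mpr ⟨max k 1, fun n hn => up n (by omega) (by omega)⟩)
  · refine le_iSup_of_le 0 (le_iInf fun t => ?_)
    obtain ⟨t, ht⟩ := t
    have hp : (∏ i, (t i : ℝ≥0∞)) ≠ 0 := Finset.prod_ne_zero_iff.mpr fun i _ => by
      exact_mod_cast (ht i).2.ne'
    have hp' : (∏ i, (t i : ℝ≥0∞)) ≠ ⊤ := by
      rw [← Nat.cast_prod]; exact ENNReal.natCast_ne_top _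
    rw [ENNReal.le_div_iff_mul_le (Or.inl hp) (Or.inl hp')]
    have : ((r * ∏ i, t i : ℕ) : ℕ∞) ≤ quasilength R (Ideal.span (Set.range x))
        (M ⧸ (powerIdeal x t • (⊤ : Submodule R M))) := by
      refine le_sInf ?_
      rintro _ ⟨h, rfl, hh⟩
      exact_mod_cast lower t h (fun i => (ht i).2) (hasQLFiltration_quot_iff.mp hh)
    have := ENat.toENNReal_le.mpr this
    rw [ENat.toENNReal_coe] at this
    push_cast at this
    exact this

open scoped TensorProduct in
theorem final_of_key {R : Type u} [CommRing R] [IsDomain R] [IsNoetherianRing R] [IsLocalRing R]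
    {d : ℕ} (hd : ringKrullDim R = d)
    (x : Fin d → R) (hx : ∀ i, x i ∈ IsLocalRing.maximalIdeal R)
    (hxparam : (Ideal.span (Set.range x)).radical = IsLocalRing.maximalIdeal R)
    (key : ∀ (r : ℕ) (t : Fin d → ℕ) (h : ℕ), (∀ i, 0 < t i) →
      QC (Ideal.span (Set.range x)) (powerIdeal x t • (⊤ : Submodule R (Fin r → R))) ⊤ h → r * ∏ i, t i ≤ h) :
    (∀ (M : Type u) [AddCommGroup M] [Module R M] [Module.Finite R M],
        content x M = Module.finrank (FractionRing R) (FractionRing R ⊗[R] M)) ∧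
    (∀ (L M N : Type u) [AddCommGroup L] [Module R L] [AddCommGroup M] [Module R M]
        [AddCommGroup N] [Module R N]
        [Module.Finite R L] [Module.Finite R M] [Module.Finite R N]
        (f : L →ₗ[R] M) (g : M →ₗ[R] N),
        Function.Injective f → Function.Surjective g → Function.Exact f g →
        content x M = content x L + content x N) := by
  constructor
  · intro M _ _ _
    rw [content_eq_of_key hd x hx hxparam key]
    congr 1
    exact ((TensorProduct.isBaseChange R M (FractionRing R)).finrank_eq).symm
  · intro L M N _ _ _ _ _ _ _ _ _ f g hf hg hfg
    rw [content_eq_of_key hd x hx hxparam key, content_eq_of_key hd x hx hxparam key,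
      content_eq_of_key hd x hx hxparam key]
    have h1 := Submodule.finrank_quotient_add_finrank (LinearMap.range f)
    have h2 := (LinearEquiv.ofInjective f hf).finrank_eq
    have h3 := ((Submodule.quotEquivOfEq _ _ (LinearMap.exact_iff.mp hfg).symm).trans
      (g.quotKerEquivOfSurjective hg)).finrank_eq
    rw [← h1, ← h2, h3]
    push_cast
    rw [add_comm]

theorem nat_pow_compare {a b D k0 : ℕ} (H : ∀ k, k0 ≤ k → a ^ k ≤ D * b ^ k) : a ≤ b := by
  by_contra hab
  push Not at hab
  rcases Nat.eq_zero_or_pos b with rfl | hb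
  · have := H (k0 + 1) (by omega)
    rw [zero_pow (by omega), mul_zero] at this
    have := pow_pos hab (k0 + 1)
    omega
  · have h1 : (1 : ℝ) < a / b := by
      rw [lt_div_iff₀ (by exact_mod_cast hb)]; simpa using (by exact_mod_cast hab : (b : ℝ) < a)
    have h2 := tendsto_pow_atTop_atTop_of_one_lt h1
    obtain ⟨k, hk, hk'⟩ := ((h2.eventually_gt_atTop (D : ℝ)).and (Filter.eventually_ge_atTop k0)).exists
    have h3 : (a : ℝ) ^ k ≤ D * (b : ℝ) ^ k := by exact_mod_cast H k hk'
    rw [div_pow, lt_div_iff₀ (by positivity)] at hk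
    linarith

theorem length_pi_quot {A S : Type*} [CommRing A] [CommRing S] [Algebra A S] (J : Ideal S) (r : ℕ) :
    r * Module.length A (S ⧸ J) ≤ Module.length A ((Fin r → S) ⧸ (J • (⊤ : Submodule S (Fin r → S)))) := by
  have h1 : Module.length A (Fin r → S ⧸ J) = r * Module.length A (S ⧸ J) := by
    simp [Module.length_pi]
  rw [← h1]
  let g : (Fin r → S) →ₗ[S] (Fin r → S ⧸ J) := LinearMap.pi fun i => J.mkQ ∘ₗ LinearMap.proj i
  have hg : J • (⊤ : Submodule S (Fin r → S)) ≤ LinearMap.ker g := by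
    rw [Submodule.smul_le]
    intro a ha n _
    rw [LinearMap.mem_ker]
    ext i
    exact Ideal.Quotient.eq_zero_iff_mem.mpr (Ideal.mul_mem_right _ _ ha)
  refine Module.length_le_of_surjective ((Submodule.liftQ _ g hg).restrictScalars A) ?_
  intro z
  choose w hw using fun i => Ideal.Quotient.mk_surjective (z i)
  refine ⟨Submodule.Quotient.mk w, ?_⟩
  ext i
  exact hw i

theorem charp_key {A S : Type*} [CommRing A] [CommRing S] [Algebra A S] (p : ℕ) [Fact p.Prime] [CharP S p]
    {d : ℕ} (x : Fin d → S) (hfin : Module.length A (S ⧸ Ideal.span (Set.range x)) ≠ ⊤)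
    {D : ℕ} (hD : ∀ᶠ n : ℕ in Filter.atTop,
      ((n ^ d : ℕ) : ℕ∞) ≤ D * Module.length A (S ⧸ powerIdeal x (fun _ => n)))
    (r : ℕ) (t : Fin d → ℕ) (h : ℕ) (ht : ∀ i, 0 < t i)
    (H : QC (Ideal.span (Set.range x)) (powerIdeal x t • (⊤ : Submodule S (Fin r → S))) ⊤ h) :
    r * ∏ i, t i ≤ h := by
  have hp : 2 ≤ p := (Fact.out : p.Prime).two_le
  have step : ∀ (e e' h : ℕ), QC (Ideal.span (Set.range x))
        (powerIdeal x (fun _ => p ^ e') • (⊤ : Submodule S (Fin r → S))) ⊤ h →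
      r * Module.length A (S ⧸ powerIdeal x (fun _ => p ^ (e + e'))) ≤
        h * Module.length A (S ⧸ powerIdeal x (fun _ => p ^ e)) := by
    intro e e' h H
    have h1 := H.baseChange (iterateFrobenius S p e)
    rw [QC.bc_top, QC.bc_smul_top, QC.map_powerIdeal, Ideal.map_span, ← Set.range_comp] at h1
    have e1 : Ideal.span (Set.range (⇑(iterateFrobenius S p e) ∘ x)) = powerIdeal x (fun _ => p ^ e) := rfl
    have e2 : powerIdeal (fun i => (iterateFrobenius S p e) (x i)) (fun _ => p ^ e') =
        powerIdeal x (fun _ => p ^ (e + e')) := by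
      unfold powerIdeal
      congr 2
      ext i
      dsimp only
      rw [iterateFrobenius_def, ← pow_mul, ← pow_add]
    rw [e1, e2] at h1
    exact (length_pi_quot _ r).trans (h1.length_top_le (A := A))
  obtain ⟨L, hL⟩ := ENat.ne_top_iff_exists.mp hfin
  have const : ∀ (e' h : ℕ), 0 < e' → QC (Ideal.span (Set.range x))
        (powerIdeal x (fun _ => p ^ e') • (⊤ : Submodule S (Fin r → S))) ⊤ h → r * (p ^ e') ^ d ≤ h := by
    intro e' h he' H
    have it : ∀ k : ℕ, ((r ^ k : ℕ) : ℕ∞) * Module.length A (S ⧸ powerIdeal x (fun _ => p ^ (k * e'))) ≤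
        ((h ^ k * L : ℕ) : ℕ∞) := by
      intro k
      induction k with
      | zero =>
        have : powerIdeal x (fun _ => p ^ (0 * e')) = Ideal.span (Set.range x) := by
          simpa using QC.powerIdeal_one x
        rw [this, ← hL]; simp
      | succ k ih =>
        calc ((r ^ (k+1) : ℕ) : ℕ∞) * Module.length A (S ⧸ powerIdeal x (fun _ => p ^ ((k + 1) * e')))
            = (r ^ k : ℕ) * (r * Module.length A (S ⧸ powerIdeal x (fun _ => p ^ (k * e' + e')))) := by
              rw [add_mul, one_mul, pow_succ]; push_cast; ring
          _ ≤ (r ^ k : ℕ) * (h * Module.length A (S ⧸ powerIdeal x (fun _ => p ^ (k * e')))) := by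
              exact mul_le_mul' le_rfl (step _ _ _ H)
          _ = h * ((r ^ k : ℕ) * Module.length A (S ⧸ powerIdeal x (fun _ => p ^ (k * e')))) := by ring
          _ ≤ h * ((h ^ k * L : ℕ) : ℕ∞) := by gcongr
          _ = _ := by push_cast; ring
    obtain ⟨n0, hn0⟩ := Filter.eventually_atTop.mp hD
    refine nat_pow_compare (D := D * L) (k0 := n0) fun k hk => ?_
    have hkn : n0 ≤ p ^ (k * e') := by
      calc n0 ≤ k * e' := by nlinarith
        _ ≤ p ^ (k * e') := (Nat.lt_pow_self (by omega)).le
    have h2 : ((r ^ k * (p ^ (k * e')) ^ d : ℕ) : ℕ∞) ≤ ((D * (h ^ k * L) : ℕ) : ℕ∞) := by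
      calc ((r ^ k * (p ^ (k * e')) ^ d : ℕ) : ℕ∞) = ((r ^ k : ℕ) : ℕ∞) * (((p ^ (k * e')) ^ d : ℕ) : ℕ∞) := by
            push_cast; rfl
        _ ≤ ((r ^ k : ℕ) : ℕ∞) * (D * Module.length A (S ⧸ powerIdeal x (fun _ => p ^ (k * e')))) := by
            exact mul_le_mul' le_rfl (hn0 _ hkn)
        _ = D * (((r ^ k : ℕ) : ℕ∞) * Module.length A (S ⧸ powerIdeal x (fun _ => p ^ (k * e')))) := by ring
        _ ≤ D * ((h ^ k * L : ℕ) : ℕ∞) := by exact mul_le_mul' le_rfl (it k)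
        _ = _ := by push_cast; rfl
    have h3 : r ^ k * (p ^ (k * e')) ^ d ≤ D * (h ^ k * L) := by exact_mod_cast h2
    calc (r * (p ^ e') ^ d) ^ k = r ^ k * (p ^ (k * e')) ^ d := by
          rw [mul_pow, ← pow_mul, ← pow_mul, ← pow_mul]; congr 2; ring
      _ ≤ _ := h3
      _ = _ := by ring
  refine limit_arith (C := 0) ht ?_
  rw [Filter.frequently_atTop]
  intro n0
  refine ⟨p ^ (n0 + 1), ?_, 0, by simp, ?_⟩
  · exact (Nat.le_succ n0).trans (Nat.lt_pow_self (by omega)).le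
  · rw [mul_zero, add_zero]
    exact const _ _ (by omega) (H.to_const x ht _)

theorem ar_lemma {A N : Type*} [CommRing A] [IsNoetherianRing A] [AddCommGroup N] [Module A N]
    [Module.Finite A N] (I : Ideal A) (v : N) (hv : ∀ a : A, a • v = 0 → a = 0) :
    ∃ k, ∀ n, ∀ a : A, a • v ∈ I ^ (n + k) • (⊤ : Submodule A N) → a ∈ I ^ n := by
  obtain ⟨k, hk⟩ := I.exists_pow_inf_eq_pow_smul (Submodule.span A {v})
  refine ⟨k, fun n a ha => ?_⟩
  have h1 : a • v ∈ I ^ (n + k) • ⊤ ⊓ Submodule.span A {v} :=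
    ⟨ha, Submodule.smul_mem _ _ (Submodule.mem_span_singleton_self v)⟩
  rw [hk (n + k) (by omega), Nat.add_sub_cancel] at h1
  have h2 := Submodule.smul_mono le_rfl (inf_le_right : I ^ k • ⊤ ⊓ Submodule.span A {v} ≤ _) h1
  obtain ⟨b, hb, hbv⟩ := Submodule.mem_smul_span_singleton.mp h2
  have : a - b = 0 := hv _ (by rw [sub_smul, hbv, sub_self])
  rw [sub_eq_zero.mp this]; exact hb

theorem length_range_ge {A N : Type*} [CommRing A] [AddCommGroup N] [Module A N] (J : Ideal A)
    (Q : Submodule A N) (v : N) (h : ∀ a : A, a • v ∈ Q → a ∈ J) :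
    Module.length A (A ⧸ J) ≤ Module.length A (LinearMap.range (Q.mkQ ∘ₗ LinearMap.toSpanSingleton A N v)) := by
  set f := Q.mkQ ∘ₗ LinearMap.toSpanSingleton A N v
  have hk : LinearMap.ker f ≤ J := by
    intro a ha
    refine h a ?_
    exact (Submodule.Quotient.mk_eq_zero Q).mp ha
  rw [← f.quotKerEquivRange.length_eq]
  exact Module.length_le_of_surjective (Submodule.factor hk) (Submodule.factor_surjective hk)

theorem growth_lb (d : ℕ) : ∀ (A : Type u) [CommRing A] [IsLocalRing A] [IsNoetherianRing A] [IsDomain A],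
    (d : WithBot ℕ∞) ≤ ringKrullDim A →
    ∃ D : ℕ, ∀ᶠ n : ℕ in Filter.atTop,
      ((n ^ d : ℕ) : ℕ∞) ≤ D * Module.length A (A ⧸ IsLocalRing.maximalIdeal A ^ n) := by
  induction d with
  | zero =>
    intro A _ _ _ _ _
    refine ⟨1, ?_⟩
    filter_upwards [Filter.eventually_ge_atTop 1] with n hn
    have : Nontrivial (A ⧸ IsLocalRing.maximalIdeal A ^ n) := by
      refine Ideal.Quotient.nontrivial_iff.mpr fun h => ?_
      have := Ideal.pow_le_self (I := IsLocalRing.maximalIdeal A) (by omega : n ≠ 0)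
      rw [h] at this
      exact IsLocalRing.maximalIdeal.isMaximal A |>.ne_top (top_le_iff.mp this)
    have := Module.length_pos (R := A) (M := A ⧸ IsLocalRing.maximalIdeal A ^ n)
    simpa using Order.one_le_iff_pos.mpr this
  | succ d ih =>
    intro A _ _ _ _ hdim
    set m := IsLocalRing.maximalIdeal A
    obtain ⟨l, hl⟩ := Order.le_krullDim_iff.mp hdim
    let P := l ⟨1, by omega⟩
    have hP0 : (l ⟨0, by omega⟩) < P := l.strictMono (by simp [Fin.lt_def])
    obtain ⟨a, haP, ha0⟩ : ∃ a ∈ P.asIdeal, a ≠ 0 := by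
      by_contra hcon
      push Not at hcon
      have : P.asIdeal ≤ (l ⟨0, by omega⟩).asIdeal := fun a ha => by
        rw [hcon a ha]; exact zero_mem _
      exact hP0.not_ge this
    have : Nontrivial (A ⧸ P.asIdeal) := Ideal.Quotient.nontrivial_iff.mpr P.2.ne_top
    have hloc : IsLocalRing (A ⧸ P.asIdeal) :=
      IsLocalRing.of_surjective' (Ideal.Quotient.mk _) Ideal.Quotient.mk_surjective
    have hq : (d : WithBot ℕ∞) ≤ ringKrullDim (A ⧸ P.asIdeal) := by
      rw [ringKrullDim_quotient, Order.le_krullDim_iff]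
      refine ⟨LTSeries.mk d (fun i => ⟨l ⟨i.1 + 1, by omega⟩, ?_⟩) ?_, rfl⟩
      · show P.asIdeal ≤ (l ⟨i.1 + 1, by omega⟩).asIdeal
        exact l.monotone (by simp [Fin.le_def])
      · intro i j hij
        have hij' : i.1 < j.1 := hij
        exact l.strictMono (Fin.lt_def.mpr (Nat.add_lt_add_right hij' 1))
    obtain ⟨D, hD⟩ := ih (A ⧸ P.asIdeal) hq
    obtain ⟨k, hk⟩ := ar_lemma (N := A) m a (fun b hb => by
      rcases mul_eq_zero.mp hb with h | h
      · exact h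
      · exact absurd h ha0)
    -- make k positive
    have hk' : ∀ n, ∀ b : A, b • a ∈ m ^ (n + (k + 1)) • (⊤ : Submodule A A) → b ∈ m ^ n := fun n b hb =>
      hk n b (Submodule.smul_mono_left (Ideal.pow_le_pow_right (by omega)) hb)
    clear hk
    generalize hkk : k + 1 = K at hk'
    have hK : 0 < K := by omega
    set f : ℕ → ℕ∞ := fun n => Module.length A (A ⧸ m ^ n) with hf
    set g : ℕ → ℕ∞ := fun n => Module.length (A ⧸ P.asIdeal)
      ((A ⧸ P.asIdeal) ⧸ IsLocalRing.maximalIdeal (A ⧸ P.asIdeal) ^ n) with hg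
    have hmono : Monotone f := fun n n' h =>
      Module.length_le_of_surjective (Submodule.factor (Ideal.pow_le_pow_right h))
        (Submodule.factor_surjective _)
    have hstep : ∀ n, f n + g (n + K) ≤ f (n + K) := by
      intro n
      set Q : Submodule A A := m ^ (n + K) • ⊤ with hQ
      have hQ' : Q = m ^ (n + K) := by rw [hQ, smul_eq_mul, Ideal.mul_top]
      set φ := Q.mkQ ∘ₗ LinearMap.toSpanSingleton A A a
      have e1 : f (n + K) = Module.length A (A ⧸ Q) := by rw [hQ']
      rw [e1, Module.length_eq_add_of_exact (LinearMap.range φ).subtype (LinearMap.range φ).mkQ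
        (Submodule.subtype_injective _) (Submodule.mkQ_surjective _)
        (LinearMap.exact_subtype_mkQ _)]
      refine add_le_add (length_range_ge _ Q a (hk' n)) ?_
      rw [hg]
      dsimp only
      rw [← Module.length_eq_of_surjective (S := A) (R := A ⧸ P.asIdeal) Ideal.Quotient.mk_surjective]
      let ψ : A →ₗ[A] (A ⧸ P.asIdeal) ⧸ IsLocalRing.maximalIdeal (A ⧸ P.asIdeal) ^ (n + K) :=
        (Ideal.Quotient.mkₐ A _).toLinearMap ∘ₗ (Ideal.Quotient.mkₐ A P.asIdeal).toLinearMap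
      have hψ : Function.Surjective ψ :=
        Ideal.Quotient.mk_surjective.comp Ideal.Quotient.mk_surjective
      have hQk : Q ≤ LinearMap.ker ψ := by
        rw [hQ']
        intro z hz
        rw [LinearMap.mem_ker]
        refine Ideal.Quotient.eq_zero_iff_mem.mpr ?_
        have h1 : m.map (Ideal.Quotient.mk P.asIdeal) ≤ IsLocalRing.maximalIdeal (A ⧸ P.asIdeal) := by
          refine IsLocalRing.le_maximalIdeal ?_
          intro h
          have h2 : P.asIdeal ⊔ m = ⊤ := by
            have := Ideal.comap_map_of_surjective (Ideal.Quotient.mk P.asIdeal) Ideal.Quotient.mk_surjective m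
            rw [h, Ideal.comap_top] at this
            rw [this, sup_comm]
            congr 1
            exact (Ideal.mk_ker).symm
          rw [sup_eq_right.mpr (IsLocalRing.le_maximalIdeal P.2.ne_top)] at h2
          exact (IsLocalRing.maximalIdeal.isMaximal A).ne_top h2
        have h2 := Ideal.mem_map_of_mem (Ideal.Quotient.mk P.asIdeal) hz
        rw [Ideal.map_pow] at h2
        exact Ideal.pow_right_mono h1 _ h2
      refine Module.length_le_of_surjective (Submodule.liftQ _ (Submodule.liftQ Q ψ hQk) ?_) ?_
      · rintro _ ⟨b, rfl⟩
        rw [LinearMap.mem_ker]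
        show ψ (b • a) = 0
        rw [map_smul]
        have : ψ a = 0 := by
          show Ideal.Quotient.mk _ (Ideal.Quotient.mk P.asIdeal a) = 0
          rw [Ideal.Quotient.eq_zero_iff_mem.mpr haP, map_zero]
        rw [this, smul_zero]
      · intro z
        obtain ⟨b, rfl⟩ := hψ z
        exact ⟨Submodule.Quotient.mk (Submodule.Quotient.mk b), rfl⟩
    obtain ⟨n0, hn0⟩ := Filter.eventually_atTop.mp hD
    have hit : ∀ j M, n0 ≤ M → ((j * M ^ d : ℕ) : ℕ∞) ≤ D * f (M + j * K) := by
      intro j M hM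
      induction j with
      | zero => simp
      | succ j ih =>
        calc (((j + 1) * M ^ d : ℕ) : ℕ∞) = ((j * M ^ d : ℕ) : ℕ∞) + ((M ^ d : ℕ) : ℕ∞) := by
              push_cast; ring
          _ ≤ D * f (M + j * K) + (((M + j * K + K) ^ d : ℕ) : ℕ∞) := by
              refine add_le_add ih ?_
              exact_mod_cast Nat.pow_le_pow_left (by nlinarith) _
          _ ≤ D * f (M + j * K) + D * g (M + j * K + K) :=
              add_le_add le_rfl (hn0 _ (by nlinarith))
          _ = D * (f (M + j * K) + g (M + j * K + K)) := by ring
          _ ≤ D * f (M + j * K + K) := mul_le_mul' le_rfl (hstep _)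
          _ = _ := by congr 2; ring
    refine ⟨(4 * K) ^ (d + 1) * D, ?_⟩
    filter_upwards [Filter.eventually_ge_atTop (2 * K * (n0 + 1))] with n hn
    set q := n / (2 * K) with hq'
    have hq1 : n0 + 1 ≤ q := by
      rw [hq', Nat.le_div_iff_mul_le (by omega)]; linarith
    have hq2 : n < 2 * K * (q + 1) := by
      exact Nat.lt_mul_div_succ n (by omega)
    have hq3 : 2 * K * q ≤ n := Nat.mul_div_le n (2 * K)
    have h1 := hit q (q * K) (by nlinarith)
    calc ((n ^ (d + 1) : ℕ) : ℕ∞) ≤ (((4 * K) ^ (d + 1) * (q * (q * K) ^ d) : ℕ) : ℕ∞) := by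
          norm_cast
          calc n ^ (d + 1) ≤ (4 * K * q) ^ (d + 1) := Nat.pow_le_pow_left (by nlinarith) _
            _ = (4 * K) ^ (d + 1) * (q * q ^ d) := by rw [mul_pow, pow_succ q]; ring
            _ ≤ _ := by
              gcongr
              nlinarith
      _ = (((4 * K) ^ (d + 1) : ℕ) : ℕ∞) * ((q * (q * K) ^ d : ℕ) : ℕ∞) := by push_cast; rfl
      _ ≤ (((4 * K) ^ (d + 1) : ℕ) : ℕ∞) * (D * f (q * K + q * K)) := mul_le_mul' le_rfl h1
      _ ≤ (((4 * K) ^ (d + 1) : ℕ) : ℕ∞) * (D * f n) :=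
          mul_le_mul' le_rfl (mul_le_mul' le_rfl (hmono (by nlinarith)))
      _ = _ := by push_cast; ring

/-- growth for modules containing `A` -/
theorem growth_lb_module {A : Type u} [CommRing A] [IsLocalRing A] [IsNoetherianRing A] [IsDomain A]
    {d : ℕ} (hd : (d : WithBot ℕ∞) ≤ ringKrullDim A) {N : Type v} [AddCommGroup N] [Module A N]
    [Module.Finite A N] (v : N) (hv : ∀ a : A, a • v = 0 → a = 0) :
    ∃ D : ℕ, ∀ᶠ n : ℕ in Filter.atTop,
      ((n ^ d : ℕ) : ℕ∞) ≤ D * Module.length A (N ⧸ (IsLocalRing.maximalIdeal A ^ n • (⊤ : Submodule A N))) := by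
  obtain ⟨D, hD⟩ := growth_lb d A hd
  obtain ⟨k, hk⟩ := ar_lemma (IsLocalRing.maximalIdeal A) v hv
  obtain ⟨n0, hn0⟩ := Filter.eventually_atTop.mp hD
  refine ⟨2 ^ d * D, ?_⟩
  filter_upwards [Filter.eventually_ge_atTop (n0 + 2 * k)] with n hn
  obtain ⟨j, rfl⟩ : ∃ j, n = j + k := ⟨n - k, by omega⟩
  have h1 := (length_range_ge (IsLocalRing.maximalIdeal A ^ j) _ v (hk j)).trans
    (Module.length_le_of_injective _ (Submodule.subtype_injective _))
  calc (((j + k) ^ d : ℕ) : ℕ∞) ≤ ((2 ^ d * j ^ d : ℕ) : ℕ∞) := by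
        norm_cast
        rw [← mul_pow]
        exact Nat.pow_le_pow_left (by omega) _
    _ = ((2 ^ d : ℕ) : ℕ∞) * ((j ^ d : ℕ) : ℕ∞) := by push_cast; rfl
    _ ≤ ((2 ^ d : ℕ) : ℕ∞) * (D * Module.length A (A ⧸ IsLocalRing.maximalIdeal A ^ j)) :=
        mul_le_mul' le_rfl (hn0 _ (by omega))
    _ ≤ ((2 ^ d : ℕ) : ℕ∞) * (D * _) := mul_le_mul' le_rfl (mul_le_mul' le_rfl h1)
    _ = _ := by push_cast; ring

theorem powerIdeal_le_pow {S : Type*} [CommRing S] {d : ℕ} (x : Fin d → S) {m : Ideal S}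
    (hx : Ideal.span (Set.range x) ≤ m) (n : ℕ) : powerIdeal x (fun _ => n) ≤ m ^ n := by
  rw [powerIdeal, Ideal.span_le]
  rintro _ ⟨i, rfl⟩
  exact Ideal.pow_mem_pow (hx (Ideal.subset_span ⟨i, rfl⟩)) n

theorem length_quot_span_ne_top {A : Type u} [CommRing A] [IsLocalRing A] [IsNoetherianRing A]
    {d : ℕ} (x : Fin d → A)
    (hx : IsLocalRing.maximalIdeal A ≤ (Ideal.span (Set.range x)).radical) :
    Module.length A (A ⧸ Ideal.span (Set.range x)) ≠ ⊤ := by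
  obtain ⟨N, hN⟩ := Ideal.exists_pow_le_of_le_radical_of_fg hx (IsNoetherian.noetherian _)
  obtain ⟨h, hh⟩ := QC.exists_pow (IsLocalRing.maximalIdeal A) N
  have h1 := (hh.top_of_le hN).length_top_le (A := A)
  have h2 : Module.length A (A ⧸ IsLocalRing.maximalIdeal A) ≠ ⊤ := by
    have : IsSimpleModule A (A ⧸ IsLocalRing.maximalIdeal A) :=
      isSimpleModule_iff_quot_maximal.mpr ⟨_, IsLocalRing.maximalIdeal.isMaximal A, ⟨LinearEquiv.refl _ _⟩⟩
    rw [Module.length_eq_one]; simp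
  refine ne_top_of_le_ne_top ?_ h1
  exact WithTop.mul_ne_top (ENat.coe_ne_top _) h2

theorem length_finite_quot_ne_top {A : Type u} [CommRing A] [IsLocalRing A] [IsNoetherianRing A]
    {d : ℕ} (x : Fin d → A)
    (hx : IsLocalRing.maximalIdeal A ≤ (Ideal.span (Set.range x)).radical)
    {N : Type v} [AddCommGroup N] [Module A N] [Module.Finite A N] :
    Module.length A (N ⧸ (Ideal.span (Set.range x) • (⊤ : Submodule A N))) ≠ ⊤ := by
  obtain ⟨s, f, hf⟩ := Module.Finite.exists_fin' A N
  have h1 := (QC.free_chain x s 1).length_top_le (A := A)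
  rw [QC.powerIdeal_one] at h1
  have h2 : Module.length A (N ⧸ (Ideal.span (Set.range x) • (⊤ : Submodule A N))) ≤
      Module.length A ((Fin s → A) ⧸ (Ideal.span (Set.range x) • (⊤ : Submodule A (Fin s → A)))) := by
    refine Module.length_le_of_surjective (Submodule.mapQ _ _ f ?_) ?_
    · rw [← Submodule.map_le_iff_le_comap, Submodule.map_smul'']
      exact Submodule.smul_mono le_rfl le_top
    · intro z
      obtain ⟨z, rfl⟩ := Submodule.mkQ_surjective _ z
      obtain ⟨w, rfl⟩ := hf z
      exact ⟨Submodule.Quotient.mk w, rfl⟩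
  refine ne_top_of_le_ne_top ?_ (h2.trans h1)
  exact WithTop.mul_ne_top (ENat.coe_ne_top _) (length_quot_span_ne_top x hx)

theorem length_quot_map {A B : Type*} [CommRing A] [CommRing B] [Algebra A B] (I : Ideal A) :
    Module.length A (B ⧸ I.map (algebraMap A B)) = Module.length A (B ⧸ (I • (⊤ : Submodule A B))) := by
  rw [Ideal.smul_top_eq_map]
  exact (Submodule.Quotient.restrictScalarsEquiv A (I.map (algebraMap A B))).length_eq.symm

theorem key_of_finite {A : Type u} [CommRing A] [IsLocalRing A] [IsNoetherianRing A] [IsDomain A]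
    {d : ℕ} (hd : (d : WithBot ℕ∞) ≤ ringKrullDim A) (x : Fin d → A)
    (hxm : Ideal.span (Set.range x) ≤ IsLocalRing.maximalIdeal A)
    (hx : IsLocalRing.maximalIdeal A ≤ (Ideal.span (Set.range x)).radical)
    {B : Type v} [CommRing B] [Algebra A B] [Module.Finite A B]
    (hinj : Function.Injective (algebraMap A B)) (p : ℕ) [Fact p.Prime] [CharP B p]
    (r : ℕ) (t : Fin d → ℕ) (h : ℕ) (ht : ∀ i, 0 < t i)
    (H : QC (Ideal.span (Set.range fun i => algebraMap A B (x i)))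
      (powerIdeal (fun i => algebraMap A B (x i)) t • (⊤ : Submodule B (Fin r → B))) ⊤ h) :
    r * ∏ i, t i ≤ h := by
  obtain ⟨D, hD⟩ := growth_lb_module hd (1 : B) (fun a ha => by
    rw [Algebra.smul_def, mul_one] at ha
    exact (map_eq_zero_iff _ hinj).mp ha)
  have e1 : Ideal.span (Set.range fun i => algebraMap A B (x i)) =
      (Ideal.span (Set.range x)).map (algebraMap A B) := by
    rw [Ideal.map_span, ← Set.range_comp]; rfl
  refine charp_key (A := A) p (fun i => algebraMap A B (x i)) ?_ (D := D) ?_ r t h ht H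
  · rw [e1, length_quot_map]
    exact length_finite_quot_ne_top x hx
  · filter_upwards [hD] with n hn
    refine hn.trans (mul_le_mul' le_rfl ?_)
    rw [← QC.map_powerIdeal, length_quot_map]
    exact Module.length_le_of_surjective
      (Submodule.factor (Submodule.smul_mono_left (powerIdeal_le_pow x hxm n))) (Submodule.factor_surjective _)

namespace MvPowerSeries

theorem mem_pow_of_truncTotal {σ K : Type*} [Finite σ] [CommRing K] (f : MvPowerSeries σ K) (n : ℕ)
    (h : truncTotal n f = 0) : f ∈ (Ideal.span (Set.range X) : Ideal (MvPowerSeries σ K)) ^ n := by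
  set I := MvPolynomial.idealOfVars σ K
  let e := toAdicCompletionAlgEquiv σ K
  have h1 : e f ∈ (AdicCompletion.eval I (MvPolynomial σ K) n).ker := by
    rw [LinearMap.mem_ker, AdicCompletion.eval_apply]
    have : (e f).val n = _ := toAdicCompletion_apply_eq_mk_truncTotal (n := n) (p := f)
    rw [this, h]; rfl
  rw [← AdicCompletion.pow_smul_top_eq_ker_eval (MvPolynomial.idealOfVars_fg σ K)] at h1
  have h2 : f ∈ I ^ n • (⊤ : Submodule (MvPolynomial σ K) (MvPowerSeries σ K)) := by
    have := Submodule.mem_map_of_mem (f := e.symm.toLinearMap) h1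
    rw [Submodule.map_smul''] at this
    have h3 : e.symm.toLinearMap (e f) = f := e.symm_apply_apply f
    rw [h3] at this
    exact Submodule.smul_mono le_rfl le_top this
  rw [Ideal.smul_top_eq_map, Submodule.restrictScalars_mem, Ideal.map_pow] at h2
  convert h2 using 2
  have hI : I = Ideal.span (Set.range MvPolynomial.X) := rfl
  rw [hI, Ideal.map_span, ← Set.range_comp]
  congr 2
  ext1 i
  simp [algebraMap_apply']

theorem exists_poly_sub_mem {σ K : Type*} [Finite σ] [CommRing K] (f : MvPowerSeries σ K) (n : ℕ) :
    ∃ P : MvPolynomial σ K, f - (P : MvPowerSeries σ K) ∈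
      (Ideal.span (Set.range X) : Ideal (MvPowerSeries σ K)) ^ n := by
  refine ⟨truncTotal n f, mem_pow_of_truncTotal _ _ ?_⟩
  rw [map_sub, sub_eq_zero]
  ext m
  by_cases hm : Finsupp.degree m < n
  · rw [coeff_truncTotal _ hm, coeff_truncTotal _ hm, MvPolynomial.coeff_coe, coeff_truncTotal _ hm]
  · rw [coeff_truncTotal_eq_zero _ (not_lt.mp hm), coeff_truncTotal_eq_zero _ (not_lt.mp hm)]

theorem hom_ext_adic {σ K S : Type*} [Finite σ] [CommRing K] [CommRing S] (J : Ideal S) [IsHausdorff J S]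
    (φ ψ : MvPowerSeries σ K →+* S) (hC : ∀ k, φ (C k) = ψ (C k)) (hX : ∀ i, φ (X i) = ψ (X i))
    (hJ : ∀ i, φ (X i) ∈ J) : φ = ψ := by
  have key : ∀ χ : MvPowerSeries σ K →+* S, (∀ i, χ (X i) ∈ J) → ∀ n f,
      f ∈ (Ideal.span (Set.range X) : Ideal (MvPowerSeries σ K)) ^ n → χ f ∈ J ^ n := by
    intro χ hχ n f hf
    have h1 := Ideal.mem_map_of_mem χ hf
    rw [Ideal.map_pow] at h1
    refine Ideal.pow_right_mono ?_ n h1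
    rw [Ideal.map_span, Ideal.span_le]
    rintro _ ⟨_, ⟨i, rfl⟩, rfl⟩
    exact hχ i
  have hpoly : ∀ P : MvPolynomial σ K, φ (P : MvPowerSeries σ K) = ψ (P : MvPowerSeries σ K) := by
    intro P
    have : φ.comp (MvPolynomial.coeToMvPowerSeries.ringHom) = ψ.comp (MvPolynomial.coeToMvPowerSeries.ringHom) := by
      apply MvPolynomial.ringHom_ext
      · intro r; simpa using hC r
      · intro i; simpa using hX i
    exact DFunLike.congr_fun this P
  ext f
  rw [← sub_eq_zero]
  refine IsHausdorff.haus (I := J) inferInstance _ fun n => ?_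
  rw [SModEq.zero, smul_eq_mul, Ideal.mul_top]
  obtain ⟨P, hP⟩ := exists_poly_sub_mem f n
  have h1 := sub_mem (key φ hJ n _ hP) (key ψ (fun i => hX i ▸ hJ i) n _ hP)
  rw [map_sub, map_sub, hpoly P, sub_sub_sub_cancel_right] at h1
  exact h1

theorem exists_hom_adic {σ K S : Type*} [Finite σ] [CommRing K] [CommRing S] (J : Ideal S) [IsAdicComplete J S]
    (c : K →+* S) (x : σ → S) (hJ : ∀ i, x i ∈ J) :
    ∃ φ : MvPowerSeries σ K →+* S, (∀ k, φ (C k) = c k) ∧ (∀ i, φ (X i) = x i) := by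
  set I := MvPolynomial.idealOfVars σ K
  let g : MvPolynomial σ K →+* S := MvPolynomial.eval₂Hom c x
  have hg : ∀ n, I ^ n ≤ (J ^ n).comap g := by
    intro n
    rw [← Ideal.map_le_iff_le_comap, Ideal.map_pow]
    refine Ideal.pow_right_mono ?_ n
    have hI : I = Ideal.span (Set.range MvPolynomial.X) := rfl
    rw [hI, Ideal.map_span, Ideal.span_le]
    rintro _ ⟨_, ⟨i, rfl⟩, rfl⟩
    simpa [g] using hJ i
  let f : (n : ℕ) → MvPowerSeries σ K →+* S ⧸ J ^ n := fun n =>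
    (Ideal.quotientMap (J ^ n) g (hg n)).comp (truncTotalAlgHom σ K n : MvPowerSeries σ K →+* _)
  have hf' : ∀ n a, f n a = Ideal.Quotient.mk _ (g (truncTotal n a)) := fun n a => rfl
  have hf : ∀ {m n : ℕ} (hle : m ≤ n), (Ideal.Quotient.factorPow J hle).comp (f n) = f m := by
    intro m n hle
    ext a
    rw [RingHom.comp_apply, hf', hf']
    show Ideal.Quotient.mk _ _ = _
    rw [Ideal.Quotient.eq, ← map_sub]
    exact hg m (truncTotal_sub_truncTotal_mem_pow_idealOfVars hle le_rfl a)
  have hpol : ∀ P : MvPolynomial σ K, IsAdicComplete.liftRingHom J f hf (P : MvPowerSeries σ K) = g P := by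
    intro P
    rw [← sub_eq_zero]
    refine IsHausdorff.haus (I := J) inferInstance _ fun n => ?_
    rw [SModEq.zero, smul_eq_mul, Ideal.mul_top, ← Ideal.Quotient.eq_zero_iff_mem, map_sub,
      IsAdicComplete.mk_liftRingHom, hf', sub_eq_zero, Ideal.Quotient.eq, ← map_sub]
    refine hg n ((MvPolynomial.mem_pow_idealOfVars_iff' ..).mpr fun x hx => ?_)
    simp [coeff_truncTotal _ hx]
  refine ⟨IsAdicComplete.liftRingHom J f hf, fun k => ?_, fun i => ?_⟩
  · rw [← MvPolynomial.coe_C, hpol]; simp [g]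
  · rw [← MvPolynomial.coe_X, hpol]; simp [g]

end MvPowerSeries

theorem newton_fix {B : Type*} [CommRing B] (I : Ideal B) [IsAdicComplete I B] (κ : B) (hκ : κ ∈ I)
    (k : Polynomial B) : ∃ z ∈ I, κ + z + z ^ 2 * k.eval z = 0 := by
  let T : B → B := fun z => - κ - z ^ 2 * k.eval z
  let s : ℕ → B := fun n => T^[n] 0
  have hs : ∀ n, s (n + 1) = T (s n) := fun n => Function.iterate_succ_apply' T n 0
  have hsI : ∀ n, s n ∈ I := by
    intro n
    induction n with
    | zero => exact I.zero_mem
    | succ n ih =>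
      rw [hs]
      exact sub_mem (I.neg_mem hκ) (I.mul_mem_right _ (by rw [sq]; exact I.mul_mem_right _ ih))
  have hT : ∀ n, ∀ a ∈ I, ∀ b ∈ I, a - b ∈ I ^ n → T a - T b ∈ I ^ (n + 1) := by
    intro n a ha b hb hab
    obtain ⟨c, hc⟩ := Polynomial.sub_dvd_eval_sub a b k
    have : T a - T b = (a - b) * (-(a + b) * k.eval a - b ^ 2 * c) := by
      have : k.eval a = k.eval b + (a - b) * c := by rw [← hc]; ring
      simp only [T, this]; ring
    rw [this, pow_succ]
    refine Ideal.mul_mem_mul hab (sub_mem (I.mul_mem_right _ (I.neg_mem (I.add_mem ha hb)))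
      (I.mul_mem_right _ (by rw [sq]; exact I.mul_mem_right _ hb)))
  have hstep : ∀ n, s (n + 1) - s n ∈ I ^ n := by
    intro n
    induction n with
    | zero => simp
    | succ n ih => rw [hs (n + 1), hs n]; rw [hs n] at ih; exact hT n _ (by rw [← hs]; exact hsI _) _ (hsI n) ih
  have hcau : ∀ {m n : ℕ}, m ≤ n → s m ≡ s n [SMOD (I ^ m • ⊤ : Submodule B B)] := by
    intro m n hmn
    rw [SModEq.sub_mem, smul_eq_mul, Ideal.mul_top, ← neg_mem_iff, neg_sub]
    induction n, hmn using Nat.le_induction with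
    | base => simp
    | succ n hmn ih =>
      have := add_mem (Ideal.pow_le_pow_right hmn (hstep n)) ih
      simpa using this
  obtain ⟨z, hz⟩ := IsPrecomplete.prec (I := I) (M := B) inferInstance hcau
  have hz' : ∀ n, s n - z ∈ I ^ n := by
    intro n
    have := hz n
    rwa [SModEq.sub_mem, smul_eq_mul, Ideal.mul_top] at this
  have hzI : z ∈ I := by
    have := sub_mem (hsI 1) (by simpa using hz' 1)
    simpa using this
  refine ⟨z, hzI, ?_⟩
  have : z - T z = 0 := by
    refine IsHausdorff.haus (I := I) inferInstance _ fun n => ?_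
    rw [SModEq.zero, smul_eq_mul, Ideal.mul_top]
    have h1 := sub_mem (hT n _ (hsI n) _ hzI (hz' n)) (hs n ▸ hz' (n + 1))
    have h2 : T (s n) - T z - (T (s n) - z) = z - T z := by ring
    rw [h2] at h1
    exact Ideal.pow_le_pow_right (Nat.le_succ n) h1
  simp only [T] at this
  linear_combination this

/-- Newton lifting of an approximate root. -/
theorem newton_lift {B : Type*} [CommRing B] (I : Ideal B) [IsAdicComplete I B] (G : Polynomial B) (w T δ c : B)
    (hT : T ∈ I) (h : G.eval w = T * (G.derivative.eval w ^ 2 * δ) * c) :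
    ∃ z, G.eval (w + G.derivative.eval w * (T * δ * z)) = 0 := by
  set a := G.derivative.eval w with ha
  obtain ⟨k, hk⟩ := (G.map Polynomial.C).binomExpansion (Polynomial.C w) (Polynomial.C a * Polynomial.X)
  obtain ⟨z, hz, hz0⟩ := newton_fix I (T * δ * c) (I.mul_mem_right _ (I.mul_mem_right _ hT)) k
  have hexp : ∀ z, G.eval (w + a * z) = a ^ 2 * (T * δ * c + z + z ^ 2 * k.eval z) := by
    intro z
    have := congrArg (Polynomial.eval z) hk
    simp only [Polynomial.eval_add, Polynomial.eval_mul, Polynomial.eval_pow, Polynomial.eval_C,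
      Polynomial.eval_X, Polynomial.derivative_map] at this
    have e1 : (G.map Polynomial.C).eval (Polynomial.C w + Polynomial.C a * Polynomial.X) = G.comp (Polynomial.C w + Polynomial.C a * Polynomial.X) := by
      rw [Polynomial.eval_map]; rfl
    have e2 : (G.map Polynomial.C).eval (Polynomial.C w) = Polynomial.C (G.eval w) := by
      rw [Polynomial.eval_map]; exact Polynomial.eval₂_hom _ _
    have e3 : (G.derivative.map Polynomial.C).eval (Polynomial.C w) = Polynomial.C a := by
      rw [Polynomial.eval_map]; exact Polynomial.eval₂_hom _ _
    rw [e1, e2, e3, Polynomial.eval_comp] at this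
    simp only [Polynomial.eval_add, Polynomial.eval_mul, Polynomial.eval_pow, Polynomial.eval_C,
      Polynomial.eval_X] at this
    rw [this, h]; ring
  obtain ⟨u, hu⟩ : IsUnit (1 + z * k.eval z) := by
    have h1 := Ideal.mem_jacobson_bot.mp (IsAdicComplete.le_jacobson_bot I hz) (k.eval z)
    rwa [add_comm] at h1
  refine ⟨- c * ((u⁻¹ : Bˣ) : B), ?_⟩
  have hzz : T * δ * (- c * ((u⁻¹ : Bˣ) : B)) = z := by
    have : z * (u : B) = - (T * δ * c) := by rw [hu]; linear_combination hz0
    rw [← Units.mul_left_inj u]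
    rw [this]
    calc _ = T * δ * (- c) * (((u⁻¹ : Bˣ) : B) * u) := by ring
      _ = _ := by rw [Units.inv_mul]; ring
  rw [hzz, hexp, hz0, mul_zero]

/-- Extending a ring hom along clearing of denominators. -/
theorem hom_of_data {E B κ : Type*} [CommRing E] [CommRing B] [IsDomain B] {Λ : Type*} [CommRing Λ]
    (f : Polynomial Λ →+* E) (f' : Polynomial Λ →+* B) (hker : ∀ H, f H = 0 → f' H = 0)
    (δ : Polynomial Λ) (hδ : f' δ ≠ 0)
    (g : κ → E) (hg : Algebra.adjoin ℤ (Set.range g) = ⊤) (ε : κ → B) (p : κ → Polynomial Λ)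
    (h1 : ∀ k, f δ * g k = f (p k)) (h2 : ∀ k, f' δ * ε k = f' (p k)) :
    ∃ φ : E →+* B, ∀ k, φ (g k) = ε k := by
  let F1 : MvPolynomial κ ℤ →ₐ[ℤ] E := MvPolynomial.aeval g
  let F2 : MvPolynomial κ ℤ →ₐ[ℤ] B := MvPolynomial.aeval ε
  have hsurj : Function.Surjective F1 := by
    rw [← AlgHom.range_eq_top, ← hg, Algebra.adjoin_range_eq_range_aeval]
  have key : ∀ q, ∃ N H, f δ ^ N * F1 q = f H ∧ f' δ ^ N * F2 q = f' H := by
    intro q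
    induction q using MvPolynomial.induction_on with
    | C a => exact ⟨0, (a : Polynomial Λ), by simp, by simp⟩
    | add p q hp hq =>
      obtain ⟨N, H, h, h'⟩ := hp
      obtain ⟨N2, H2, k, k'⟩ := hq
      refine ⟨N + N2, δ ^ N2 * H + δ ^ N * H2, ?_, ?_⟩
      · simp only [map_add, map_mul, map_pow, ← h, ← k]; ring
      · simp only [map_add, map_mul, map_pow, ← h', ← k']; ring
    | mul_X q i hq =>
      obtain ⟨N, H, h, h'⟩ := hq
      refine ⟨N + 1, H * p i, ?_, ?_⟩
      · simp only [map_mul, ← h, ← h1]; simp only [F1, MvPolynomial.aeval_X]; ring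
      · simp only [map_mul, ← h', ← h2]; simp only [F2, MvPolynomial.aeval_X]; ring
  have hle : RingHom.ker (F1 : MvPolynomial κ ℤ →+* E) ≤ RingHom.ker (F2 : MvPolynomial κ ℤ →+* B) := by
    intro q hq
    obtain ⟨N, H, h, h'⟩ := key q
    have hq' : F1 q = 0 := hq
    rw [hq', mul_zero] at h
    rw [hker H h.symm] at h'
    exact (mul_eq_zero.mp h').resolve_left (pow_ne_zero _ hδ)
  refine ⟨RingHom.liftOfSurjective (F1 : MvPolynomial κ ℤ →+* E) hsurj ⟨(F2 : MvPolynomial κ ℤ →+* B), hle⟩, fun k => ?_⟩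
  have := RingHom.liftOfRightInverse_comp_apply (F1 : MvPolynomial κ ℤ →+* E) _ (Function.rightInverse_surjInv hsurj) ⟨(F2 : MvPolynomial κ ℤ →+* B), hle⟩ (MvPolynomial.X k)
  simpa [F1, F2] using this

theorem lift_side {E B κ Λ : Type*} [CommRing E] [CommRing B] [IsDomain B] [CommRing Λ]
    (f1 : Λ →+* E) (w : E) (G : Polynomial Λ) (hG : ∀ H : Polynomial Λ, H.eval₂ f1 w = 0 → G ∣ H)
    (δ : Λ) (g : κ → E) (hg : Algebra.adjoin ℤ (Set.range g) = ⊤) (p : κ → Polynomial Λ)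
    (hp : ∀ k, f1 δ * g k = (p k).eval₂ f1 w)
    (I : Ideal B) [IsAdicComplete I B] (f0 : Λ →+* B) (w₀ T P Q : B) (hT : T ∈ I) (hP0 : P ≠ 0) (hQ : IsUnit Q)
    (e₀ : κ → B) (h1 : T * P ∣ G.eval₂ f0 w₀) (h2 : (G.derivative.eval₂ f0 w₀) ^ 2 * f0 δ = P * Q)
    (h3 : ∀ k, T * P ∣ f0 δ * e₀ k - (p k).eval₂ f0 w₀) :
    ∃ φ : E →+* B, ∀ k, T ∣ φ (g k) - e₀ k := by
  obtain ⟨q, rfl⟩ := hQ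
  set a := G.derivative.eval₂ f0 w₀ with ha
  have hPa : P = a ^ 2 * f0 δ * ((q⁻¹ : Bˣ) : B) := by rw [h2, mul_assoc, Units.mul_inv, mul_one]
  have hδ : f0 δ ≠ 0 := by rintro h; rw [h, mul_zero, zero_mul] at hPa; exact hP0 hPa
  obtain ⟨c, hc⟩ := h1
  have hda : (G.map f0).derivative.eval w₀ = a := by
    rw [Polynomial.derivative_map, Polynomial.eval_map]
  obtain ⟨z, hz⟩ := newton_lift I (G.map f0) w₀ T (f0 δ) (((q⁻¹ : Bˣ) : B) * c) hT (by
    rw [hda, Polynomial.eval_map, hc]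
    nth_rewrite 1 [hPa]
    ring)
  rw [hda, Polynomial.eval_map] at hz
  set w' := w₀ + a * (T * f0 δ * z) with hw'
  have hε : ∀ k, ∃ ε, f0 δ * ε = (p k).eval₂ f0 w' ∧ T ∣ ε - e₀ k := by
    intro k
    obtain ⟨s, hs⟩ := h3 k
    obtain ⟨r, hr⟩ := Polynomial.sub_dvd_eval_sub w' w₀ ((p k).map f0)
    rw [Polynomial.eval_map, Polynomial.eval_map] at hr
    refine ⟨e₀ k + T * (a * z * r - a ^ 2 * ((q⁻¹ : Bˣ) : B) * s), ?_, ?_⟩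
    · have : w' - w₀ = a * (T * f0 δ * z) := by rw [hw']; ring
      rw [this] at hr
      rw [hPa] at hs
      linear_combination hs - hr
    · simp
  choose ε hε1 hε2 using hε
  obtain ⟨φ, hφ⟩ := hom_of_data (Polynomial.eval₂RingHom f1 w) (Polynomial.eval₂RingHom f0 w') (by
      intro H hH
      obtain ⟨H', rfl⟩ := hG H hH
      rw [map_mul]
      have : Polynomial.eval₂RingHom f0 w' G = 0 := hz
      rw [this, zero_mul]) (Polynomial.C δ) (by simpa using hδ) g hg ε p
      (fun k => by simpa using hp k) (fun k => by simpa using hε1 k)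
  exact ⟨φ, fun k => by rw [hφ]; exact hε2 k⟩

theorem field_aux {F : Type*} [Field F] (α Y Z : F) (hY : Y ≠ 0) (hZ : Z ≠ 0) :
    α = Y⁻¹ * Z⁻¹ * (Y * (α * Z)) := by
  field_simp

theorem prim_data_alg {Λ E κ : Type*} [CommRing Λ] [IsDomain Λ] [IsIntegrallyClosed Λ] [CharZero Λ]
    [CommRing E] [IsDomain E] [Algebra Λ E] [FaithfulSMul Λ E] [Algebra.IsAlgebraic Λ E] [Algebra.FiniteType Λ E]
    [Finite κ] (g : κ → E) :
    ∃ (w : E) (G : Polynomial Λ) (δ : Λ) (p : κ → Polynomial Λ),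
      (∀ H : Polynomial Λ, Polynomial.aeval w H = 0 → G ∣ H) ∧ Polynomial.aeval w G = 0 ∧
      Polynomial.aeval w G.derivative ≠ 0 ∧ δ ≠ 0 ∧ ∀ k, algebraMap Λ E δ * g k = Polynomial.aeval w (p k) := by
  classical
  let k := FractionRing Λ
  let L := FractionRing E
  let : Algebra k L := FractionRing.liftAlgebra Λ L
  have : IsScalarTower Λ k L := FractionRing.isScalarTower_liftAlgebra Λ L
  have : Algebra.IsAlgebraic k L := by
    have := (IsFractionRing.isAlgebraic_iff' Λ E L).1 inferInstance
    exact ⟨fun _ => (IsFractionRing.isAlgebraic_iff Λ k L).1 (Algebra.IsAlgebraic.isAlgebraic _)⟩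
  have : CharZero k := charZero_of_injective_algebraMap (IsFractionRing.injective Λ k)
  have : Algebra.EssFiniteType E L := Algebra.EssFiniteType.of_isLocalization L (nonZeroDivisors E)
  have : Algebra.EssFiniteType Λ L := Algebra.EssFiniteType.comp Λ E L
  have : Algebra.EssFiniteType k L := Algebra.EssFiniteType.of_comp Λ k L
  have : FiniteDimensional k L := by
    obtain ⟨s, hs⟩ := IntermediateField.fg_top k L
    have := IntermediateField.finiteDimensional_adjoin (K := k) (L := L) (S := (s : Set L))
      (fun x _ => Algebra.IsIntegral.isIntegral x)
    rw [hs] at this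
    exact Module.Finite.equiv (IntermediateField.topEquiv (F := k) (E := L)).toLinearEquiv
  obtain ⟨α, hα⟩ := Field.exists_primitive_element k L
  -- multiply α into E
  obtain ⟨w, hw, hwtop⟩ : ∃ w : E, IsIntegral Λ w ∧ IntermediateField.adjoin k {algebraMap E L w} = ⊤ := by
    obtain ⟨e, ⟨_, ⟨l, hl, rfl⟩⟩, he⟩ := IsLocalization.exists_mk'_eq (Algebra.algebraMapSubmonoid E (nonZeroDivisors Λ)) α
    obtain ⟨y, hy, hye⟩ := (Algebra.IsAlgebraic.isAlgebraic (R := Λ) e).exists_integral_multiple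
    refine ⟨y • e, hye, ?_⟩
    rw [eq_top_iff, ← hα, IntermediateField.adjoin_simple_le_iff]
    have h1 : algebraMap E L (y • e) ∈ IntermediateField.adjoin k {algebraMap E L (y • e)} :=
      IntermediateField.mem_adjoin_simple_self k _
    have h2 : algebraMap Λ L y ≠ 0 := by
      rw [IsScalarTower.algebraMap_apply Λ E L]
      simpa using hy
    have h3 : algebraMap Λ L l ≠ 0 := by
      rw [IsScalarTower.algebraMap_apply Λ E L]
      simpa using nonZeroDivisors.ne_zero hl
    have h4 : α = algebraMap k L ((algebraMap Λ k y)⁻¹ * (algebraMap Λ k l)⁻¹) * algebraMap E L (y • e) := by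
      have h5 : α * algebraMap Λ L l = algebraMap E L e := by
        rw [← he, IsScalarTower.algebraMap_apply Λ E L]; exact IsLocalization.mk'_spec _ _ _
      rw [map_mul, map_inv₀, map_inv₀, ← IsScalarTower.algebraMap_apply, ← IsScalarTower.algebraMap_apply,
        Algebra.smul_def, map_mul, ← IsScalarTower.algebraMap_apply, ← h5]
      exact field_aux _ _ _ h2 h3
    rw [h4]
    exact mul_mem (IntermediateField.algebraMap_mem _ _) h1
  have hdvd : ∀ H : Polynomial Λ, Polynomial.aeval w H = 0 → minpoly Λ w ∣ H :=
    fun H hH => minpoly.isIntegrallyClosed_dvd hw hH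
  have hk : ∀ i, ∃ (δ : Λ) (p : Polynomial Λ), δ ≠ 0 ∧ algebraMap Λ E δ * g i = Polynomial.aeval w p := by
    intro i
    have h1 : algebraMap E L (g i) ∈ IntermediateField.adjoin k {algebraMap E L w} := by rw [hwtop]; trivial
    rw [← IntermediateField.mem_toSubalgebra, IntermediateField.adjoin_simple_toSubalgebra_of_isAlgebraic
      (Algebra.IsAlgebraic.isAlgebraic _), Algebra.adjoin_singleton_eq_range_aeval] at h1
    obtain ⟨q, hq⟩ := h1
    obtain ⟨b, hb, hbq⟩ := IsLocalization.integerNormalization_spec (nonZeroDivisors Λ) q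
    refine ⟨b, IsLocalization.integerNormalization (nonZeroDivisors Λ) q, nonZeroDivisors.ne_zero hb, ?_⟩
    apply IsFractionRing.injective E L
    have h2 := congrArg (Polynomial.aeval (algebraMap E L w)) hbq
    rw [Polynomial.aeval_map_algebraMap, Polynomial.aeval_algebraMap_apply] at h2
    rw [h2, map_mul, ← IsScalarTower.algebraMap_apply]
    have h3 : b • q = Polynomial.C (algebraMap Λ k b) * q := by
      rw [← Polynomial.smul_eq_C_mul, algebraMap_smul]
    rw [h3, map_mul, Polynomial.aeval_C, ← IsScalarTower.algebraMap_apply, ← hq]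
    rfl
  choose δ p hδ hp using hk
  have := Fintype.ofFinite κ
  refine ⟨w, minpoly Λ w, ∏ i, δ i, fun i => Polynomial.C (∏ j ∈ Finset.univ.erase i, δ j) * p i, hdvd, minpoly.aeval Λ w, ?_, ?_, ?_⟩
  · intro h
    have h1 := hdvd _ h
    have hpos := minpoly.natDegree_pos hw
    have h2 := Polynomial.natDegree_le_of_dvd h1 (by
      intro h0
      have := Polynomial.derivative_eq_zero.mp h0
      omega)
    have := Polynomial.natDegree_derivative_lt (p := minpoly Λ w) (by omega)
    omega
  · exact Finset.prod_ne_zero_iff.mpr fun i _ => hδ i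
  · intro i
    rw [map_mul, Polynomial.aeval_C, ← hp, ← mul_assoc, ← map_mul, Finset.prod_erase_mul _ _ (Finset.mem_univ i)]

theorem prim_data {E : Type u} {κ : Type*} [CommRing E] [IsDomain E] [CharZero E] [Finite κ]
    (g : κ → E) (hg : Algebra.adjoin ℤ (Set.range g) = ⊤) :
    ∃ (ι : Type u) (_ : Finite ι) (y : ι → E) (w : E) (G : Polynomial (MvPolynomial ι ℤ)) (δ : MvPolynomial ι ℤ)
      (p : κ → Polynomial (MvPolynomial ι ℤ)),
      (∀ H, Polynomial.eval₂ (MvPolynomial.aeval y : _ →ₐ[ℤ] E).toRingHom w H = 0 → G ∣ H) ∧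
      Polynomial.eval₂ (MvPolynomial.aeval y : _ →ₐ[ℤ] E).toRingHom w G = 0 ∧
      Polynomial.eval₂ (MvPolynomial.aeval y : _ →ₐ[ℤ] E).toRingHom w G.derivative ≠ 0 ∧
      MvPolynomial.aeval y δ ≠ 0 ∧
      ∀ k, MvPolynomial.aeval y δ * g k = Polynomial.eval₂ (MvPolynomial.aeval y : _ →ₐ[ℤ] E).toRingHom w (p k) := by
  have : Algebra.IsAlgebraic (Algebra.adjoin ℤ (Set.range g)) E := by
    rw [hg]
    exact ⟨fun a => isAlgebraic_algebraMap (⟨a, trivial⟩ : (⊤ : Subalgebra ℤ E))⟩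
  have : FaithfulSMul ℤ E := (faithfulSMul_iff_algebraMap_injective ℤ E).mpr (by
    simpa using Int.cast_injective)
  obtain ⟨t, hts, ht⟩ := exists_isTranscendenceBasis_subset (R := ℤ) (Set.range g)
  have : Finite t := (Set.finite_range g).subset hts
  let f1 : MvPolynomial t ℤ →ₐ[ℤ] E := MvPolynomial.aeval (Subtype.val : t → E)
  let : Algebra (MvPolynomial t ℤ) E := f1.toRingHom.toAlgebra
  have hinj : Function.Injective f1 := ht.1
  have : IsScalarTower ℤ (MvPolynomial t ℤ) E := IsScalarTower.of_algebraMap_eq (fun z => (f1.commutes z).symm)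
  have : FaithfulSMul (MvPolynomial t ℤ) E := (faithfulSMul_iff_algebraMap_injective _ E).mpr hinj
  have : Algebra.FiniteType ℤ E := ⟨by
    rw [← hg]; exact ⟨(Set.finite_range g).toFinset, by simp⟩⟩
  have : Algebra.FiniteType (MvPolynomial t ℤ) E := Algebra.FiniteType.of_restrictScalars_finiteType ℤ _ _
  have : Algebra.IsAlgebraic (MvPolynomial t ℤ) E := by
    have := ht.isAlgebraic
    let e := ht.1.aevalEquiv
    refine Algebra.IsAlgebraic.of_ringHom_of_comp_eq (S := Algebra.adjoin ℤ (Set.range (Subtype.val : t → E))) (B := E)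
      e.toRingEquiv.toRingHom (RingHom.id E) e.surjective Function.injective_id ?_
    refine RingHom.ext fun a => ?_
    exact ht.1.algebraMap_aevalEquiv a
  obtain ⟨w, G, δ, p, h1, h2, h3, h4, h5⟩ := prim_data_alg (Λ := MvPolynomial t ℤ) g
  exact ⟨t, inferInstance, Subtype.val, w, G, δ, p, h1, h2, h3, fun h => h4 (hinj (h.trans (map_zero _).symm)), h5⟩

/-- Evaluation of a polynomial over `MvPolynomial ι ℤ`. -/
noncomputable def EV {ι S : Type*} [CommRing S] (y : ι → S) (w : S) : Polynomial (MvPolynomial ι ℤ) →+* S :=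
  Polynomial.eval₂RingHom (MvPolynomial.aeval y : _ →ₐ[ℤ] S).toRingHom w

theorem EV_apply {ι S : Type*} [CommRing S] (y : ι → S) (w : S) (H : Polynomial (MvPolynomial ι ℤ)) :
    EV y w H = Polynomial.eval₂ (MvPolynomial.aeval y : _ →ₐ[ℤ] S).toRingHom w H := rfl

theorem EV_C {ι S : Type*} [CommRing S] (y : ι → S) (w : S) (δ : MvPolynomial ι ℤ) :
    EV y w (Polynomial.C δ) = MvPolynomial.aeval y δ := by
  simp [EV]

theorem hom_EV {ι S T : Type*} [CommRing S] [CommRing T] (F : S →+* T) (y : ι → S) (w : S)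
    (H : Polynomial (MvPolynomial ι ℤ)) : F (EV y w H) = EV (fun i => F (y i)) (F w) H := by
  rw [EV_apply, EV_apply, Polynomial.hom_eval₂]
  congr 1
  apply MvPolynomial.ringHom_ext
  · intro r; simp
  · intro i; simp

theorem EV_congr {ι S : Type*} [CommRing S] (D : S) (y y' : ι → S) (w w' : S) (hy : ∀ i, D ∣ y i - y' i)
    (hw : D ∣ w - w') (H : Polynomial (MvPolynomial ι ℤ)) : D ∣ EV y w H - EV y' w' H := by
  have key : ∀ a b : S, Ideal.Quotient.mk (Ideal.span {D}) a = Ideal.Quotient.mk (Ideal.span {D}) b ↔ D ∣ a - b := by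
    intro a b
    rw [Ideal.Quotient.eq, Ideal.mem_span_singleton]
  rw [← key, hom_EV, hom_EV, (key _ _).mpr hw]
  congr 2
  funext i
  exact (key _ _).mpr (hy i)

theorem distinguished_rem {A : Type*} [CommRing A] (I : Ideal A) [IsAdicComplete I A] (D : Polynomial A)
    (hD : D.IsDistinguishedAt I) (f : PowerSeries A) :
    ∃ r : Polynomial A, (D : PowerSeries A) ∣ f - r := by
  obtain ⟨q, hq⟩ := hD.algEquivQuotient.surjective (Ideal.Quotient.mk _ f)
  obtain ⟨r, rfl⟩ := Ideal.Quotient.mk_surjective q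
  refine ⟨r, ?_⟩
  rw [← Ideal.mem_span_singleton, ← Ideal.Quotient.eq, ← hq]
  rfl

theorem distinguished_dvd {A : Type*} [CommRing A] (I : Ideal A) [IsAdicComplete I A] (D : Polynomial A)
    (hD : D.IsDistinguishedAt I) (f : Polynomial A) (h : (D : PowerSeries A) ∣ f) : D ∣ f := by
  rw [← Ideal.mem_span_singleton, ← Ideal.Quotient.eq_zero_iff_mem]
  apply hD.algEquivQuotient.injective
  rw [map_zero, ← Ideal.mem_span_singleton, ← Ideal.Quotient.eq_zero_iff_mem] at *
  exact h

theorem coe_EV {A ι : Type*} [CommRing A] (y : ι → Polynomial A) (w : Polynomial A)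
    (H : Polynomial (MvPolynomial ι ℤ)) :
    ((EV y w H : Polynomial A) : PowerSeries A) = EV (fun i => (y i : PowerSeries A)) (w : PowerSeries A) H :=
  hom_EV (Polynomial.coeToPowerSeries.ringHom) y w H

theorem weier {A : Type*} [CommRing A] [IsDomain A] [IsLocalRing A] [IsAdicComplete (IsLocalRing.maximalIdeal A) A]
    {ι κ : Type*} (Y : ι → PowerSeries A) (W : PowerSeries A) (g : κ → PowerSeries A)
    (G : Polynomial (MvPolynomial ι ℤ)) (δ : MvPolynomial ι ℤ) (p : κ → Polynomial (MvPolynomial ι ℤ))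
    (hG : EV Y W G = 0) (hp : ∀ k, EV Y W (Polynomial.C δ) * g k = EV Y W (p k))
    (hθ : (EV Y W (G.derivative ^ 2 * Polynomial.C δ)).map (IsLocalRing.residue A) ≠ 0) :
    ∃ (P Q w : Polynomial A) (y : ι → Polynomial A) (e : κ → Polynomial A),
      P.Monic ∧ IsUnit (Q.coeff 0) ∧ Polynomial.X ^ 2 * P ∣ EV y w G ∧
      EV y w (G.derivative ^ 2 * Polynomial.C δ) = P * Q ∧
      (∀ k, Polynomial.X ^ 2 * P ∣ EV y w (Polynomial.C δ) * e k - EV y w (p k)) ∧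
      ∀ k, (PowerSeries.X : PowerSeries A) ^ 2 ∣ g k - (e k : PowerSeries A) := by
  obtain ⟨P, U, hPU⟩ := PowerSeries.exists_isWeierstrassFactorization hθ
  have hXd : (Polynomial.X ^ 2 : Polynomial A).IsDistinguishedAt (IsLocalRing.maximalIdeal A) := by
    refine ⟨⟨?_⟩, Polynomial.monic_X_pow 2⟩
    intro n hn
    rw [Polynomial.natDegree_X_pow] at hn
    rw [Polynomial.coeff_X_pow, if_neg (by omega)]
    exact zero_mem _
  have hD := hXd.mul hPU.isDistinguishedAt
  have rem := distinguished_rem _ _ hD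
  choose y hy using fun i => rem (Y i)
  obtain ⟨w, hw⟩ := rem W
  choose e he using fun k => rem (g k)
  have hc := fun H => EV_congr _ _ _ _ _ hy hw H
  have hdvd : ∀ H, ((Polynomial.X ^ 2 * P : Polynomial A) : PowerSeries A) ∣ EV Y W H - ((EV y w H : Polynomial A) : PowerSeries A) := by
    intro H; rw [coe_EV]; exact hc H
  have hPD : (P : PowerSeries A) ∣ ((Polynomial.X ^ 2 * P : Polynomial A) : PowerSeries A) := by
    rw [Polynomial.coe_mul]; exact dvd_mul_left _ _
  have hXD : (PowerSeries.X : PowerSeries A) ^ 2 ∣ ((Polynomial.X ^ 2 * P : Polynomial A) : PowerSeries A) := by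
    rw [Polynomial.coe_mul, Polynomial.coe_pow, Polynomial.coe_X]; exact dvd_mul_right _ _
  have hP0 : (P : PowerSeries A) ≠ 0 := by
    simpa using hPU.isDistinguishedAt.monic.ne_zero
  obtain ⟨Q, hQ⟩ : P ∣ EV y w (G.derivative ^ 2 * Polynomial.C δ) := by
    apply distinguished_dvd _ _ hPU.isDistinguishedAt
    have h1 := hPD.trans (hdvd (G.derivative ^ 2 * Polynomial.C δ))
    rw [hPU.eq_mul] at h1
    have := dvd_sub (dvd_mul_right (P : PowerSeries A) U) h1
    rwa [sub_sub_cancel] at this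
  refine ⟨P, Q, w, y, e, hPU.isDistinguishedAt.monic, ?_, ?_, hQ, ?_, fun k => hXD.trans (he k)⟩
  · obtain ⟨c, hc⟩ := hdvd (G.derivative ^ 2 * Polynomial.C δ)
    rw [hPU.eq_mul, hQ, Polynomial.coe_mul, Polynomial.coe_mul] at hc
    have h2 : U - Q = ((Polynomial.X ^ 2 : Polynomial A) : PowerSeries A) * c := by
      apply mul_left_cancel₀ hP0
      linear_combination hc
    have h3 := congrArg PowerSeries.constantCoeff h2
    have h4 : PowerSeries.constantCoeff (Q : PowerSeries A) = Q.coeff 0 := by simp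
    rw [map_sub, map_mul, h4] at h3
    simp only [Polynomial.coe_pow, Polynomial.coe_X, map_pow, PowerSeries.constantCoeff_X] at h3
    have h5 : Q.coeff 0 = PowerSeries.constantCoeff U := by linear_combination -h3
    rw [h5]
    exact hPU.isUnit.map _
  · apply distinguished_dvd _ _ hD
    have := hdvd G
    rw [hG, zero_sub, dvd_neg] at this
    exact this
  · intro k
    apply distinguished_dvd _ _ hD
    have h1 := hdvd (p k)
    have h2 := hdvd (Polynomial.C δ)
    have h3 := he k
    have h4 := dvd_sub (dvd_sub h1 ((h2.mul_right (g k)))) ((h3.mul_left ((EV y w (Polynomial.C δ) : Polynomial A) : PowerSeries A)))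
    convert h4 using 1
    rw [Polynomial.coe_sub, Polynomial.coe_mul, ← hp]
    ring

theorem powerSeries_split {A : Type*} [CommRing A] (f : PowerSeries A) (hf : f ≠ 0) :
    ∃ (k : ℕ) (a : A) (η : PowerSeries A), a ≠ 0 ∧ f = PowerSeries.X ^ k * (PowerSeries.C a + PowerSeries.X * η) := by
  classical
  have hex : ∃ k, PowerSeries.coeff k f ≠ 0 := by
    by_contra h
    push Not at h
    exact hf (by ext k; simpa using h k)
  have hk := Nat.find_spec hex
  have hmin : ∀ m < Nat.find hex, PowerSeries.coeff m f = 0 := fun m hm => by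
    simpa using Nat.find_min hex hm
  generalize Nat.find hex = k0 at hk hmin
  obtain ⟨q, hq⟩ := PowerSeries.X_pow_dvd_iff.mpr hmin
  refine ⟨k0, PowerSeries.constantCoeff q, ?_⟩
  have : PowerSeries.X ∣ q - PowerSeries.C (PowerSeries.constantCoeff q) := by
    rw [PowerSeries.X_dvd_iff]; simp
  obtain ⟨η, hη⟩ := this
  refine ⟨η, ?_, ?_⟩
  · have h2 : PowerSeries.coeff k0 f = PowerSeries.constantCoeff q := by
      conv_lhs => rw [hq]
      have := PowerSeries.coeff_X_pow_mul q k0 0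
      simpa using this
    rw [← h2]; exact hk
  · rw [← hη]; conv_lhs => rw [hq]
    ring

theorem curve_aux {K : Type*} [Field K] (n : ℕ) : ∀ θ : MvPowerSeries (Fin n) K, θ ≠ 0 →
    ∃ (e : Fin n → ℕ) (N : ℕ), (∀ i, 1 ≤ e i) ∧ ((n = 0 ∧ N = 0) ∨ ∃ j, e j = 1) ∧
      ∀ γ : MvPowerSeries (Fin n) K →+* PowerSeries K, (∀ k, γ (MvPowerSeries.C k) = PowerSeries.C k) →
        (∀ i, γ (MvPowerSeries.X i) = PowerSeries.X ^ e i) →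
        ∃ u : PowerSeries K, PowerSeries.constantCoeff u ≠ 0 ∧ γ θ = PowerSeries.X ^ N * u := by
  induction n with
  | zero =>
    intro θ hθ
    refine ⟨fun _ => 1, 0, fun _ => le_rfl, Or.inl ⟨rfl, rfl⟩, fun γ hC hX => ?_⟩
    have h : θ = MvPowerSeries.C (MvPowerSeries.constantCoeff θ) := by
      ext m
      rw [Subsingleton.elim m 0]
      simp
    refine ⟨γ θ, ?_, by simp⟩
    rw [h, hC]
    intro h0
    apply hθ
    rw [h]
    have : MvPowerSeries.constantCoeff θ = 0 := by simpa using h0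
    rw [this]; simp
  | succ n ih =>
    intro θ hθ
    obtain ⟨k, a, η, ha, hf⟩ := powerSeries_split (MvPowerSeries.finSuccEquiv K n θ) (by simpa using hθ)
    obtain ⟨e, N, he, hN, hγ⟩ := ih a ha
    refine ⟨Fin.cons (N + 1) e, (N + 1) * k + N, ?_, ?_, ?_⟩
    · intro i
      refine Fin.cases ?_ (fun i => ?_) i
      · simp
      · simpa using he i
    · right
      rcases hN with ⟨-, rfl⟩ | ⟨j, hj⟩
      · exact ⟨0, by simp⟩
      · exact ⟨j.succ, by simpa using hj⟩
    · intro γ hC hX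
      set f := MvPowerSeries.finSuccEquiv K n
      let γ2 : PowerSeries (MvPowerSeries (Fin n) K) →+* PowerSeries K := γ.comp f.symm.toRingEquiv.toRingHom
      have h2 : ∀ z, γ2 (f z) = γ z := fun z => by simp [γ2]
      obtain ⟨u, hu, hu2⟩ := hγ (γ2.comp PowerSeries.C) (by
        intro k
        have := h2 (MvPowerSeries.C k)
        rw [MvPowerSeries.finSuccEquiv_C, hC] at this
        exact this) (by
        intro i
        have := h2 (MvPowerSeries.X i.succ)
        rw [MvPowerSeries.finSuccEquiv_X_succ, hX] at this
        simpa using this)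
      have hX0 : γ2 PowerSeries.X = PowerSeries.X ^ (N + 1) := by
        have := h2 (MvPowerSeries.X 0)
        rw [MvPowerSeries.finSuccEquiv_X_zero, hX] at this
        simpa using this
      refine ⟨u + PowerSeries.X * γ2 η, by simpa using hu, ?_⟩
      rw [← h2, hf, map_mul, map_pow, map_add, map_mul, hX0]
      have hu3 : γ2 (PowerSeries.C a) = PowerSeries.X ^ N * u := hu2
      rw [hu3]
      ring

theorem curve {K : Type*} [Field K] (n : ℕ) (θ : MvPowerSeries (Fin (n + 1)) K) (hθ : θ ≠ 0) :
    ∃ (e : Fin (n + 1) → ℕ) (j : Fin (n + 1)), (∀ i, 1 ≤ e i) ∧ e j = 1 ∧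
      ∀ γ : MvPowerSeries (Fin (n + 1)) K →+* PowerSeries K, (∀ k, γ (MvPowerSeries.C k) = PowerSeries.C k) →
        (∀ i, γ (MvPowerSeries.X i) = PowerSeries.X ^ e i) → γ θ ≠ 0 := by
  obtain ⟨e, N, he, hN, hγ⟩ := curve_aux (n + 1) θ hθ
  obtain ⟨j, hj⟩ : ∃ j, e j = 1 := by
    rcases hN with ⟨h, -⟩ | h
    · omega
    · exact h
  refine ⟨e, j, he, hj, fun γ h1 h2 h0 => ?_⟩
  obtain ⟨u, hu, hu2⟩ := hγ γ h1 h2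
  rw [h0] at hu2
  have : u ≠ 0 := by rintro rfl; simp at hu
  exact mul_ne_zero (pow_ne_zero _ PowerSeries.X_ne_zero) this hu2.symm

/-- Coordinate change making `θ` regular in the last variable. -/
theorem coord_change {K : Type*} [Field K] (n : ℕ) (θ : MvPowerSeries (Fin (n + 1)) K) (hθ : θ ≠ 0) :
    ∃ (ψ : MvPowerSeries (Fin (n + 1)) K →+* PowerSeries (MvPowerSeries (Fin n) K)) (j : Fin (n + 1))
      (s : Fin n → Fin (n + 1)) (e : Fin n → ℕ),
      (∀ i, i = j ∨ ∃ k, i = s k) ∧ (∀ k, 1 ≤ e k) ∧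
      ψ (MvPowerSeries.X j) = PowerSeries.X ∧
      (∀ k, ψ (MvPowerSeries.X (s k)) = PowerSeries.C (MvPowerSeries.X k) + PowerSeries.X ^ e k) ∧
      PowerSeries.map MvPowerSeries.constantCoeff (ψ θ) ≠ 0 := by
  obtain ⟨e, j, he, hj, hγ⟩ := curve n θ hθ
  set f := MvPowerSeries.finSuccEquiv K n
  let x : Fin (n + 1) → MvPowerSeries (Fin (n + 1)) K := fun i =>
    if i = j then MvPowerSeries.X 0 else MvPowerSeries.X (Equiv.swap 0 j i) + MvPowerSeries.X 0 ^ e i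
  have hx : ∀ i, x i ∈ (Ideal.span (Set.range MvPowerSeries.X) : Ideal (MvPowerSeries (Fin (n + 1)) K)) := by
    intro i
    have h1 : ∀ i, MvPowerSeries.X i ∈ (Ideal.span (Set.range MvPowerSeries.X) : Ideal (MvPowerSeries (Fin (n + 1)) K)) :=
      fun i => Ideal.subset_span ⟨i, rfl⟩
    simp only [x]
    split_ifs
    · exact h1 _
    · exact add_mem (h1 _) (Ideal.pow_mem_of_mem _ (h1 _) _ (he i))
  obtain ⟨τ, hτC, hτX⟩ := MvPowerSeries.exists_hom_adic _ MvPowerSeries.C x hx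
  let ψ : MvPowerSeries (Fin (n + 1)) K →+* PowerSeries (MvPowerSeries (Fin n) K) := f.toRingEquiv.toRingHom.comp τ
  have hψ : ∀ z, ψ z = f (τ z) := fun z => rfl
  have hj' : ψ (MvPowerSeries.X j) = PowerSeries.X := by
    rw [hψ, hτX]; simp only [x, if_true]
    exact MvPowerSeries.finSuccEquiv_X_zero
  have hs : ∀ k : Fin n, Equiv.swap 0 j k.succ ≠ j := by
    intro k h
    have := congrArg (Equiv.swap 0 j) h
    rw [Equiv.swap_apply_self, Equiv.swap_apply_right] at this
    exact Fin.succ_ne_zero k this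
  have hk' : ∀ k : Fin n, ψ (MvPowerSeries.X (Equiv.swap 0 j k.succ)) =
      PowerSeries.C (MvPowerSeries.X k) + PowerSeries.X ^ e (Equiv.swap 0 j k.succ) := by
    intro k
    rw [hψ, hτX]; simp only [x, if_neg (hs k), Equiv.swap_apply_self]
    rw [map_add, map_pow, MvPowerSeries.finSuccEquiv_X_zero, MvPowerSeries.finSuccEquiv_X_succ]
  have hcov : ∀ i, i = j ∨ ∃ k : Fin n, i = Equiv.swap 0 j k.succ := by
    intro i
    by_cases h : i = j
    · exact Or.inl h
    · right
      have h3 : Equiv.swap 0 j i ≠ 0 := by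
        intro h4
        have := congrArg (Equiv.swap 0 j) h4
        rw [Equiv.swap_apply_self, Equiv.swap_apply_left] at this
        exact h this
      obtain ⟨k, hk⟩ := Fin.exists_succ_eq.mpr h3
      exact ⟨k, by rw [hk, Equiv.swap_apply_self]⟩
  refine ⟨ψ, j, fun k => Equiv.swap 0 j k.succ, fun k => e (Equiv.swap 0 j k.succ), hcov, fun k => he _, hj', hk', ?_⟩
  refine hγ ((PowerSeries.map MvPowerSeries.constantCoeff).comp ψ) ?_ ?_
  · intro k
    rw [RingHom.comp_apply, hψ, hτC, MvPowerSeries.finSuccEquiv_C]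
    simp
  · intro i
    rw [RingHom.comp_apply]
    rcases hcov i with rfl | ⟨k, rfl⟩
    · rw [hj', hj]; simp
    · rw [hk']; simp

theorem maximalIdeal_mvPowerSeries {K : Type*} [Field K] (σ : Type*) [Finite σ] :
    IsLocalRing.maximalIdeal (MvPowerSeries σ K) = Ideal.span (Set.range MvPowerSeries.X) := by
  apply le_antisymm
  · intro f hf
    have := MvPowerSeries.mem_pow_of_truncTotal f 1 ?_
    · simpa using this
    · ext m
      by_cases hm : Finsupp.degree m < 1
      · rw [MvPowerSeries.coeff_truncTotal _ hm]
        have h0 : m = 0 := by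
          have : Finsupp.degree m = 0 := by omega
          exact (Finsupp.degree_eq_zero_iff m).mp this
        subst h0
        by_contra h
        rw [IsLocalRing.mem_maximalIdeal, mem_nonunits_iff, MvPowerSeries.isUnit_iff_constantCoeff] at hf
        apply hf
        rw [isUnit_iff_ne_zero]
        simpa using h
      · rw [MvPowerSeries.coeff_truncTotal_eq_zero _ (not_lt.mp hm)]; simp
  · rw [Ideal.span_le]
    rintro _ ⟨i, rfl⟩
    rw [SetLike.mem_coe, IsLocalRing.mem_maximalIdeal, mem_nonunits_iff, MvPowerSeries.isUnit_iff_constantCoeff]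
    simp

theorem adicComplete_mvPowerSeries {K : Type*} [Field K] (σ : Type*) [Finite σ] :
    IsAdicComplete (IsLocalRing.maximalIdeal (MvPowerSeries σ K)) (MvPowerSeries σ K) := by
  rw [maximalIdeal_mvPowerSeries]; infer_instance

theorem map_residue_ne_zero {K : Type*} [Field K] (σ : Type*) [Finite σ] (f : PowerSeries (MvPowerSeries σ K))
    (hf : PowerSeries.map MvPowerSeries.constantCoeff f ≠ 0) :
    f.map (IsLocalRing.residue (MvPowerSeries σ K)) ≠ 0 := by
  intro h
  apply hf
  ext m
  have h1 := congrArg (PowerSeries.coeff m) h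
  rw [PowerSeries.coeff_map, map_zero, IsLocalRing.residue_eq_zero_iff, IsLocalRing.mem_maximalIdeal,
    mem_nonunits_iff, MvPowerSeries.isUnit_iff_constantCoeff, isUnit_iff_ne_zero, not_not] at h1
  rw [PowerSeries.coeff_map, h1, map_zero]

theorem span_compare {A : Type*} [CommRing A] {n : ℕ} (ξ z : Fin n → A)
    (hz : Ideal.span (Set.range z) = Ideal.span (Set.range ξ)) (v : Fin (n + 1) → PowerSeries A)
    (j : Fin (n + 1)) (s : Fin n → Fin (n + 1)) (hs : ∀ i, i = j ∨ ∃ k, i = s k)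
    (h0 : PowerSeries.coeff 0 (v j) = 0) (h1 : PowerSeries.coeff 1 (v j) = 1)
    (h2 : ∀ k, PowerSeries.coeff 0 (v (s k)) = z k) :
    Ideal.span (Set.range v) =
      Ideal.span (Set.range (Fin.cons PowerSeries.X (fun k => PowerSeries.C (ξ k)) : Fin (n + 1) → PowerSeries A)) := by
  have hC : ∀ (J : Ideal (PowerSeries A)) (a b : Fin n → A), Ideal.span (Set.range a) = Ideal.span (Set.range b) →
      (∀ k, PowerSeries.C (a k) ∈ J) → ∀ k, PowerSeries.C (b k) ∈ J := by
    intro J a b hab h k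
    have : Ideal.span (Set.range a) ≤ J.comap PowerSeries.C := by
      rw [Ideal.span_le]; rintro _ ⟨i, rfl⟩; exact h i
    exact this (hab ▸ Ideal.subset_span ⟨k, rfl⟩)
  have hd : ∀ k, PowerSeries.X ∣ v (s k) - PowerSeries.C (z k) := by
    intro k
    rw [PowerSeries.X_dvd_iff, map_sub, ← h2]; simp
  apply le_antisymm
  · set J := Ideal.span (Set.range (Fin.cons PowerSeries.X (fun k => PowerSeries.C (ξ k)) : Fin (n + 1) → PowerSeries A))
    have hX : PowerSeries.X ∈ J := Ideal.subset_span ⟨0, by simp⟩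
    have hz' : ∀ k, PowerSeries.C (z k) ∈ J := hC J ξ z hz.symm (fun k => Ideal.subset_span ⟨k.succ, by simp⟩)
    rw [Ideal.span_le]
    rintro _ ⟨i, rfl⟩
    rcases hs i with rfl | ⟨k, rfl⟩
    · have : PowerSeries.X ∣ v i := by rw [PowerSeries.X_dvd_iff]; simpa using h0
      exact J.mem_of_dvd this hX
    · have := J.add_mem (J.mem_of_dvd (hd k) hX) (hz' k)
      simpa using this
  · set J := Ideal.span (Set.range v)
    have hv : ∀ i, v i ∈ J := fun i => Ideal.subset_span ⟨i, rfl⟩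
    have hX : PowerSeries.X ∈ J := by
      obtain ⟨q, hq⟩ : PowerSeries.X ∣ v j := by rw [PowerSeries.X_dvd_iff]; simpa using h0
      have hq1 : PowerSeries.constantCoeff q = 1 := by
        rw [hq] at h1
        have := PowerSeries.coeff_succ_X_mul 0 q
        rw [zero_add, h1] at this
        simpa using this.symm
      have hu : IsUnit q := by rw [PowerSeries.isUnit_iff_constantCoeff, hq1]; exact isUnit_one
      have := hv j
      rw [hq] at this
      exact (Ideal.mul_unit_mem_iff_mem J hu).mp this
    have hz' : ∀ k, PowerSeries.C (z k) ∈ J := by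
      intro k
      have := J.sub_mem (hv (s k)) (J.mem_of_dvd (hd k) hX)
      simpa using this
    rw [Ideal.span_le]
    rintro _ ⟨i, rfl⟩
    refine Fin.cases ?_ (fun k => ?_) i
    · simpa using hX
    · simpa using hC J z ξ hz hz' k

theorem descent {A A' E' ι κ : Type*} [CommRing A] [CommRing A'] [Nontrivial A'] [CommRing E'] (f : E' →+* A)
    (hf : Function.Injective f) (φ : E' →+* A') (G : Polynomial (MvPolynomial ι ℤ)) (δ : MvPolynomial ι ℤ)
    (p : κ → Polynomial (MvPolynomial ι ℤ)) (P Q w : Polynomial E') (y : ι → Polynomial E') (e : κ → Polynomial E')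
    (hP : (P.map f).Monic) (hQ : IsUnit (Q.coeff 0))
    (h1 : Polynomial.X ^ 2 * P.map f ∣ EV (fun i => (y i).map f) (w.map f) G)
    (h2 : EV (fun i => (y i).map f) (w.map f) (G.derivative ^ 2 * Polynomial.C δ) = P.map f * Q.map f)
    (h3 : ∀ k, Polynomial.X ^ 2 * P.map f ∣ EV (fun i => (y i).map f) (w.map f) (Polynomial.C δ) * (e k).map f -
      EV (fun i => (y i).map f) (w.map f) (p k)) :
    ∃ (y' : ι → PowerSeries A') (w' P' Q' : PowerSeries A') (e' : κ → PowerSeries A'),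
      P' ≠ 0 ∧ IsUnit Q' ∧ PowerSeries.X ^ 2 * P' ∣ EV y' w' G ∧
      EV y' w' (G.derivative ^ 2 * Polynomial.C δ) = P' * Q' ∧
      (∀ k, PowerSeries.X ^ 2 * P' ∣ EV y' w' (Polynomial.C δ) * e' k - EV y' w' (p k)) ∧
      ∀ k m, PowerSeries.coeff m (e' k) = φ ((e k).coeff m) := by
  have hPm : P.Monic := (Function.Injective.monic_map_iff hf).mpr hP
  have hXP : (Polynomial.X ^ 2 * P : Polynomial E').Monic := (Polynomial.monic_X_pow 2).mul hPm
  let M : Polynomial E' →+* Polynomial A := Polynomial.mapRingHom f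
  have hM : ∀ q, M q = q.map f := fun q => rfl
  have hEV : ∀ H, EV (fun i => (y i).map f) (w.map f) H = (EV y w H).map f := fun H => (hom_EV M y w H).symm
  have hXPm : (Polynomial.X ^ 2 * P.map f : Polynomial A) = (Polynomial.X ^ 2 * P : Polynomial E').map f := by
    simp
  simp only [hEV, hXPm, ← Polynomial.map_mul, ← Polynomial.map_sub] at h1 h2 h3
  rw [Polynomial.map_dvd_map f hf hXP] at h1
  have h2' := Polynomial.map_injective f hf h2
  have h3' := fun k => (Polynomial.map_dvd_map f hf hXP).mp (h3 k)
  let N : Polynomial E' →+* PowerSeries A' := (Polynomial.coeToPowerSeries.ringHom).comp (Polynomial.mapRingHom φ)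
  have hN : ∀ q, N q = ((q.map φ : Polynomial A') : PowerSeries A') := fun q => rfl
  have hNX : N Polynomial.X = PowerSeries.X := by rw [hN]; simp
  have hNXP : N (Polynomial.X ^ 2 * P) = PowerSeries.X ^ 2 * N P := by rw [map_mul, map_pow, hNX]
  refine ⟨fun i => N (y i), N w, N P, N Q, fun k => N (e k), ?_, ?_, ?_, ?_, ?_, ?_⟩
  · rw [hN, Ne, Polynomial.coe_eq_zero_iff]
    exact (hPm.map φ).ne_zero
  · rw [hN, PowerSeries.isUnit_iff_constantCoeff]
    have : PowerSeries.constantCoeff ((Q.map φ : Polynomial A') : PowerSeries A') = φ (Q.coeff 0) := by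
      rw [Polynomial.constantCoeff_coe, Polynomial.coeff_map]
    rw [this]
    exact hQ.map φ
  · rw [← hNXP, ← hom_EV]
    exact map_dvd N h1
  · rw [← hom_EV, h2', map_mul]
  · intro k
    rw [← hNXP, ← hom_EV, ← hom_EV, ← map_mul, ← map_sub]
    exact map_dvd N (h3' k)
  · intro k m
    change PowerSeries.coeff m (N (e k)) = _
    rw [hN, Polynomial.coeff_coe, Polynomial.coeff_map]

theorem isJacobsonRing_int : IsJacobsonRing ℤ := by
  rw [isJacobsonRing_iff_prime_eq]
  intro P hP
  by_cases h : P = ⊥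
  · subst h
    rw [eq_bot_iff]
    intro x hx
    have := Ideal.mem_jacobson_bot.mp hx x
    rw [Int.isUnit_iff] at this
    rw [Ideal.mem_bot]
    rcases this with h | h
    · have : x * x = 0 := by linarith
      simpa using this
    · nlinarith
  · have := hP.isMaximal h
    exact Ideal.jacobson_eq_self_of_isMaximal
theorem adjoin_int_eq_top {E : Type*} [CommRing E] (s : Set E) (hs : Subring.closure s = ⊤) :
    Algebra.adjoin ℤ s = ⊤ := by
  rw [Algebra.adjoin_int, hs]; rfl

theorem exists_charP_field (F : Type*) [Field F] (s : Finset F) (hs : Subring.closure (s : Set F) = ⊤) :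
    ∃ p : ℕ, p.Prime ∧ CharP F p := by
  have : Algebra.FiniteType ℤ F := ⟨⟨s, adjoin_int_eq_top _ hs⟩⟩
  have := isJacobsonRing_int
  have hfin := finite_of_finite_type_of_isJacobsonRing ℤ F
  obtain ⟨p, hp⟩ := CharP.exists F
  refine ⟨p, ?_, hp⟩
  rcases CharP.char_is_prime_or_zero F p with h | h
  · exact h
  · exfalso
    subst h
    have : CharZero F := CharP.charP_to_charZero F
    have hinj : Function.Injective (algebraMap ℤ F) := by simpa using Int.cast_injective
    exact Int.not_isField (isField_of_isIntegral_of_isField hinj (Field.toIsField F))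

instance isDomain_mvPowerSeries {σ K : Type*} [Field K] : IsDomain (MvPowerSeries σ K) :=
  NoZeroDivisors.to_isDomain _

def StarProp (d : ℕ) : Prop :=
  ∀ (K : Type u) [Field K] [CharZero K] (E : Type u) [CommRing E] (ε : E →+* MvPowerSeries (Fin d) K),
    Function.Injective ε → ∀ s : Finset E, Subring.closure (s : Set E) = ⊤ →
    ∀ x : Fin d → E, (∀ i, ε (x i) = MvPowerSeries.X i) →
    ∃ (F : Type u) (_ : Field F) (p : ℕ) (_ : Fact p.Prime) (_ : CharP F p)
      (φ : E →+* MvPowerSeries (Fin d) F),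
      Ideal.span (Set.range fun i => φ (x i)) = Ideal.span (Set.range MvPowerSeries.X)

theorem finite_closure_preimage {A : Type*} [CommRing A] (S : Set A) (hS : S.Finite) :
    ∃ s : Finset (Subring.closure S), Subring.closure (s : Set (Subring.closure S)) = ⊤ := by
  have hfin : ((Subtype.val : Subring.closure S → A) ⁻¹' S).Finite := hS.preimage Subtype.val_injective.injOn
  exact ⟨hfin.toFinset, by
    rw [Set.Finite.coe_toFinset]
    have hinj : Function.Injective (Subring.map (Subring.closure S).subtype) :=
      fun a b hab => SetLike.coe_injective (Set.image_injective.mpr Subtype.val_injective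
        (by simpa using congrArg (fun T : Subring A => (T : Set A)) hab))
    apply hinj
    rw [RingHom.map_closure, ← RingHom.range_eq_map, Subring.range_subtype]
    congr 1
    refine (Set.image_preimage_eq_inter_range).trans ?_
    simp⟩

theorem exists_descent_ring {A : Type u} {α : Type*} [CommRing A] [Finite α] (pol : α → Polynomial A)
    (S : Set A) (hS : S.Finite) :
    ∃ (E : Type u) (_ : CommRing E) (f : E →+* A) (s : Finset E), Function.Injective f ∧
      Subring.closure (s : Set E) = ⊤ ∧ S ⊆ Set.range f ∧
      ∃ pol' : α → Polynomial E, ∀ a, (pol' a).map f = pol a := by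
  have hfin : ((⋃ a, ((pol a).coeffs : Set A)) ∪ S).Finite :=
    (Set.finite_iUnion fun a => Finset.finite_toSet _).union hS
  obtain ⟨s, hs⟩ := finite_closure_preimage _ hfin
  generalize hE : Subring.closure ((⋃ a, ((pol a).coeffs : Set A)) ∪ S) = E at s hs
  refine ⟨E, inferInstance, E.subtype, s, Subtype.val_injective, hs, ?_, ?_⟩
  · exact fun s hs => ⟨⟨s, hE ▸ Subring.subset_closure (Or.inr hs)⟩, rfl⟩
  · have : ∀ a, pol a ∈ Polynomial.lifts E.subtype := by
      intro a
      rw [Polynomial.lifts_iff_coeff_lifts]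
      intro n
      by_cases h : (pol a).coeff n = 0
      · exact ⟨0, by simp [h]⟩
      · exact ⟨⟨(pol a).coeff n, hE ▸ Subring.subset_closure (Or.inl (Set.mem_iUnion.mpr
          ⟨a, Polynomial.coeff_mem_coeffs h⟩))⟩, rfl⟩
    choose pol' hpol' using fun a => (Polynomial.mem_lifts _ ).mp (this a)
    exact ⟨pol', hpol'⟩

theorem exists_hom_charP {E : Type u} [CommRing E] [Nontrivial E] (s : Finset E)
    (hs : Subring.closure (s : Set E) = ⊤) :
    ∃ (F : Type u) (_ : Field F) (p : ℕ) (_ : Fact p.Prime) (_ : CharP F p), Nonempty (E →+* F) := by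
  obtain ⟨M, hM⟩ := Ideal.exists_maximal E
  classical
  let F := E ⧸ M
  let _ : Field F := Ideal.Quotient.field M
  obtain ⟨p, hp, hc⟩ := exists_charP_field F (s.image (Ideal.Quotient.mk M)) (by
    rw [Finset.coe_image, ← RingHom.map_closure, hs, ← RingHom.range_eq_map, RingHom.range_eq_top]
    exact Ideal.Quotient.mk_surjective)
  exact ⟨F, inferInstance, p, ⟨hp⟩, hc, ⟨Ideal.Quotient.mk M⟩⟩

theorem starProp_zero : StarProp.{u} 0 := by
  intro K _ _ E _ ε hε s hs x hx
  have : Nontrivial E := ε.domain_nontrivial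
  obtain ⟨F, _, p, hp, hc, ⟨f⟩⟩ := exists_hom_charP s hs
  refine ⟨F, inferInstance, p, hp, hc, MvPowerSeries.C.comp f, ?_⟩
  simp

theorem lift_step_gen {E B ι κ : Type*} [CommRing E] [CommRing B] [IsDomain B] (y : ι → E) (w : E)
    (G : Polynomial (MvPolynomial ι ℤ)) (δ : MvPolynomial ι ℤ) (p : κ → Polynomial (MvPolynomial ι ℤ))
    (g : κ → E) (hg : Algebra.adjoin ℤ (Set.range g) = ⊤)
    (hG : ∀ H, Polynomial.eval₂ (MvPolynomial.aeval y : _ →ₐ[ℤ] E).toRingHom w H = 0 → G ∣ H)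
    (hp : ∀ k, MvPolynomial.aeval y δ * g k = Polynomial.eval₂ (MvPolynomial.aeval y : _ →ₐ[ℤ] E).toRingHom w (p k))
    (I : Ideal B) [IsAdicComplete I B] (T : B) (hT : T ∈ I)
    (y' : ι → B) (w' P' Q' : B) (e' : κ → B)
    (hP' : P' ≠ 0) (hQ' : IsUnit Q') (h1 : T * P' ∣ EV y' w' G)
    (h2 : EV y' w' (G.derivative ^ 2 * Polynomial.C δ) = P' * Q')
    (h3 : ∀ k, T * P' ∣ EV y' w' (Polynomial.C δ) * e' k - EV y' w' (p k)) :
    ∃ φ : E →+* B, ∀ k, T ∣ φ (g k) - e' k := by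
  refine lift_side (MvPolynomial.aeval y : _ →ₐ[ℤ] E).toRingHom w G hG δ g hg p hp
    I (MvPolynomial.aeval y' : _ →ₐ[ℤ] B).toRingHom w' T P' Q' hT hP' hQ' e' h1 ?_ ?_
  · rw [map_mul, map_pow, EV_C] at h2
    exact h2
  · intro k
    have := h3 k
    rw [EV_C] at this
    exact this

theorem lift_step {E A ι κ : Type*} [CommRing E] [CommRing A] [IsDomain A] (y : ι → E) (w : E)
    (G : Polynomial (MvPolynomial ι ℤ)) (δ : MvPolynomial ι ℤ) (p : κ → Polynomial (MvPolynomial ι ℤ))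
    (g : κ → E) (hg : Algebra.adjoin ℤ (Set.range g) = ⊤)
    (hG : ∀ H, Polynomial.eval₂ (MvPolynomial.aeval y : _ →ₐ[ℤ] E).toRingHom w H = 0 → G ∣ H)
    (hp : ∀ k, MvPolynomial.aeval y δ * g k = Polynomial.eval₂ (MvPolynomial.aeval y : _ →ₐ[ℤ] E).toRingHom w (p k))
    (y' : ι → PowerSeries A) (w' P' Q' : PowerSeries A) (e' : κ → PowerSeries A)
    (hP' : P' ≠ 0) (hQ' : IsUnit Q') (h1 : PowerSeries.X ^ 2 * P' ∣ EV y' w' G)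
    (h2 : EV y' w' (G.derivative ^ 2 * Polynomial.C δ) = P' * Q')
    (h3 : ∀ k, PowerSeries.X ^ 2 * P' ∣ EV y' w' (Polynomial.C δ) * e' k - EV y' w' (p k)) :
    ∃ φ : E →+* PowerSeries A, ∀ k, PowerSeries.X ^ 2 ∣ φ (g k) - e' k := by
  exact lift_step_gen y w G δ p g hg hG hp (Ideal.span {(PowerSeries.X : PowerSeries A)}) (PowerSeries.X ^ 2)
    (Ideal.pow_mem_of_mem _ (Ideal.mem_span_singleton_self _) 2 (by norm_num)) y' w' P' Q' e' hP' hQ' h1 h2 h3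

theorem starProp_succ (n : ℕ) (ih : StarProp.{u} n) : StarProp.{u} (n + 1) := by
  classical
  intro K _ _ E _ ε hε s hs x hx
  let g : (s ⊕ Fin (n + 1)) → E := Sum.elim Subtype.val x
  have hg : Algebra.adjoin ℤ (Set.range g) = ⊤ := by
    rw [eq_top_iff, ← adjoin_int_eq_top _ hs]
    apply Algebra.adjoin_mono
    intro a ha
    exact ⟨Sum.inl ⟨a, ha⟩, rfl⟩
  have : CharZero (MvPowerSeries (Fin (n + 1)) K) := charZero_of_injective_ringHom
    (f := (MvPowerSeries.C : K →+* MvPowerSeries (Fin (n + 1)) K)) (RingHom.injective _)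
  have : CharZero E := ⟨fun a b hab => by
    have := congrArg ε hab
    simpa using this⟩
  have : IsDomain E := hε.isDomain ε
  obtain ⟨ι, _, y, w, G, δ, p, hG, hG0, hG1, hδ, hp⟩ := prim_data g hg
  have hθ : EV y w (G.derivative ^ 2 * Polynomial.C δ) ≠ 0 := by
    rw [map_mul, map_pow, EV_C]
    exact mul_ne_zero (pow_ne_zero _ hG1) hδ
  obtain ⟨ψ, j, sw, e0, hcov, he0, hψj, hψs, hψθ⟩ := coord_change n (ε (EV y w (G.derivative ^ 2 * Polynomial.C δ)))
    (by rw [Ne, map_eq_zero_iff _ hε]; exact hθ)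
  let A := MvPowerSeries (Fin n) K
  have : IsAdicComplete (IsLocalRing.maximalIdeal A) A := adicComplete_mvPowerSeries (Fin n)
  let ψE : E →+* PowerSeries A := ψ.comp ε
  have hψE : ∀ z : E, ψE z = ψ (ε z) := fun z => rfl
  obtain ⟨P, Q, w1, y1, e1, hP, hQ, h1, h2, h3, h4⟩ := weier (A := A) (fun i => ψE (y i)) (ψE w) (fun k => ψE (g k)) G δ p
    (by rw [← hom_EV, EV_apply, hG0, map_zero])
    (by
      intro k
      rw [← hom_EV, ← hom_EV, ← map_mul, EV_C, hp, EV_apply])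
    (by
      rw [← hom_EV]
      exact map_residue_ne_zero (Fin n) _ hψθ)
  obtain ⟨c, hc⟩ := hQ.exists_left_inv
  obtain ⟨E', _, f, s', hf, hs', hS, pol', hpol'⟩ := exists_descent_ring
    (Sum.elim y1 (Sum.elim e1 ![P, Q, w1]) : ι ⊕ ((s ⊕ Fin (n + 1)) ⊕ Fin 3) → Polynomial A)
    (insert c (Set.range MvPowerSeries.X)) ((Set.finite_range _).insert _)
  obtain ⟨c', hc'⟩ := hS (Or.inl rfl)
  have hX' : ∀ i : Fin n, ∃ a, f a = MvPowerSeries.X i := fun i => hS (Or.inr ⟨i, rfl⟩)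
  choose x' hx' using hX'
  obtain ⟨F, _, q, hq, hqF, φ', hφ'⟩ := ih K E' f hf s' hs' x' hx'
  let P2 := pol' (Sum.inr (Sum.inr 0))
  let Q2 := pol' (Sum.inr (Sum.inr 1))
  let w2 := pol' (Sum.inr (Sum.inr 2))
  let y2 : ι → Polynomial E' := fun i => pol' (Sum.inl i)
  let e2 : (s ⊕ Fin (n + 1)) → Polynomial E' := fun i => pol' (Sum.inr (Sum.inl i))
  have hP2 : P2.map f = P := hpol' _
  have hQ2 : Q2.map f = Q := hpol' _
  have hw2 : w2.map f = w1 := hpol' _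
  have hy2 : ∀ i, (y2 i).map f = y1 i := fun i => hpol' _
  have he2 : ∀ i, (e2 i).map f = e1 i := fun i => hpol' _
  obtain ⟨y', w', P', Q', e', hP', hQ', h1', h2', h3', h4'⟩ := descent f hf φ' G δ p P2 Q2 w2 y2 e2
    (by rw [hP2]; exact hP)
    (by
      refine IsUnit.of_mul_eq_one_right c' (hf ?_)
      rw [map_mul, map_one, ← hc, ← hQ2, Polynomial.coeff_map, hc'])
    (by simp only [hP2, hw2, hy2]; exact h1)
    (by simp only [hP2, hw2, hy2, hQ2]; exact h2)
    (by simp only [hP2, hw2, hy2, he2]; exact h3)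
  obtain ⟨φ, hφ⟩ := lift_step y w G δ p g hg hG hp y' w' P' Q' e' hP' hQ' h1' h2' h3'
  have hco : ∀ m < 2, ∀ k, ∀ a : E', PowerSeries.coeff m (ψE (g k)) = f a →
      PowerSeries.coeff m (φ (g k)) = φ' a := by
    intro m hm k a ha
    have t1 := PowerSeries.X_pow_dvd_iff.mp (hφ k) m hm
    have t2 := PowerSeries.X_pow_dvd_iff.mp (h4 k) m hm
    rw [map_sub, sub_eq_zero] at t1 t2
    rw [t1, h4']
    congr 1
    apply hf
    rw [← Polynomial.coeff_map, he2]
    rw [ha, Polynomial.coeff_coe] at t2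
    exact t2.symm
  let σ := MvPowerSeries.finSuccEquiv F n
  refine ⟨F, inferInstance, q, hq, hqF, σ.symm.toRingEquiv.toRingHom.comp φ, ?_⟩
  have key := span_compare (A := MvPowerSeries (Fin n) F) MvPowerSeries.X (fun i => φ' (x' i)) hφ'
    (fun i => φ (g (Sum.inr i))) j sw hcov
    (by
      rw [hco 0 (by norm_num) (Sum.inr j) 0, map_zero]
      rw [hψE]
      change PowerSeries.coeff 0 (ψ (ε (x j))) = _
      rw [hx, hψj]; simp)
    (by
      rw [hco 1 (by norm_num) (Sum.inr j) 1, map_one]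
      rw [hψE]
      change PowerSeries.coeff 1 (ψ (ε (x j))) = _
      rw [hx, hψj]; simp)
    (by
      intro k
      rw [hco 0 (by norm_num) (Sum.inr (sw k)) (x' k)]
      rw [hψE]
      change PowerSeries.coeff 0 (ψ (ε (x (sw k)))) = _
      rw [hx, hψs, hx']
      have : e0 k ≠ 0 := by have := he0 k; omega
      simp [this])
  have h5 := congrArg (Ideal.map σ.symm.toRingEquiv.toRingHom) key
  rw [Ideal.map_span, Ideal.map_span, ← Set.range_comp, ← Set.range_comp] at h5
  refine h5.trans ?_
  congr 2
  funext i
  change σ.symm _ = _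
  rw [AlgEquiv.symm_apply_eq]
  refine Fin.cases ?_ (fun k => ?_) i
  · exact MvPowerSeries.finSuccEquiv_X_zero.symm
  · exact (MvPowerSeries.finSuccEquiv_X_succ _).symm

theorem starProp_all (d : ℕ) : StarProp.{u} d := by
  induction d with
  | zero => exact starProp_zero
  | succ n ih => exact starProp_succ n ih

/-- generators of `powerIdeal x t • ⊤` -/
def PG {C : Type*} [CommRing C] {d : ℕ} (x : Fin d → C) (t : Fin d → ℕ) (r : ℕ) : Set (Fin r → C) :=
  {v | ∃ i j, v = Pi.single j (x i ^ t i)}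

theorem span_PG {C : Type*} [CommRing C] {d : ℕ} (x : Fin d → C) (t : Fin d → ℕ) (r : ℕ) :
    powerIdeal x t • (⊤ : Submodule C (Fin r → C)) = Submodule.span C (PG x t r) := by
  apply le_antisymm
  · rw [Submodule.smul_le]
    intro a ha v _
    have hv : v = ∑ j, Pi.single j (v j) := (Finset.univ_sum_single v).symm
    rw [hv, Finset.smul_sum]
    refine Submodule.sum_mem _ fun j _ => ?_
    have : powerIdeal x t ≤ (Submodule.span C (PG x t r)).comap (LinearMap.single C (fun _ => C) j) := by
      rw [powerIdeal, Ideal.span, Submodule.span_le]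
      rintro _ ⟨i, rfl⟩
      exact Submodule.subset_span ⟨i, j, rfl⟩
    have h2 := (Submodule.span C (PG x t r)).smul_mem (v j) (this ha)
    convert h2 using 1
    ext k
    by_cases hk : k = j
    · subst hk; simp [mul_comm]
    · simp [hk]
  · rw [Submodule.span_le]
    rintro _ ⟨i, j, rfl⟩
    have : (Pi.single j (x i ^ t i) : Fin r → C) = x i ^ t i • Pi.single j 1 := by
      rw [← Pi.single_smul]; simp
    rw [this]
    exact Submodule.smul_mem_smul (Ideal.subset_span ⟨i, rfl⟩) trivial

theorem PG_preimage {C D : Type*} [CommRing C] [CommRing D] (f : D →+* C) (hf : Function.Injective f) {d : ℕ}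
    (x : Fin d → C) (x' : Fin d → D) (hx : ∀ i, f (x' i) = x i) (t : Fin d → ℕ) (r : ℕ) :
    {v : Fin r → D | (fun i => f (v i)) ∈ PG x t r} = PG x' t r := by
  have h0 : ∀ i j, (fun k => f ((Pi.single j (x' i ^ t i) : Fin r → D) k)) = Pi.single j (x i ^ t i) := by
    intro i j
    ext k
    by_cases hk : k = j
    · subst hk; simp [hx]
    · simp [hk]
  ext v
  constructor
  · rintro ⟨i, j, h⟩
    refine ⟨i, j, ?_⟩
    rw [← h0] at h
    ext k
    exact hf (congrFun h k)
  · rintro ⟨i, j, rfl⟩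
    exact ⟨i, j, h0 i j⟩

theorem mem_descend {C : Type u} [CommRing C] {r : ℕ} (W : Set (Fin r → C)) (v : Fin r → C)
    (hv : v ∈ Submodule.span C W) :
    ∃ S : Set C, S.Finite ∧ ∀ (D : Type u) [CommRing D] (f : D →+* C), Function.Injective f → S ⊆ Set.range f →
      ∀ v' : Fin r → D, (fun i => f (v' i)) = v → v' ∈ Submodule.span D {v | (fun i => f (v i)) ∈ W} := by
  have lift : ∀ (D : Type u) [CommRing D] (f : D →+* C) (v : Fin r → C), Set.range v ⊆ Set.range f →
      ∃ v' : Fin r → D, (fun i => f (v' i)) = v := by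
    intro D _ f v h
    choose v' hv' using fun i => h ⟨i, rfl⟩
    exact ⟨v', funext hv'⟩
  induction hv using Submodule.span_induction with
  | mem v hv =>
    refine ⟨∅, Set.finite_empty, fun D _ f hf _ v' hv' => Submodule.subset_span ?_⟩
    change (fun i => f (v' i)) ∈ W
    rw [hv']; exact hv
  | zero =>
    refine ⟨∅, Set.finite_empty, fun D _ f hf _ v' hv' => ?_⟩
    have : v' = 0 := by
      ext i
      apply hf
      rw [Pi.zero_apply, map_zero]
      exact congrFun hv' i
    rw [this]; exact Submodule.zero_mem _
  | add a b _ _ iha ihb =>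
    obtain ⟨S1, h1, h1'⟩ := iha
    obtain ⟨S2, h2, h2'⟩ := ihb
    refine ⟨(S1 ∪ S2) ∪ (Set.range a ∪ Set.range b),
      (h1.union h2).union ((Set.finite_range a).union (Set.finite_range b)), fun D _ f hf hS v' hv' => ?_⟩
    rw [Set.union_subset_iff, Set.union_subset_iff, Set.union_subset_iff] at hS
    obtain ⟨⟨hS1, hS2⟩, ha, hb⟩ := hS
    obtain ⟨a', ha'⟩ := lift D f a ha
    obtain ⟨b', hb'⟩ := lift D f b hb
    have : v' = a' + b' := by
      ext i
      apply hf
      rw [Pi.add_apply, map_add, congrFun hv' i, Pi.add_apply, ← ha', ← hb']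
    rw [this]
    exact Submodule.add_mem _ (h1' D f hf hS1 a' ha') (h2' D f hf hS2 b' hb')
  | smul c a _ iha =>
    obtain ⟨S1, h1, h1'⟩ := iha
    refine ⟨(S1 ∪ {c}) ∪ Set.range a,
      (h1.union (Set.finite_singleton c)).union (Set.finite_range a), fun D _ f hf hS v' hv' => ?_⟩
    rw [Set.union_subset_iff, Set.union_subset_iff] at hS
    obtain ⟨⟨hS1, hc⟩, ha⟩ := hS
    obtain ⟨a', ha'⟩ := lift D f a ha
    obtain ⟨c', hc'⟩ := hc rfl
    have : v' = c' • a' := by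
      ext i
      apply hf
      rw [Pi.smul_apply, smul_eq_mul, map_mul, congrFun hv' i, Pi.smul_apply, ← ha', hc', smul_eq_mul]
    rw [this]
    exact Submodule.smul_mem _ _ (h1' D f hf hS1 a' ha')

theorem QC.descend_aux {C : Type u} [CommRing C] {d : ℕ} (x : Fin d → C) (t : Fin d → ℕ) {r : ℕ}
    {P : Submodule C (Fin r → C)} {h : ℕ}
    (H : QC (Ideal.span (Set.range x)) (powerIdeal x t • (⊤ : Submodule C (Fin r → C))) P h) :
    ∃ (S : Set C) (W : Set (Fin r → C)), S.Finite ∧ P = Submodule.span C W ∧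
      ∀ (D : Type u) [CommRing D] (f : D →+* C), Function.Injective f → S ⊆ Set.range f →
        ∀ x' : Fin d → D, (∀ i, f (x' i) = x i) →
        QC (Ideal.span (Set.range x')) (powerIdeal x' t • (⊤ : Submodule D (Fin r → D)))
          (Submodule.span D {v | (fun i => f (v i)) ∈ W}) h := by
  induction H with
  | refl =>
    refine ⟨∅, PG x t r, Set.finite_empty, span_PG x t r, fun D _ f hf _ x' hx' => ?_⟩
    rw [PG_preimage f hf x x' hx', ← span_PG]
    exact QC.refl
  | step P h m _ hm ih =>
    obtain ⟨S, W, hS, hW, ih⟩ := ih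
    choose T hT hT' using fun i => mem_descend W (x i • m) (by rw [← hW]; exact hm _ (Ideal.subset_span ⟨i, rfl⟩))
    refine ⟨(S ∪ Set.range m) ∪ ⋃ i, T i, insert m W,
      (hS.union (Set.finite_range m)).union (Set.finite_iUnion hT), ?_, ?_⟩
    · rw [hW, Submodule.span_insert, sup_comm]
    · intro D _ f hf hSS x' hx'
      rw [Set.union_subset_iff, Set.union_subset_iff, Set.iUnion_subset_iff] at hSS
      obtain ⟨⟨h1, h2⟩, h3⟩ := hSS
      choose m' hm' using fun i => h2 ⟨i, rfl⟩
      have e1 : {v : Fin r → D | (fun i => f (v i)) ∈ insert m W} = insert m' {v | (fun i => f (v i)) ∈ W} := by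
        ext v
        simp only [Set.mem_ofPred_eq, Set.mem_insert_iff]
        have : (fun i => f (v i)) = m ↔ v = m' := by
          constructor
          · intro h
            ext i
            apply hf
            rw [hm']; exact congrFun h i
          · rintro rfl
            exact funext hm'
        rw [this]
      rw [e1, Submodule.span_insert, sup_comm]
      refine QC.step _ _ _ (ih D f hf h1 x' hx') ?_
      intro a ha
      have : Ideal.span (Set.range x') ≤
          (Submodule.span D {v | (fun i => f (v i)) ∈ W}).comap (LinearMap.toSpanSingleton D _ m') := by
        rw [Ideal.span, Submodule.span_le]
        rintro _ ⟨i, rfl⟩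
        refine hT' i D f hf (h3 i) _ ?_
        ext k
        simp [hx', hm']
      exact this ha

theorem QC.descend {C : Type u} [CommRing C] {d : ℕ} (x : Fin d → C) (t : Fin d → ℕ) {r : ℕ} {h : ℕ}
    (H : QC (Ideal.span (Set.range x)) (powerIdeal x t • (⊤ : Submodule C (Fin r → C))) ⊤ h) :
    ∃ S : Set C, S.Finite ∧
      ∀ (D : Type u) [CommRing D] (f : D →+* C), Function.Injective f → S ⊆ Set.range f →
        ∀ x' : Fin d → D, (∀ i, f (x' i) = x i) →
        QC (Ideal.span (Set.range x')) (powerIdeal x' t • (⊤ : Submodule D (Fin r → D))) ⊤ h := by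
  obtain ⟨S, W, hS, hW, hD⟩ := H.descend_aux x t
  choose T hT hT' using fun j : Fin r => mem_descend W (Pi.single j 1) (by rw [← hW]; trivial)
  refine ⟨S ∪ ⋃ j, T j, hS.union (Set.finite_iUnion hT), fun D _ f hf hSS x' hx' => ?_⟩
  rw [Set.union_subset_iff, Set.iUnion_subset_iff] at hSS
  have := hD D f hf hSS.1 x' hx'
  have e : (⊤ : Submodule D (Fin r → D)) = Submodule.span D {v | (fun i => f (v i)) ∈ W} := by
    symm
    rw [eq_top_iff]
    intro v _
    have hv : v = ∑ j, v j • Pi.single j 1 := by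
      conv_lhs => rw [← Finset.univ_sum_single v]
      refine Finset.sum_congr rfl fun j _ => ?_
      rw [← Pi.single_smul]; simp
    rw [hv]
    refine Submodule.sum_mem _ fun j _ => Submodule.smul_mem _ _ (hT' j D f hf (hSS.2 j) _ ?_)
    ext k
    by_cases hk : k = j
    · subst hk; simp
    · simp [hk]
  rw [← e] at this
  exact this

theorem lift_of_injective {E D Ω : Type*} [CommRing E] [IsDomain E] [CommRing D] [IsDomain D]
    [Field Ω] [IsAlgClosed Ω] (g : E →+* D) (hg : Function.Injective g) (hintg : ∀ z, g.IsIntegralElem z)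
    (φ : E →+* Ω) (hφ : Function.Injective φ) : ∃ L : D →+* Ω, ∀ a, L (g a) = φ a := by
  let _ : Algebra E D := g.toAlgebra
  let _ : Algebra E Ω := φ.toAlgebra
  have h1 : Module.IsTorsionFree E D := Module.isTorsionFree_iff_algebraMap_injective.mpr hg
  have h2 : Module.IsTorsionFree E Ω := Module.isTorsionFree_iff_algebraMap_injective.mpr hφ
  have h3 : Algebra.IsIntegral E D := ⟨hintg⟩
  let L : D →ₐ[E] Ω := IsAlgClosed.lift
  exact ⟨L.toRingHom, fun a => L.commutes a⟩

theorem extend_hom {E D Ω : Type*} [CommRing E] [CommRing D] [Algebra E D] [Algebra.IsIntegral E D]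
    (hinj : Function.Injective (algebraMap E D)) [Field Ω] [IsAlgClosed Ω] (φ : E →+* Ω) :
    ∃ Φ : D →+* Ω, ∀ a, Φ (algebraMap E D a) = φ a := by
  have hq : (RingHom.ker φ).IsPrime := RingHom.ker_isPrime φ
  obtain ⟨Q, -, hQp, hQ⟩ := Ideal.exists_ideal_over_prime_of_isIntegral (S := D) (RingHom.ker φ) ⊥ (by
    rw [← RingHom.ker_eq_comap_bot, (RingHom.injective_iff_ker_eq_bot _).mp hinj]; exact bot_le)
  let g1 : E ⧸ RingHom.ker φ →+* D ⧸ Q := Ideal.quotientMap Q (algebraMap E D) hQ.ge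
  have hg1 : Function.Injective g1 := Ideal.quotientMap_injective' hQ.le
  have hintg : ∀ z, g1.IsIntegralElem z := by
    intro z
    obtain ⟨a, rfl⟩ := Ideal.Quotient.mk_surjective z
    obtain ⟨p, hp, hp0⟩ := Algebra.IsIntegral.isIntegral (R := E) a
    refine ⟨p.map (Ideal.Quotient.mk _), hp.map _, ?_⟩
    rw [Polynomial.eval₂_map]
    have := congrArg (Ideal.Quotient.mk Q) hp0
    rw [Polynomial.hom_eval₂, map_zero] at this
    exact this
  obtain ⟨L, hL⟩ := lift_of_injective g1 hg1 hintg (RingHom.kerLift φ) (RingHom.kerLift_injective φ)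
  refine ⟨L.comp (Ideal.Quotient.mk Q), fun a => ?_⟩
  exact hL (Ideal.Quotient.mk _ a)

theorem krullDim_mvPowerSeries_ge (K : Type*) [Field K] (d : ℕ) :
    (d : WithBot ℕ∞) ≤ ringKrullDim (MvPowerSeries (Fin d) K) := by
  induction d with
  | zero =>
    have := ringKrullDim_nonneg_of_nontrivial (R := MvPowerSeries (Fin 0) K)
    simpa using this
  | succ n ih =>
    rw [ringKrullDim_eq_of_ringEquiv (MvPowerSeries.finSuccEquiv K n).toRingEquiv]
    refine le_trans ?_ (ringKrullDim_succ_le_ringKrullDim_powerseries)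
    push_cast
    gcongr

set_option maxHeartbeats 1000000 in
theorem key_of_mvPowerSeries {K : Type u} [Field K] [CharZero K] {d : ℕ} {C : Type u} [CommRing C]
    (α : MvPowerSeries (Fin d) K →+* C) (hinj : Function.Injective α) (hintg : ∀ c, α.IsIntegralElem c)
    (r : ℕ) (t : Fin d → ℕ) (h : ℕ) (ht : ∀ i, 0 < t i)
    (H : QC (Ideal.span (Set.range fun i => α (MvPowerSeries.X i)))
      (powerIdeal (fun i => α (MvPowerSeries.X i)) t • (⊤ : Submodule C (Fin r → C))) ⊤ h) :
    r * ∏ i, t i ≤ h := by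
  classical
  obtain ⟨S, hS, hD⟩ := H.descend
  have : Finite S := hS
  choose pol hpol hpol0 using fun s : S => hintg s
  obtain ⟨E, _, f, s, hf, hs, hXE, pol', hpol'⟩ := exists_descent_ring pol
    (Set.range (MvPowerSeries.X : Fin d → MvPowerSeries (Fin d) K)) (Set.finite_range _)
  choose x hx using fun i : Fin d => hXE ⟨i, rfl⟩
  obtain ⟨F, _, p, hp, hpF, φ, hφ⟩ := starProp_all d K E f hf s hs x hx
  let _ : Algebra E C := (α.comp f).toAlgebra
  have hEC : Function.Injective (algebraMap E C) := hinj.comp hf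
  let D := Algebra.adjoin E S
  have hDint : Algebra.IsIntegral E D := by
    apply Algebra.IsIntegral.adjoin
    intro a ha
    refine ⟨pol' ⟨a, ha⟩, ?_, ?_⟩
    · apply Polynomial.monic_of_injective hf
      rw [hpol']; exact hpol _
    · have := hpol0 ⟨a, ha⟩
      rw [← hpol', Polynomial.eval₂_map] at this
      exact this
  let A' := MvPowerSeries (Fin d) F
  let Ω := AlgebraicClosure (FractionRing A')
  have hA'Ω : Function.Injective (algebraMap A' Ω) := by
    rw [IsScalarTower.algebraMap_eq A' (FractionRing A') Ω]
    exact (algebraMap (FractionRing A') Ω).injective.comp (IsFractionRing.injective A' (FractionRing A'))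
  have hED : Function.Injective (algebraMap E D) := by
    intro a b hab
    exact hEC (congrArg (algebraMap D C) hab)
  obtain ⟨Φ, hΦ⟩ := extend_hom (D := D) hED ((algebraMap A' Ω).comp φ)
  let gens : Set Ω := Set.range fun a : S => Φ ⟨a, Algebra.subset_adjoin a.2⟩
  let B := Algebra.adjoin A' gens
  have hrange : ∀ z : D, Φ z ∈ B := by
    rintro ⟨z, hz⟩
    induction hz using Algebra.adjoin_induction with
    | mem a ha => exact Algebra.subset_adjoin ⟨⟨a, ha⟩, rfl⟩
    | algebraMap a =>
      have : Φ (algebraMap E D a) ∈ B := by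
        rw [hΦ]; exact B.algebraMap_mem _
      exact this
    | add a b ha hb iha ihb =>
      have := B.add_mem iha ihb
      rw [← map_add] at this
      exact this
    | mul a b ha hb iha ihb =>
      have := B.mul_mem iha ihb
      rw [← map_mul] at this
      exact this
  have hgint : ∀ g ∈ gens, IsIntegral A' g := by
    rintro _ ⟨a, rfl⟩
    obtain ⟨q, hq, hq0⟩ := hDint.isIntegral (⟨a, Algebra.subset_adjoin a.2⟩ : D)
    refine ⟨q.map φ, hq.map _, ?_⟩
    have := congrArg Φ hq0
    rw [Polynomial.hom_eval₂, map_zero] at this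
    rw [Polynomial.eval₂_map]
    have e : Φ.comp (algebraMap E D) = (algebraMap A' Ω).comp φ := RingHom.ext hΦ
    rw [e] at this
    exact this
  have hBfin : Module.Finite A' B := by
    have := fg_adjoin_of_finite (Set.finite_range _) hgint
    exact Module.Finite.iff_fg.mpr this
  let Φ' : D →+* B := Φ.codRestrict B.toSubring hrange
  have hxD : ∀ i, algebraMap D C (algebraMap E D (x i)) = α (MvPowerSeries.X i) := by
    intro i
    rw [← hx]; rfl
  have H2 := hD D (algebraMap D C) Subtype.val_injective (fun a ha => ⟨⟨a, Algebra.subset_adjoin ha⟩, rfl⟩)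
    (fun i => algebraMap E D (x i)) hxD
  have H3 := H2.baseChange Φ'
  rw [QC.bc_top, QC.bc_smul_top, QC.map_powerIdeal, Ideal.map_span, ← Set.range_comp] at H3
  have e2 : ∀ i, Φ' (algebraMap E D (x i)) = algebraMap A' B (φ (x i)) := by
    intro i
    apply Subtype.ext
    exact hΦ (x i)
  have hAB : Function.Injective (algebraMap A' B) := by
    intro a b hab
    exact hA'Ω (congrArg Subtype.val hab)
  have : CharP A' p := charP_of_injective_ringHom (f := (MvPowerSeries.C : F →+* A')) (RingHom.injective _) p
  have : CharP B p := charP_of_injective_ringHom hAB p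
  have hmax : Ideal.span (Set.range fun i => φ (x i)) = IsLocalRing.maximalIdeal A' := by
    rw [hφ, maximalIdeal_mvPowerSeries]
  refine key_of_finite (A := A') (krullDim_mvPowerSeries_ge F d) (fun i => φ (x i)) hmax.le
    (hmax.ge.trans Ideal.le_radical) (B := B) hAB p r t h ht ?_
  have e3 : (fun i => Φ' (algebraMap E D (x i))) = fun i => algebraMap A' B (φ (x i)) := funext e2
  rw [← e3]
  exact H3

theorem isPrecomplete_pi {A : Type*} [CommRing A] (I : Ideal A) [IsPrecomplete I A] (n : ℕ) :
    IsPrecomplete I (Fin n → A) := by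
  have hmem : ∀ (J : Ideal A) (v : Fin n → A), v ∈ J • (⊤ : Submodule A (Fin n → A)) ↔ ∀ i, v i ∈ J := by
    intro J v
    constructor
    · intro hv i
      have := Submodule.mem_map_of_mem (f := (LinearMap.proj i : (Fin n → A) →ₗ[A] A)) hv
      rw [Submodule.map_smul''] at this
      have h2 := Submodule.smul_mono (le_refl J) (le_top : Submodule.map (LinearMap.proj i : (Fin n → A) →ₗ[A] A) ⊤ ≤ ⊤) this
      simpa using h2
    · intro hv
      rw [pi_eq_sum_univ v]
      exact Submodule.sum_mem _ fun i _ => Submodule.smul_mem_smul (hv i) trivial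
  refine ⟨fun f hf => ?_⟩
  have h1 : ∀ i : Fin n, ∃ L : A, ∀ k, f k i ≡ L [SMOD (I ^ k • ⊤ : Submodule A A)] := by
    intro i
    refine IsPrecomplete.prec' (fun k => f k i) fun {a b} hab => ?_
    have := (hmem _ _).mp (SModEq.sub_mem.mp (hf hab)) i
    rw [SModEq.sub_mem]
    simpa using this
  choose L hL using h1
  refine ⟨L, fun k => ?_⟩
  rw [SModEq.sub_mem, hmem]
  intro i
  have := SModEq.sub_mem.mp (hL i k)
  simpa using this

/-- Finiteness over a complete local ring. -/
theorem finite_of_complete {A C : Type*} [CommRing A] [CommRing C] [IsLocalRing C] [Algebra A C]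
    (I : Ideal A) [IsAdicComplete I A]
    [IsAdicComplete (IsLocalRing.maximalIdeal C) C] (hfg : (IsLocalRing.maximalIdeal C).FG)
    (hres : ∀ c : C, ∃ a : A, c - algebraMap A C a ∈ IsLocalRing.maximalIdeal C)
    (hI : I.map (algebraMap A C) ≤ IsLocalRing.maximalIdeal C)
    (hm : IsLocalRing.maximalIdeal C ≤ (I.map (algebraMap A C)).radical) : Module.Finite A C := by
  obtain ⟨N, hN⟩ := Ideal.exists_pow_le_of_le_radical_of_fg hm hfg
  set m := IsLocalRing.maximalIdeal C
  have hbase : ∀ J : Ideal C, J.FG → ∃ T : Finset C,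
      (J.restrictScalars A) ≤ Submodule.span A (T : Set C) ⊔ (m * J).restrictScalars A := by
    rintro J ⟨T, rfl⟩
    refine ⟨T, fun c hc => ?_⟩
    rw [Submodule.restrictScalars_mem] at hc
    induction hc using Submodule.span_induction with
    | mem y hy => exact Submodule.mem_sup_left (Submodule.subset_span hy)
    | zero => exact Submodule.zero_mem _
    | add y z _ _ hy hz => exact Submodule.add_mem _ hy hz
    | smul c y hy ih =>
      obtain ⟨a, ha⟩ := hres c
      have : c • y = a • y + (c - algebraMap A C a) * y := by
        rw [smul_eq_mul, Algebra.smul_def]; ring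
      rw [this]
      refine Submodule.add_mem _ (Submodule.smul_mem _ _ ih) (Submodule.mem_sup_right ?_)
      exact Ideal.mul_mem_mul ha hy
  have hstep : ∀ k : ℕ, ∀ J : Ideal C, J.FG → ∃ T : Finset C,
      (J.restrictScalars A) ≤ Submodule.span A (T : Set C) ⊔ (m ^ k * J).restrictScalars A := by
    classical
    intro k
    induction k with
    | zero =>
      intro J _
      refine ⟨∅, ?_⟩
      simp
    | succ k ih =>
      intro J hJ
      obtain ⟨T, hT⟩ := hbase J hJ
      obtain ⟨T', hT'⟩ := ih (m * J) (hfg.mul hJ)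
      refine ⟨T ∪ T', hT.trans (sup_le ?_ (hT'.trans (sup_le ?_ ?_)))⟩
      · exact le_sup_of_le_left (Submodule.span_mono (by simp))
      · exact le_sup_of_le_left (Submodule.span_mono (by simp))
      · rw [pow_succ, mul_assoc]; exact le_sup_right
  obtain ⟨T, hT⟩ := hstep N ⊤ ⟨{1}, by simp⟩
  have hfgT : (Submodule.span A (T : Set C)).FG := ⟨T, rfl⟩
  obtain ⟨n, v, hv⟩ := Submodule.fg_iff_exists_fin_generating_family.mp hfgT
  have hHaus : IsHausdorff I C := by
    refine ⟨fun c hc => ?_⟩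
    refine IsHausdorff.haus (I := m) inferInstance c fun k => ?_
    have := hc k
    rw [SModEq.zero] at this ⊢
    rw [Ideal.smul_top_eq_map, Submodule.restrictScalars_mem, Ideal.map_pow] at this
    simpa using Ideal.pow_right_mono hI k this
  have := isPrecomplete_pi I n
  have hsurj : Function.Surjective (Fintype.linearCombination A v) := by
    refine surjective_of_mkQ_comp_surjective (I := I) fun y => ?_
    obtain ⟨c, rfl⟩ := Submodule.mkQ_surjective _ y
    have hc : c ∈ (⊤ : Ideal C).restrictScalars A := trivial
    obtain ⟨y, hy, z, hz, rfl⟩ := Submodule.mem_sup.mp (hT hc)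
    rw [← hv, ← Fintype.range_linearCombination] at hy
    obtain ⟨w, rfl⟩ := hy
    refine ⟨w, ?_⟩
    rw [LinearMap.comp_apply, Submodule.mkQ_apply, Submodule.mkQ_apply, eq_comm, Submodule.Quotient.eq]
    rw [Ideal.smul_top_eq_map]
    have hz' : z ∈ m ^ N := by simpa using hz
    simpa using hN hz'
  exact Module.Finite.of_surjective _ hsurj

/-- Coefficient fields in equal characteristic zero. -/
theorem exists_coeff_field {C : Type*} [CommRing C] [IsLocalRing C] [Algebra ℚ C]
    [IsAdicComplete (IsLocalRing.maximalIdeal C) C] :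
    ∃ c : IsLocalRing.ResidueField C →+* C, ∀ k, IsLocalRing.residue C (c k) = k := by
  let K := IsLocalRing.ResidueField C
  obtain ⟨s, hs⟩ := exists_isTranscendenceBasis ℚ K
  have : Algebra.IsAlgebraic (IntermediateField.adjoin ℚ (Set.range ((↑) : s → K))) K := by
    exact hs.isAlgebraic_field
  have : Algebra.FormallySmooth ℚ K := .of_algebraicIndependent_of_isSeparable hs.1
  let f : K →ₐ[ℚ] C ⧸ IsLocalRing.maximalIdeal C := AlgHom.id ℚ K
  obtain ⟨g, hg⟩ := Algebra.FormallySmooth.exists_mkₐ_comp_eq_of_isAdicComplete f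
  exact ⟨g.toRingHom, fun k => DFunLike.congr_fun hg k⟩

theorem length_ge_of_surj {R C : Type u} [CommRing R] [CommRing C] [Algebra R C] (J : Ideal R) (I : Ideal C)
    (e : C →ₐ[R] R ⧸ J) (hI : I ≤ RingHom.ker e) :
    Module.length R (R ⧸ J) ≤ Module.length C (C ⧸ I) := by
  let _ : Algebra C (R ⧸ J) := e.toRingHom.toAlgebra
  have : IsScalarTower R C (R ⧸ J) := IsScalarTower.of_algebraMap_eq fun r => (e.commutes r).symm
  have he : Function.Surjective e := fun y => by
    obtain ⟨r, rfl⟩ := Ideal.Quotient.mk_surjective y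
    exact ⟨algebraMap R C r, e.commutes r⟩
  have h1 : Module.length R (R ⧸ J) = Module.length (R ⧸ J) (R ⧸ J) :=
    Module.length_eq_of_surjective Ideal.Quotient.mk_surjective
  have h2 : Module.length C (R ⧸ J) = Module.length (R ⧸ J) (R ⧸ J) :=
    Module.length_eq_of_surjective he
  rw [h1, ← h2]
  let g : (C ⧸ I) →ₗ[C] R ⧸ J := Submodule.liftQ I (Algebra.linearMap C (R ⧸ J)) hI
  refine Module.length_le_of_surjective g fun y => ?_
  obtain ⟨c, rfl⟩ := he y
  exact ⟨Submodule.Quotient.mk c, rfl⟩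

theorem QC.baseChange_ideal {A S : Type*} [CommRing A] [CommRing S] (φ : A →+* S) {J N P : Ideal A}
    {h : ℕ} (H : QC J N P h) : QC (J.map φ) (N.map φ) (P.map φ) h := by
  induction H with
  | refl => exact QC.refl
  | step P h m _ hm ih =>
    have e1 : Ideal.map φ (P ⊔ Submodule.span A {m}) = Ideal.map φ P ⊔ Submodule.span S {φ m} := by
      rw [Ideal.map_sup]
      congr 1
      exact (Ideal.map_span φ {m}).trans (by rw [Set.image_singleton])
    rw [e1]
    refine QC.step _ _ _ ih fun a ha => ?_
    have : J.map φ ≤ Submodule.colon (Ideal.map φ P) {φ m} := by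
      rw [Ideal.map_le_iff_le_comap]
      intro b hb
      rw [Ideal.mem_comap, Submodule.mem_colon_singleton, smul_eq_mul, ← map_mul]
      exact Ideal.mem_map_of_mem φ (hm b hb)
    exact Submodule.mem_colon_singleton.mp (this ha)

theorem key_char_zero_aux {R C : Type u} [CommRing R] [IsDomain R] [IsNoetherianRing R] [IsLocalRing R]
    {d : ℕ} (hd : (d : WithBot ℕ∞) ≤ ringKrullDim R) (x : Fin d → R)
    (hxm : Ideal.span (Set.range x) ≤ IsLocalRing.maximalIdeal R)
    (hx : IsLocalRing.maximalIdeal R ≤ (Ideal.span (Set.range x)).radical)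
    [CommRing C] [IsLocalRing C] [Algebra ℚ C] [Algebra R C]
    [IsAdicComplete (IsLocalRing.maximalIdeal C) C]
    (hmax : IsLocalRing.maximalIdeal C = (IsLocalRing.maximalIdeal R).map (algebraMap R C))
    (e : ∀ n, C →ₐ[R] R ⧸ IsLocalRing.maximalIdeal R ^ n)
    (r : ℕ) (t : Fin d → ℕ) (h : ℕ) (ht : ∀ i, 0 < t i)
    (H : QC (Ideal.span (Set.range x)) (powerIdeal x t • (⊤ : Submodule R (Fin r → R))) ⊤ h) :
    r * ∏ i, t i ≤ h := by
  obtain ⟨cf, hcf⟩ := exists_coeff_field (C := C)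
  have hxC : ∀ i, algebraMap R C (x i) ∈ IsLocalRing.maximalIdeal C := fun i => by
    rw [hmax]; exact Ideal.mem_map_of_mem _ (hxm (Ideal.subset_span ⟨i, rfl⟩))
  obtain ⟨α, hα, hαX⟩ := MvPowerSeries.exists_hom_adic (IsLocalRing.maximalIdeal C) cf
    (fun i => algebraMap R C (x i)) hxC
  have hspan : Ideal.map α (Ideal.span (Set.range MvPowerSeries.X)) =
      Ideal.map (algebraMap R C) (Ideal.span (Set.range x)) := by
    rw [Ideal.map_span, Ideal.map_span, ← Set.range_comp, ← Set.range_comp]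
    congr 2
    ext i
    exact hαX i
  have hspan2 : Ideal.map (algebraMap R C) (Ideal.span (Set.range x)) =
      Ideal.span (Set.range fun i => algebraMap R C (x i)) := by
    rw [Ideal.map_span, ← Set.range_comp]; rfl
  have hCm : Ideal.span (Set.range fun i => algebraMap R C (x i)) ≤ IsLocalRing.maximalIdeal C := by
    rw [Ideal.span_le]; rintro _ ⟨i, rfl⟩; exact hxC i
  have hCr : IsLocalRing.maximalIdeal C ≤
      (Ideal.span (Set.range fun i => algebraMap R C (x i))).radical := by
    rw [hmax, ← hspan2]
    exact (Ideal.map_mono hx).trans (Ideal.map_radical_le _)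
  let _ : Algebra (MvPowerSeries (Fin d) (IsLocalRing.ResidueField C)) C := α.toAlgebra
  have hfg : (IsLocalRing.maximalIdeal C).FG := by
    rw [hmax]; exact Ideal.FG.map (IsNoetherian.noetherian (IsLocalRing.maximalIdeal R)) _
  have hfin : Module.Finite (MvPowerSeries (Fin d) (IsLocalRing.ResidueField C)) C := by
    refine finite_of_complete (Ideal.span (Set.range MvPowerSeries.X)) hfg ?_ ?_ ?_
    · intro c
      refine ⟨MvPowerSeries.C (IsLocalRing.residue C c), ?_⟩
      change c - α _ ∈ _
      rw [hα, ← IsLocalRing.residue_eq_zero_iff, map_sub, hcf, sub_self]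
    · change Ideal.map α _ ≤ _
      rw [hspan, hspan2]; exact hCm
    · change _ ≤ (Ideal.map α _).radical
      rw [hspan, hspan2]; exact hCr
  have hNoeth : IsNoetherianRing (MvPowerSeries (Fin d) (IsLocalRing.ResidueField C)) :=
    MvPowerSeries.isNoetherianRing _
  have hNC : IsNoetherianRing C := IsNoetherianRing.of_finite (MvPowerSeries (Fin d) (IsLocalRing.ResidueField C)) C
  have hintg : ∀ c, α.IsIntegralElem c := fun c =>
    Algebra.IsIntegral.isIntegral (R := MvPowerSeries (Fin d) (IsLocalRing.ResidueField C)) c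
  have hinj : Function.Injective α := by
    rw [injective_iff_map_eq_zero]
    intro f hf
    by_contra hf0
    have hdimA : ringKrullDim (MvPowerSeries (Fin d) (IsLocalRing.ResidueField C)) ≤ d := by
      refine (ringKrullDim_le_spanFinrank_maximalIdeal _).trans ?_
      rw [maximalIdeal_mvPowerSeries (Fin d)]
      have h1 := Submodule.spanFinrank_span_le_ncard_of_finite
        (R := MvPowerSeries (Fin d) (IsLocalRing.ResidueField C))
        (Set.finite_range (MvPowerSeries.X : Fin d → MvPowerSeries (Fin d) (IsLocalRing.ResidueField C)))
      have h2 : (Set.range (MvPowerSeries.X : Fin d → MvPowerSeries (Fin d) (IsLocalRing.ResidueField C))).ncard ≤ d := by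
        rw [← Set.image_univ]
        refine (Set.ncard_image_le (Set.finite_univ)).trans ?_
        simp [Set.ncard_univ]
      exact_mod_cast h1.trans h2
    obtain ⟨C0, hC0⟩ := torsion_lemma hdimA MvPowerSeries.X (maximalIdeal_mvPowerSeries (Fin d)).ge
      ((maximalIdeal_mvPowerSeries (Fin d)).le.trans Ideal.le_radical) hf0
    obtain ⟨D, hD⟩ := growth_lb d R hd
    have hL := length_quot_span_ne_top (fun i => algebraMap R C (x i)) hCr
    obtain ⟨L, hL⟩ := ENat.ne_top_iff_exists.mp hL
    obtain ⟨n, hn1, hn2⟩ := (hD.and (Filter.eventually_ge_atTop (D * L * C0 + 1))).exists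
    have hn0 : 0 < n := by omega
    obtain ⟨l, hl, hq⟩ := hC0 n hn0
    have hq2 := hq.baseChange_ideal α
    have e1 : Ideal.map α (Ideal.span {f} ⊔ powerIdeal MvPowerSeries.X fun _ => n) =
        powerIdeal (fun i => algebraMap R C (x i)) (fun _ => n) := by
      rw [Ideal.map_sup, Ideal.map_span, Set.image_singleton, hf, Ideal.span_singleton_zero,
        bot_sup_eq, QC.map_powerIdeal]
      simp only [hαX]
    rw [e1, hspan, hspan2, Ideal.map_top] at hq2
    have h3 := hq2.length_top_le (A := C)
    rw [← hL] at h3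
    have h4 : Module.length R (R ⧸ IsLocalRing.maximalIdeal R ^ n) ≤
        Module.length C (C ⧸ powerIdeal (fun i => algebraMap R C (x i)) (fun _ => n)) := by
      refine length_ge_of_surj _ _ (e n) ((powerIdeal_le_pow _ hCm n).trans ?_)
      rw [hmax, ← Ideal.map_pow, Ideal.map_le_iff_le_comap]
      intro a ha
      change e n (algebraMap R C a) = 0
      rw [(e n).commutes]
      exact Ideal.Quotient.eq_zero_iff_mem.mpr ha
    have h5 : ((n ^ d : ℕ) : ℕ∞) ≤ ((D * (l * L) : ℕ) : ℕ∞) := by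
      refine hn1.trans ?_
      push_cast
      exact mul_le_mul' le_rfl (h4.trans h3)
    have h6 : n ^ d ≤ D * (l * L) := by exact_mod_cast h5
    have h7 : n ^ d * n ≤ n ^ d * (D * L * C0) := by
      calc n ^ d * n ≤ D * (l * L) * n := Nat.mul_le_mul_right _ h6
        _ = D * L * (l * n) := by ring
        _ ≤ D * L * (C0 * n ^ d) := Nat.mul_le_mul_left _ hl
        _ = n ^ d * (D * L * C0) := by ring
    have h8 := Nat.le_of_mul_le_mul_left h7 (by positivity)
    omega
  have hQK : CharZero (IsLocalRing.ResidueField C) := algebraRat.charZero _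
  refine key_of_mvPowerSeries α hinj hintg r t h ht ?_
  have H2 := H.baseChange (algebraMap R C)
  rw [QC.bc_top, QC.bc_smul_top, QC.map_powerIdeal, hspan2] at H2
  simpa only [hαX] using H2

theorem key_char_zero {R : Type u} [CommRing R] [IsDomain R] [IsNoetherianRing R] [IsLocalRing R]
    (q : ℚ →+* R)
    {d : ℕ} (hd : (d : WithBot ℕ∞) ≤ ringKrullDim R) (x : Fin d → R)
    (hxm : Ideal.span (Set.range x) ≤ IsLocalRing.maximalIdeal R)
    (hx : IsLocalRing.maximalIdeal R ≤ (Ideal.span (Set.range x)).radical)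
    (r : ℕ) (t : Fin d → ℕ) (h : ℕ) (ht : ∀ i, 0 < t i)
    (H : QC (Ideal.span (Set.range x)) (powerIdeal x t • (⊤ : Submodule R (Fin r → R))) ⊤ h) :
    r * ∏ i, t i ≤ h := by
  let _ : Algebra ℚ (AdicCompletion (IsLocalRing.maximalIdeal R) R) :=
    ((algebraMap R (AdicCompletion (IsLocalRing.maximalIdeal R) R)).comp q).toAlgebra
  exact key_char_zero_aux (C := AdicCompletion (IsLocalRing.maximalIdeal R) R) hd x hxm hx
    AdicCompletion.maximalIdeal_eq_map (fun n => AdicCompletion.evalₐ _ n) r t h ht H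

theorem key_all {R : Type u} [CommRing R] [IsDomain R] [IsNoetherianRing R] [IsLocalRing R]
    (hfield : ∃ K : Subring R, IsField K)
    {d : ℕ} (hd : (d : WithBot ℕ∞) ≤ ringKrullDim R) (x : Fin d → R)
    (hxm : Ideal.span (Set.range x) ≤ IsLocalRing.maximalIdeal R)
    (hx : IsLocalRing.maximalIdeal R ≤ (Ideal.span (Set.range x)).radical)
    (r : ℕ) (t : Fin d → ℕ) (h : ℕ) (ht : ∀ i, 0 < t i)
    (H : QC (Ideal.span (Set.range x)) (powerIdeal x t • (⊤ : Submodule R (Fin r → R))) ⊤ h) :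
    r * ∏ i, t i ≤ h := by
  obtain ⟨K, hK⟩ := hfield
  let _ : Field K := hK.toField
  obtain ⟨p, hp⟩ := CharP.exists R
  rcases CharP.char_is_prime_or_zero R p with hpp | rfl
  · have : Fact p.Prime := ⟨hpp⟩
    exact key_of_finite (A := R) (B := R) hd x hxm hx Function.injective_id p r t h ht H
  · have h0 : CharZero R := CharP.charP_to_charZero R
    have h1 : CharZero K := by
      refine ⟨fun a b hab => ?_⟩
      have := congrArg (K.subtype) hab
      simpa using this
    exact key_char_zero (K.subtype.comp (algebraMap ℚ K)) hd x hxm hx r t h ht H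

open scoped TensorProduct

/-- Over a `d`-dimensional Noetherian local domain containing a
field, with `x₁, …, x_d` a system of parameters, the content of every finitely
generated module equals its torsion-free rank; in particular content is additive
on short exact sequences. -/
theorem content_eq_rank_of_domain
    {R : Type u} [CommRing R] [IsDomain R] [IsNoetherianRing R] [IsLocalRing R]
    (hfield : ∃ K : Subring R, IsField K)
    {d : ℕ} (hd : ringKrullDim R = d)
    (x : Fin d → R) (hx : ∀ i, x i ∈ IsLocalRing.maximalIdeal R)
    (hxparam : (Ideal.span (Set.range x)).radical = IsLocalRing.maximalIdeal R) :
    (∀ (M : Type u) [AddCommGroup M] [Module R M] [Module.Finite R M],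
        content x M = Module.finrank (FractionRing R) (FractionRing R ⊗[R] M)) ∧
    (∀ (L M N : Type u) [AddCommGroup L] [Module R L] [AddCommGroup M] [Module R M]
        [AddCommGroup N] [Module R N]
        [Module.Finite R L] [Module.Finite R M] [Module.Finite R N]
        (f : L →ₗ[R] M) (g : M →ₗ[R] N),
        Function.Injective f → Function.Surjective g → Function.Exact f g →
        content x M = content x L + content x N) := by
  have hxm : Ideal.span (Set.range x) ≤ IsLocalRing.maximalIdeal R := by
    rw [Ideal.span_le]; rintro _ ⟨i, rfl⟩; exact hx i
  exact final_of_key hd x hx hxparam (key_all hfield hd.ge x hxm hxparam.ge)
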